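/- arXiv:1703.08064 — 6 statements merged into one kernel-verified Lean document; each statement's English description precedes it below -/
import Mathlib

section
/- Let X be a Banach space, C ≥ 1 and γ > γ₀ ≥ 1 constants. Let (𝒢ₙ)_{n≥0} be bounded invertible operators on X with 𝒢₀ = I, and let Q⁺, Q⁻ be bounded projections on X with Q⁺Q⁻ = Q⁻Q⁺ = 0, satisfying ‖𝒢ₙ Q⁻ 𝒢ₘ⁻¹‖ ≤ C e^{−γ(n−m)} and ‖𝒢ₘ Q⁺ 𝒢ₙ⁻¹‖ ≤ C e^{−γ(n−m)} for all n ≥ m ≥ 0, and ‖𝒢ₙ (I − Q⁻ − Q⁺) 𝒢ₘ⁻¹‖ ≤ C e^{γ₀|n−m|} for all n, m ≥ 0. Let (ℱₙ)_{n≥0} be bounded invertible operators with ℱ₀ = I and ‖ℱₙ ℱ_{n−1}⁻¹ − 𝒢ₙ 𝒢_{n−1}⁻¹‖ ≤ ε for all n ≥ 1. Then there exist ε₀ > 0 and K ≥ 1 depending only on C, γ, γ₀ such that if ε ≤ ε₀, there exist commuting bounded projections P⁺, P⁻ on X with P⁺P⁻ = P⁻P⁺ = 0 and ‖P^± − Q^±‖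 ≤ K ε, and constants C′ ≥ 1, γ′ ≥ γ − Kε, γ₀′ ≤ γ₀ + Kε such that ‖ℱₙ P⁻ ℱₘ⁻¹‖ ≤ C′ e^{−γ′(n−m)} and ‖ℱₘ P⁺ ℱₙ⁻¹‖ ≤ C′ e^{−γ′(n−m)} for all n ≥ m ≥ 0, and ‖ℱₙ (I − P⁻ − P⁺) ℱₘ⁻¹‖ ≤ C′ e^{γ₀′|n−m|} for all n, m ≥ 0. -/
/-!
Both splittings `Q⁻ | Q⁰ + Q⁺` (rates `-γ < -γ₀`) and `Q⁻ + Q⁰ | Q⁺` (rates `γ₀ < γ`) of a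
trichotomy are exponential dichotomies on the half line, so it suffices to know that a dichotomy
with rates `a < b` and projection `Q` persists, with rates `a + K ε < b - K ε` and a projection `P`
having the same kernel as `Q` (`dichotomy_robust`). This part takes place in the Banach algebra of
bounded operators.

* An orbit `X` of the perturbed flow with `Q * X 0 = Q`, growing no faster than
  `exp ((a + K ε) n)`, is found by solving Perron's integral equation `X = G Q + greenSum X`, where
  `greenSum` applies the Green operator of the unperturbed dichotomy to the defect of the flow.
  In the sup norm weighted by `exp ((a + K ε) n)` the Green operator has norm at most
  `C' ε / (K ε)`, which is less than `1 / 2` once `K` is large; this is what makes the loss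
  in the rates linear in `ε`. The fixed point (`exists_perron_solution`) is
  `X n = F n * X 0`, and `P = X 0 * Q`.
* The perturbed Green kernel with source `m`, namely `F n * P * (F m)⁻¹` for `n ≥ m` and
  `-F n * (1 - P) * (F m)⁻¹` for `n < m`, is an orbit with a unit impulse at time `m`. By
  variation of constants and the same contraction estimate, any such orbit of moderate growth
  whose initial `Q`-component comes from the impulse alone inherits the bound of the unperturbed
  kernel up to a factor `2` (`norm_impulse_orbit_le`). The weights `exp ((a + K ε) n)` and `exp ((b - K ε) n)` give the two dichotomy estimates.

Let `P⁻` and `R = 1 - P⁺` be the projections obtained for the two splittings. Since `P⁻` has the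
kernel of `Q⁻`, and `P⁺` the range of `Q⁺`, one gets `P⁻ P⁺ = 0`. Conversely
`P⁺ P⁻ = ((1 - R) (F n)⁻¹) (F n P⁻)` is bounded by a decaying exponential in `n`, so it vanishes.
Finally `1 - P⁻ - P⁺ = R (1 - P⁻) = (1 - P⁻) R`, and inserting `(F m)⁻¹ F m` between the two
factors bounds the central part. If `ε = 0`, the flows coincide and there is nothing to perturb.
-/

/-! ### The Green operator in weighted sequence spaces -/

section BanachRing

variable {𝔸 : Type*} [NormedRing 𝔸]

/-- `w` is an admissible growth weight for the flow `G` split by `Q`: measured against `w`, the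
flow `G` contracts forward along `Q` and backward along `1 - Q`, with geometric rate `r`. The
one-step shifted bounds `fwd_succ`, `bwd_succ` are those met by the Green kernel in the
variation-of-constants formula. -/
structure IsDichotomyWeight (G : ℕ → 𝔸ˣ) (Q : 𝔸) (C D r : ℝ) (w : ℕ → ℝ) : Prop where
  pos : ∀ n, 0 < w n
  fwd : ∀ n m, m ≤ n → ‖(G n : 𝔸) * Q * ↑(G m)⁻¹‖ * w m ≤ C * w n
  bwd : ∀ n j, ‖(G n : 𝔸) * (1 - Q) * ↑(G (n + j))⁻¹‖ * w (n + j) ≤ C * r ^ j * w n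
  fwd_succ : ∀ n k, k < n → ‖(G n : 𝔸) * Q * ↑(G (k + 1))⁻¹‖ * w k ≤ D * r ^ (n - 1 - k) * w n
  bwd_succ : ∀ n j, ‖(G n : 𝔸) * (1 - Q) * ↑(G (n + j + 1))⁻¹‖ * w (n + j) ≤ D * r ^ j * w n

/-- The one-step defect between the flows `F` and `G`. -/
def defect (G F : ℕ → 𝔸ˣ) (k : ℕ) : 𝔸 :=
  (F (k + 1) : 𝔸) * ↑(F k)⁻¹ - (G (k + 1) : 𝔸) * ↑(G k)⁻¹

/-- The Green operator of the dichotomy `(G, Q)` on the half line, applied to `k ↦ B k * X k`: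
the past is propagated forward along `Q`, the future backward along `1 - Q`. -/
noncomputable def greenSum (G : ℕ → 𝔸ˣ) (Q : 𝔸) (B X : ℕ → 𝔸) (n : ℕ) : 𝔸 :=
  ∑ k ∈ Finset.range n, (G n : 𝔸) * Q * ↑(G (k + 1))⁻¹ * (B k * X k) -
    ∑' j, (G n : 𝔸) * (1 - Q) * ↑(G (n + j + 1))⁻¹ * (B (n + j) * X (n + j))

variable {G F : ℕ → 𝔸ˣ} {Q : 𝔸} {C D r ε L : ℝ} {w : ℕ → ℝ} {B X Y : ℕ → 𝔸}

lemma norm_mul_mul_le_of_weight {T b x : 𝔸} {v c : ℝ} (hb : ‖b‖ ≤ ε)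
    (hL : 0 ≤ L) (hx : ‖x‖ ≤ L * v) (hT : ‖T‖ * v ≤ c) : ‖T * (b * x)‖ ≤ ε * L * c := by
  have hε : 0 ≤ ε := (norm_nonneg _).trans hb
  calc ‖T * (b * x)‖ ≤ ‖T‖ * (‖b‖ * ‖x‖) :=
        (norm_mul_le _ _).trans (by gcongr; exact norm_mul_le _ _)
    _ ≤ ‖T‖ * (ε * (L * v)) := by gcongr
    _ = ε * L * (‖T‖ * v) := by ring
    _ ≤ ε * L * c := by gcongr

lemma norm_fwd_sum_le (hw : IsDichotomyWeight G Q C D r w) (hr0 : 0 < r) (hr1 : r < 1)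
    (hD : 0 ≤ D) (hs : ε * D * (1 - r)⁻¹ ≤ 1 / 4) (hB : ∀ k, ‖B k‖ ≤ ε) (hL : 0 ≤ L)
    (hX : ∀ k, ‖X k‖ ≤ L * w k) (n : ℕ) :
    ‖∑ k ∈ Finset.range n, (G n : 𝔸) * Q * ↑(G (k + 1))⁻¹ * (B k * X k)‖ ≤ L * w n / 4 := by
  have hε : 0 ≤ ε := (norm_nonneg _).trans (hB 0)
  have hwn := hw.pos n
  have hg : ∑ k ∈ Finset.range n, r ^ (n - 1 - k) ≤ (1 - r)⁻¹ := by
    rw [Finset.sum_range_reflect (fun k => r ^ k) n]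
    rw [← tsum_geometric_of_lt_one hr0.le hr1]
    exact (summable_geometric_of_lt_one hr0.le hr1).sum_le_tsum _ fun _ _ => by positivity
  calc _ ≤ ∑ k ∈ Finset.range n, ε * L * (D * r ^ (n - 1 - k) * w n) :=
        norm_sum_le_of_le _ fun k hk => norm_mul_mul_le_of_weight (hB k) hL (hX k)
          (hw.fwd_succ n k (Finset.mem_range.1 hk))
    _ = ε * D * (∑ k ∈ Finset.range n, r ^ (n - 1 - k)) * (L * w n) := by
        rw [Finset.mul_sum, Finset.sum_mul]
        exact Finset.sum_congr rfl fun _ _ => by ring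
    _ ≤ ε * D * (1 - r)⁻¹ * (L * w n) := by gcongr
    _ ≤ 1 / 4 * (L * w n) := by gcongr
    _ = _ := by ring

lemma norm_bwd_term_le (hw : IsDichotomyWeight G Q C D r w) (hB : ∀ k, ‖B k‖ ≤ ε) (hL : 0 ≤ L)
    (hX : ∀ k, ‖X k‖ ≤ L * w k) (n j : ℕ) :
    ‖(G n : 𝔸) * (1 - Q) * ↑(G (n + j + 1))⁻¹ * (B (n + j) * X (n + j))‖ ≤
      ε * D * (L * w n) * r ^ j :=
  (norm_mul_mul_le_of_weight (hB _) hL (hX _) (hw.bwd_succ n j)).trans_eq (by ring)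

lemma summable_bwd [CompleteSpace 𝔸] (hw : IsDichotomyWeight G Q C D r w) (hr0 : 0 < r)
    (hr1 : r < 1) (hB : ∀ k, ‖B k‖ ≤ ε) (hL : 0 ≤ L) (hX : ∀ k, ‖X k‖ ≤ L * w k) (n : ℕ) :
    Summable fun j => (G n : 𝔸) * (1 - Q) * ↑(G (n + j + 1))⁻¹ * (B (n + j) * X (n + j)) :=
  .of_norm_bounded ((summable_geometric_of_lt_one hr0.le hr1).mul_left _)
    fun j => norm_bwd_term_le hw hB hL hX n j

/-- The Green operator has norm at most `1 / 2` with respect to the weight `w`. -/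
lemma norm_greenSum_le (hw : IsDichotomyWeight G Q C D r w) (hr0 : 0 < r) (hr1 : r < 1)
    (hD : 0 ≤ D) (hs : ε * D * (1 - r)⁻¹ ≤ 1 / 4) (hB : ∀ k, ‖B k‖ ≤ ε) (hL : 0 ≤ L)
    (hX : ∀ k, ‖X k‖ ≤ L * w k) (n : ℕ) :
    ‖greenSum G Q B X n‖ ≤ L * w n / 2 := by
  have h1 := norm_fwd_sum_le hw hr0 hr1 hD hs hB hL hX n
  have h2 := tsum_of_norm_bounded
    ((hasSum_geometric_of_lt_one hr0.le hr1).mul_left (ε * D * (L * w n)))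
    fun j => norm_bwd_term_le hw hB hL hX n j
  have h3 : ε * D * (L * w n) * (1 - r)⁻¹ ≤ L * w n / 4 := by
    have := mul_le_mul_of_nonneg_right hs (mul_nonneg hL (hw.pos n).le)
    linarith
  refine (norm_sub_le _ _).trans ?_
  linarith

lemma greenSum_sub [CompleteSpace 𝔸] (hw : IsDichotomyWeight G Q C D r w) (hr0 : 0 < r)
    (hr1 : r < 1) (hB : ∀ k, ‖B k‖ ≤ ε) (hL : 0 ≤ L) (hX : ∀ k, ‖X k‖ ≤ L * w k)
    (hY : ∀ k, ‖Y k‖ ≤ L * w k) (n : ℕ) :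
    greenSum G Q B X n - greenSum G Q B Y n = greenSum G Q B (fun k => X k - Y k) n := by
  simp only [greenSum, mul_sub (B _), mul_sub (_ * _ * _)]
  rw [(summable_bwd hw hr0 hr1 hB hL hX n).tsum_sub (summable_bwd hw hr0 hr1 hB hL hY n),
    Finset.sum_sub_distrib]
  abel

/-! ### Solutions of Perron's integral equation -/

/-- Perron's integral equation `X = G Q + greenSum X` has a solution of growth `w`, obtained as the
fixed point of a contraction on bounded sequences after division by `w`. -/
lemma exists_perron_solution [NormedAlgebra ℝ 𝔸] [CompleteSpace 𝔸]
    (hw : IsDichotomyWeight G Q C D r w) (hr0 : 0 < r) (hr1 : r < 1) (hD : 0 ≤ D) (hC : 0 ≤ C)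
    (hs : ε * D * (1 - r)⁻¹ ≤ 1 / 4) (hB : ∀ k, ‖B k‖ ≤ ε) (hG : G 0 = 1) (hw0 : w 0 = 1) :
    ∃ X : ℕ → 𝔸, (∀ n, ‖X n‖ ≤ 2 * C * w n) ∧ ∀ n, X n = G n * Q + greenSum G Q B X n := by
  have hGQ : ∀ n, ‖(G n : 𝔸) * Q‖ ≤ C * w n := fun n => by
    simpa [hG, hw0] using hw.fwd n 0 (Nat.zero_le n)
  have hscale : ∀ (Z : BoundedContinuousFunction ℕ 𝔸) (k : ℕ), ‖w k • Z k‖ ≤ ‖Z‖ * w k :=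
    fun Z k => by
      rw [norm_smul, Real.norm_of_nonneg (hw.pos k).le, mul_comm]
      exact mul_le_mul_of_nonneg_right (Z.norm_coe_le_norm k) (hw.pos k).le
  have hb : ∀ (Z : BoundedContinuousFunction ℕ 𝔸) (n : ℕ),
      ‖(w n)⁻¹ • ((G n : 𝔸) * Q + greenSum G Q B (fun k => w k • Z k) n)‖ ≤ C + ‖Z‖ / 2 :=
    fun Z n => by
      have hwn := hw.pos n
      rw [norm_smul, norm_inv, Real.norm_of_nonneg hwn.le, inv_mul_le_iff₀ hwn]
      have h1 := norm_greenSum_le hw hr0 hr1 hD hs hB (norm_nonneg Z) (hscale Z) n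
      refine (norm_add_le _ _).trans ?_
      linarith [hGQ n]
  let Φ : BoundedContinuousFunction ℕ 𝔸 → BoundedContinuousFunction ℕ 𝔸 := fun Z =>
    .ofNormedAddCommGroupDiscrete
      (fun n => (w n)⁻¹ • ((G n : 𝔸) * Q + greenSum G Q B (fun k => w k • Z k) n)) _ (hb Z)
  have hΦ : ContractingWith (1 / 2) Φ := by
    refine ⟨by rw [← NNReal.coe_lt_coe]; norm_num, LipschitzWith.of_dist_le_mul fun Z Z' => ?_⟩
    rw [BoundedContinuousFunction.dist_le (by positivity)]
    intro n
    have hwn := hw.pos n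
    set M := max ‖Z‖ ‖Z'‖
    have hM : 0 ≤ M := (norm_nonneg Z).trans (le_max_left _ _)
    have e1 : ∀ k, ‖w k • Z k‖ ≤ M * w k := fun k => (hscale Z k).trans
      (mul_le_mul_of_nonneg_right (le_max_left _ _) (hw.pos k).le)
    have e2 : ∀ k, ‖w k • Z' k‖ ≤ M * w k := fun k => (hscale Z' k).trans
      (mul_le_mul_of_nonneg_right (le_max_right _ _) (hw.pos k).le)
    have e3 : ∀ k, ‖w k • Z k - w k • Z' k‖ ≤ ‖Z - Z'‖ * w k := fun k => by
      rw [← smul_sub]; exact hscale (Z - Z') k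
    have h1 := norm_greenSum_le hw hr0 hr1 hD hs hB (norm_nonneg (Z - Z')) e3 n
    rw [← greenSum_sub hw hr0 hr1 hB hM e1 e2 n] at h1
    change dist ((w n)⁻¹ • ((G n : 𝔸) * Q + greenSum G Q B (fun k => w k • Z k) n))
      ((w n)⁻¹ • ((G n : 𝔸) * Q + greenSum G Q B (fun k => w k • Z' k) n)) ≤ _
    rw [dist_eq_norm, ← smul_sub, add_sub_add_left_eq_sub, norm_smul, norm_inv,
      Real.norm_of_nonneg hwn.le, inv_mul_le_iff₀ hwn, dist_eq_norm]
    refine h1.trans (le_of_eq ?_)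
    push_cast
    ring
  set Z := ContractingWith.fixedPoint Φ hΦ
  have hfix : Φ Z = Z := hΦ.fixedPoint_isFixedPt
  have hZn : ∀ n, Z n = (w n)⁻¹ • ((G n : 𝔸) * Q + greenSum G Q B (fun k => w k • Z k) n) :=
    fun n => (DFunLike.congr_fun hfix n).symm
  have hZ : ‖Z‖ ≤ 2 * C := by
    have : ‖Z‖ ≤ C + ‖Z‖ / 2 := by
      rw [BoundedContinuousFunction.norm_le (by positivity)]
      intro n
      rw [hZn n]
      exact hb Z n
    linarith
  refine ⟨fun k => w k • Z k, fun n => (hscale Z n).trans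
    (mul_le_mul_of_nonneg_right hZ (hw.pos n).le), fun n => ?_⟩
  change w n • Z n = _
  conv_lhs => rw [hZn n]
  rw [smul_inv_smul₀ (hw.pos n).ne']

/-- Solutions of Perron's integral equation are orbits of the perturbed flow. -/
lemma perron_solution_orbit [CompleteSpace 𝔸] (hw : IsDichotomyWeight G Q C D r w) (hr0 : 0 < r)
    (hr1 : r < 1) (hB : ∀ k, ‖defect G F k‖ ≤ ε) (hF : F 0 = 1)
    (hL : 0 ≤ L) (hX : ∀ k, ‖X k‖ ≤ L * w k)
    (hfix : ∀ n, X n = G n * Q + greenSum G Q (defect G F) X n) (n : ℕ) :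
    X n = F n * X 0 := by
  have hpull : ∀ n, (↑(G n)⁻¹ : 𝔸) * X n = Q +
      (∑ k ∈ Finset.range n, Q * ↑(G (k + 1))⁻¹ * (defect G F k * X k) -
        ∑' j, (1 - Q) * ↑(G (n + j + 1))⁻¹ * (defect G F (n + j) * X (n + j))) := fun n => by
    conv_lhs => rw [hfix n]
    rw [greenSum, mul_add, mul_sub, Finset.mul_sum,
      ← (summable_bwd hw hr0 hr1 hB hL hX n).tsum_mul_left]
    simp only [mul_assoc, Units.inv_mul_cancel_left]
  have hsum : ∀ n, Summable fun j =>
      (1 - Q) * ↑(G (n + j + 1))⁻¹ * (defect G F (n + j) * X (n + j)) := fun n => by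
    have := (summable_bwd hw hr0 hr1 hB hL hX n).mul_left (↑(G n)⁻¹ : 𝔸)
    simpa only [mul_assoc, Units.inv_mul_cancel_left] using this
  have hstep : ∀ n, X (n + 1) = F (n + 1) * ↑(F n)⁻¹ * X n := fun n => by
    have h : (↑(G (n + 1))⁻¹ : 𝔸) * X (n + 1) =
        ↑(G n)⁻¹ * X n + ↑(G (n + 1))⁻¹ * (defect G F n * X n) := by
      rw [hpull n, hpull (n + 1), (hsum n).tsum_eq_zero_add, Finset.sum_range_succ]
      have e : ∀ j, n + 1 + j = n + (j + 1) := fun j => by omega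
      rw [tsum_congr fun j => by rw [e j]]
      simp only [add_zero]
      noncomm_ring
    have h2 := congrArg (fun z => (G (n + 1) : 𝔸) * z) h
    simp only [mul_add, Units.mul_inv_cancel_left] at h2
    rw [h2, defect]
    noncomm_ring
  induction n with
  | zero => simp [hF]
  | succ n ih =>
    rw [hstep n, ih]
    simp [mul_assoc]

/-! ### A priori bound for orbits with a unit impulse -/

/-- Variation of constants for an orbit `u` of the perturbed flow with a unit impulse at time `m`:
if `u` has growth at most `w` and its `Q`-component at time `0` comes from the impulse alone, then
it obeys the same bound as the Green kernel with source `m`,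
up to a factor `2`. -/
lemma norm_impulse_orbit_le (hw : IsDichotomyWeight G Q C D r w) (hr0 : 0 < r) (hr1 : r < 1)
    (hC : 0 ≤ C) (hD : 0 ≤ D) (hs : ε * D * (1 - r)⁻¹ ≤ 1 / 4) (hB : ∀ k, ‖defect G F k‖ ≤ ε)
    (hG : G 0 = 1) {u : ℕ → 𝔸} {m : ℕ}
    (hrec : ∀ n, u (n + 1) = F (n + 1) * ↑(F n)⁻¹ * u n + if n + 1 = m then 1 else 0)
    (h0 : Q * u 0 = if m = 0 then Q else 0) (hu : ∀ n, ‖u n‖ ≤ L * w n) (n : ℕ) :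
    ‖u n‖ * w m ≤ 2 * C * w n := by
  have hstep : ∀ n, (↑(G (n + 1))⁻¹ : 𝔸) * u (n + 1) = ↑(G n)⁻¹ * u n +
      ↑(G (n + 1))⁻¹ * (defect G F n * u n) + if n + 1 = m then (↑(G m)⁻¹ : 𝔸) else 0 := by
    intro n
    have e : u (n + 1) = G (n + 1) * (↑(G n)⁻¹ * u n) + defect G F n * u n +
        if n + 1 = m then 1 else 0 := by
      rw [hrec n, defect]
      noncomm_ring
    rw [e, mul_add, mul_add, Units.inv_mul_cancel_left]
    split_ifs with h
    · rw [mul_one, h]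
    · simp
  have hQ : ∀ n, Q * (↑(G n)⁻¹ * u n) = (if m ≤ n then Q * (↑(G m)⁻¹ : 𝔸) else 0) +
      ∑ k ∈ Finset.range n, Q * (↑(G (k + 1))⁻¹ * (defect G F k * u k)) := by
    intro n
    induction n with
    | zero =>
      simp only [hG, inv_one, Units.val_one, one_mul, h0, Finset.range_zero, Finset.sum_empty,
        add_zero, Nat.le_zero]
      split_ifs with h
      · simp [h, hG]
      · rfl
    | succ n ih =>
      rw [hstep, mul_add, mul_add, ih, Finset.sum_range_succ]
      rcases lt_trichotomy m (n + 1) with h | h | h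
      · rw [if_pos (by omega), if_neg (by omega), if_pos (by omega)]; simp only [mul_zero]; abel
      · rw [if_neg (by omega), if_pos (by omega), if_pos (by omega)]; abel
      · rw [if_neg (by omega), if_neg (by omega), if_neg (by omega)]; simp only [mul_zero]; abel
  have hP : ∀ n J, (1 - Q) * (↑(G n)⁻¹ * u n) = (1 - Q) * (↑(G (n + J))⁻¹ * u (n + J)) -
      ∑ j ∈ Finset.range J,
        (1 - Q) * (↑(G (n + j + 1))⁻¹ * (defect G F (n + j) * u (n + j))) -
      if n < m ∧ m ≤ n + J then (1 - Q) * (↑(G m)⁻¹ : 𝔸) else 0 := by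
    intro n J
    induction J with
    | zero => rw [if_neg (by omega)]; simp
    | succ J ih =>
      rw [ih, ← add_assoc, hstep, mul_add, mul_add, Finset.sum_range_succ]
      by_cases h1 : n + J + 1 = m
      · rw [if_neg (by omega), if_pos h1, if_pos (by omega)]; abel
      · rw [if_neg h1]
        have : (n < m ∧ m ≤ n + J + 1) ↔ (n < m ∧ m ≤ n + J) := by omega
        simp only [this, mul_zero]
        abel
  -- the kernel of the unperturbed flow with source `m`
  have hmain : ∀ n, ‖if m ≤ n then (G n : 𝔸) * Q * ↑(G m)⁻¹
      else (G n : 𝔸) * (1 - Q) * ↑(G m)⁻¹‖ ≤ C / w m * w n := by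
    intro n
    rw [div_mul_eq_mul_div, le_div_iff₀ (hw.pos m)]
    split_ifs with h
    · exact hw.fwd n m h
    · have h1 := hw.bwd n (m - n)
      rw [Nat.add_sub_cancel' (by omega)] at h1
      refine h1.trans (mul_le_mul_of_nonneg_right ?_ (hw.pos n).le)
      exact mul_le_of_le_one_right hC (pow_le_one₀ hr0.le hr1.le)
  -- one application of variation of constants halves the bound, up to the kernel term
  have himp : ∀ S : ℝ, 0 ≤ S → (∀ n, ‖u n‖ ≤ S * w n) →
      ∀ n, ‖u n‖ ≤ (C / w m + S / 2) * w n := by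
    intro S hS huS n
    have hwn := hw.pos n
    have hJ : ∀ J, m ≤ J →
        ‖u n‖ ≤ (C / w m + S / 2) * w n + C * S * w n * r ^ J := by
      intro J hJ
      have e : u n = (if m ≤ n then (G n : 𝔸) * Q * ↑(G m)⁻¹
            else -((G n : 𝔸) * (1 - Q) * ↑(G m)⁻¹)) +
          ∑ k ∈ Finset.range n, (G n : 𝔸) * Q * ↑(G (k + 1))⁻¹ * (defect G F k * u k) -
          ∑ j ∈ Finset.range J,
            (G n : 𝔸) * (1 - Q) * ↑(G (n + j + 1))⁻¹ * (defect G F (n + j) * u (n + j)) +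
          (G n : 𝔸) * (1 - Q) * ↑(G (n + J))⁻¹ * u (n + J) := by
        have e1 : u n = G n * (Q * (↑(G n)⁻¹ * u n)) + G n * ((1 - Q) * (↑(G n)⁻¹ * u n)) := by
          rw [← mul_add, ← add_mul, add_sub_cancel, one_mul, Units.mul_inv_cancel_left]
        rw [hQ n, hP n J] at e1
        rw [e1, mul_add, mul_sub, mul_sub, Finset.mul_sum, Finset.mul_sum]
        simp only [mul_assoc]
        by_cases h : m ≤ n
        · rw [if_pos h, if_pos h, if_neg (by omega)]; simp only [mul_zero]; abel
        · rw [if_neg h, if_neg h, if_pos (by omega)]; simp only [mul_zero]; abel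
      have b1 : ‖if m ≤ n then (G n : 𝔸) * Q * ↑(G m)⁻¹
            else -((G n : 𝔸) * (1 - Q) * ↑(G m)⁻¹)‖ ≤ C / w m * w n := by
        have := hmain n
        split_ifs with h
        · simpa only [if_pos h] using this
        · rw [norm_neg]; simpa only [if_neg h] using this
      have b2 := norm_fwd_sum_le hw hr0 hr1 hD hs hB hS huS n
      have b3 : ‖∑ j ∈ Finset.range J, (G n : 𝔸) * (1 - Q) * ↑(G (n + j + 1))⁻¹ *
          (defect G F (n + j) * u (n + j))‖ ≤ S * w n / 4 := by
        have hε : 0 ≤ ε := (norm_nonneg _).trans (hB 0)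
        refine (norm_sum_le_of_le _ fun j _ => norm_bwd_term_le hw hB hS huS n j).trans ?_
        rw [← Finset.mul_sum]
        have hg : ∑ j ∈ Finset.range J, r ^ j ≤ (1 - r)⁻¹ := by
          rw [← tsum_geometric_of_lt_one hr0.le hr1]
          exact (summable_geometric_of_lt_one hr0.le hr1).sum_le_tsum _ fun _ _ => by positivity
        calc _ ≤ ε * D * (S * w n) * (1 - r)⁻¹ := by gcongr
          _ = ε * D * (1 - r)⁻¹ * (S * w n) := by ring
          _ ≤ 1 / 4 * (S * w n) := by gcongr
          _ = _ := by ring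
      have b4 : ‖(G n : 𝔸) * (1 - Q) * ↑(G (n + J))⁻¹ * u (n + J)‖ ≤ C * S * w n * r ^ J := by
        calc _ ≤ ‖(G n : 𝔸) * (1 - Q) * ↑(G (n + J))⁻¹‖ * (S * w (n + J)) :=
              (norm_mul_le _ _).trans (by gcongr; exact huS _)
          _ = S * (‖(G n : 𝔸) * (1 - Q) * ↑(G (n + J))⁻¹‖ * w (n + J)) := by ring
          _ ≤ S * (C * r ^ J * w n) := mul_le_mul_of_nonneg_left (hw.bwd n J) hS
          _ = _ := by ring
      rw [e]
      refine (norm_add_le_of_le (norm_sub_le_of_le (norm_add_le_of_le b1 b2) b3) b4).trans ?_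
      linarith
    have hlim : Filter.Tendsto (fun J => (C / w m + S / 2) * w n + C * S * w n * r ^ J)
        Filter.atTop (nhds ((C / w m + S / 2) * w n + C * S * w n * 0)) :=
      ((tendsto_pow_atTop_nhds_zero_of_lt_one hr0.le hr1).const_mul _).const_add _
    rw [mul_zero, add_zero] at hlim
    exact ge_of_tendsto hlim (Filter.eventually_atTop.2 ⟨m, hJ⟩)
  have hbdd : BddAbove (Set.range fun n => ‖u n‖ / w n) :=
    ⟨L, by rintro _ ⟨k, rfl⟩; exact (div_le_iff₀ (hw.pos k)).2 (hu k)⟩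
  set S := ⨆ n, ‖u n‖ / w n
  have huS : ∀ n, ‖u n‖ ≤ S * w n := fun n =>
    (div_le_iff₀ (hw.pos n)).1 (le_ciSup hbdd n)
  have hS0 : 0 ≤ S :=
    (div_nonneg (norm_nonneg (u 0)) (hw.pos 0).le).trans (le_ciSup hbdd 0)
  have hS : S ≤ C / w m + S / 2 :=
    ciSup_le fun k => (div_le_iff₀ (hw.pos k)).2 (himp S hS0 huS k)
  have hwm := hw.pos m
  have hS2 : S * w m ≤ 2 * C := by
    rw [← le_div_iff₀ hwm, mul_div_assoc]
    linarith
  calc ‖u n‖ * w m ≤ S * w n * w m := mul_le_mul_of_nonneg_right (huS n) hwm.le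
    _ = S * w m * w n := by ring
    _ ≤ 2 * C * w n := mul_le_mul_of_nonneg_right hS2 (hw.pos n).le

/-! ### Roughness of exponential dichotomies -/

/-- Under an exponential dichotomy with rates `a < b`, the weight `exp (μ n)` is admissible as soon
as `μ` keeps distance `t` from both `a` and `b`. -/
lemma isDichotomyWeight_exp {a b t μ : ℝ} (ht : 0 ≤ t) (ha : a + t ≤ μ) (hb : μ + t ≤ b)
    (hC : 0 ≤ C)
    (h1 : ∀ n m : ℕ, m ≤ n →
      ‖(G n : 𝔸) * Q * ↑(G m)⁻¹‖ ≤ C * Real.exp (a * ((n : ℝ) - m)))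
    (h2 : ∀ n m : ℕ, n ≤ m →
      ‖(G n : 𝔸) * (1 - Q) * ↑(G m)⁻¹‖ ≤ C * Real.exp (b * ((n : ℝ) - m))) :
    IsDichotomyWeight G Q C (C * Real.exp (-a)) (Real.exp (-t)) fun n => Real.exp (μ * n) where
  pos n := Real.exp_pos _
  fwd n m h := by
    refine (mul_le_mul_of_nonneg_right (h1 n m h) (Real.exp_pos _).le).trans ?_
    rw [mul_assoc, ← Real.exp_add]
    gcongr C * Real.exp ?_
    have h' : (0 : ℝ) ≤ n - m := sub_nonneg.2 (Nat.cast_le.2 h)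
    nlinarith
  bwd n j := by
    refine (mul_le_mul_of_nonneg_right (h2 n (n + j) (by omega)) (Real.exp_pos _).le).trans ?_
    rw [mul_assoc, mul_assoc, ← Real.exp_add, ← Real.exp_nat_mul, ← Real.exp_add]
    gcongr C * Real.exp ?_
    push_cast
    have h' : (0 : ℝ) ≤ j := Nat.cast_nonneg j
    nlinarith
  fwd_succ n k h := by
    refine (mul_le_mul_of_nonneg_right (h1 n (k + 1) h) (Real.exp_pos _).le).trans ?_
    obtain ⟨i, rfl⟩ : ∃ i, n = k + 1 + i := ⟨n - (k + 1), by omega⟩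
    rw [show k + 1 + i - 1 - k = i by omega]
    rw [mul_assoc, mul_assoc, mul_assoc, ← Real.exp_add, ← Real.exp_nat_mul, ← Real.exp_add,
      ← Real.exp_add]
    gcongr C * Real.exp ?_
    push_cast
    have h' : (0 : ℝ) ≤ i := Nat.cast_nonneg i
    nlinarith
  bwd_succ n j := by
    refine (mul_le_mul_of_nonneg_right (h2 n (n + j + 1) (by omega)) (Real.exp_pos _).le).trans ?_
    rw [mul_assoc, mul_assoc, mul_assoc, ← Real.exp_add, ← Real.exp_nat_mul, ← Real.exp_add,
      ← Real.exp_add]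
    gcongr C * Real.exp ?_
    push_cast
    have h' : (0 : ℝ) ≤ j := Nat.cast_nonneg j
    nlinarith

lemma inv_one_sub_exp_neg_le {t : ℝ} (ht0 : 0 < t) (ht1 : t ≤ 1) :
    (1 - Real.exp (-t))⁻¹ ≤ 2 / t := by
  have h1 : Real.exp (-t) ≤ 1 / (1 + t) := by
    rw [Real.exp_neg, ← one_div]
    exact one_div_le_one_div_of_le (by linarith) (by linarith [Real.add_one_le_exp t])
  have h2 : t / 2 ≤ 1 - 1 / (1 + t) := by
    rw [show 1 - 1 / (1 + t) = t / (1 + t) by field_simp; ring]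
    exact div_le_div_of_nonneg_left ht0.le (by linarith) (by linarith)
  calc (1 - Real.exp (-t))⁻¹ ≤ (t / 2)⁻¹ := inv_anti₀ (by linarith) (by linarith)
    _ = 2 / t := inv_div t 2

/-- Roughness of exponential dichotomies on the half line, with loss `O(ε)` in both rates. The
perturbed projection `P` has the same kernel as `Q`, by `P * Q = P` and `Q * P = Q`. -/
lemma dichotomy_robust.{u} (C a b : ℝ) (hC : 1 ≤ C) (hab : a < b) :
    ∃ ε₀ K : ℝ, 0 < ε₀ ∧ 1 ≤ K ∧
      ∀ (𝔸 : Type u) [NormedRing 𝔸] [NormedAlgebra ℝ 𝔸] [CompleteSpace 𝔸]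
        (G F : ℕ → 𝔸ˣ) (Q : 𝔸) (ε : ℝ), G 0 = 1 → F 0 = 1 → Q * Q = Q →
        (∀ n m : ℕ, m ≤ n →
          ‖(G n : 𝔸) * Q * ↑(G m)⁻¹‖ ≤ C * Real.exp (a * ((n : ℝ) - m))) →
        (∀ n m : ℕ, n ≤ m →
          ‖(G n : 𝔸) * (1 - Q) * ↑(G m)⁻¹‖ ≤ C * Real.exp (b * ((n : ℝ) - m))) →
        (∀ k, ‖defect G F k‖ ≤ ε) → 0 < ε → ε ≤ ε₀ →
        ∃ P : 𝔸, P * Q = P ∧ Q * P = Q ∧ ‖P - Q‖ ≤ K * ε ∧ a + K * ε < b - K * ε ∧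
          (∀ n m : ℕ, m ≤ n →
            ‖(F n : 𝔸) * P * ↑(F m)⁻¹‖ ≤ 2 * C * Real.exp ((a + K * ε) * ((n : ℝ) - m))) ∧
          (∀ n m : ℕ, n ≤ m →
            ‖(F n : 𝔸) * (1 - P) * ↑(F m)⁻¹‖ ≤
              4 * C * Real.exp ((b - K * ε) * ((n : ℝ) - m))) := by
  set s : ℝ := (1 - Real.exp (-((b - a) / 2)))⁻¹ with hs
  have hlt : Real.exp (-((b - a) / 2)) < 1 := Real.exp_zero ▸ Real.exp_lt_exp.2 (by linarith)
  have hs0 : 0 < s := inv_pos.2 (by linarith)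
  have hC0 : 0 < C := by linarith
  have hea := Real.exp_pos (-a)
  -- the second term makes the Green operator a contraction, the third one bounds `‖P - Q‖`
  set K : ℝ := 1 + 8 * C * Real.exp (-a) + 2 * C ^ 3 * Real.exp (-a) * s with hK
  have hK1 : 1 ≤ K := by
    have : 0 ≤ 8 * C * Real.exp (-a) + 2 * C ^ 3 * Real.exp (-a) * s := by positivity
    linarith
  have hK8 : 8 * C * Real.exp (-a) ≤ K := by
    have : 0 ≤ 2 * C ^ 3 * Real.exp (-a) * s := by positivity
    linarith
  have hK3 : 2 * C ^ 3 * Real.exp (-a) * s ≤ K := by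
    have : 0 ≤ 8 * C * Real.exp (-a) := by positivity
    linarith
  have hK0 : 0 < K := by linarith
  refine ⟨min 1 ((b - a) / 4) / K, K, by have := sub_pos.2 hab; positivity, hK1, ?_⟩
  intro 𝔸 _ _ _ G F Q ε hG hF hQQ h1 h2 hB hε0 hε
  set t : ℝ := K * ε with ht
  have ht0 : 0 < t := by positivity
  have htm : t ≤ min 1 ((b - a) / 4) := by
    rw [le_div_iff₀ hK0] at hε; rw [ht]; linarith
  have ht1 : t ≤ 1 := htm.trans (min_le_left _ _)
  have htd : t ≤ (b - a) / 4 := htm.trans (min_le_right _ _)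
  have hr1 : Real.exp (-t) < 1 := Real.exp_zero ▸ Real.exp_lt_exp.2 (by linarith)
  have hr0 := Real.exp_pos (-t)
  have hD : 0 ≤ C * Real.exp (-a) := by positivity
  have hsmall : ε * (C * Real.exp (-a)) * (1 - Real.exp (-t))⁻¹ ≤ 1 / 4 := by
    calc _ ≤ ε * (C * Real.exp (-a)) * (2 / t) := by
          gcongr; exact inv_one_sub_exp_neg_le ht0 ht1
      _ = 2 * C * Real.exp (-a) / K := by rw [ht]; field_simp
      _ ≤ 1 / 4 := by rw [div_le_iff₀ hK0]; linarith
  have hwa : IsDichotomyWeight G Q C (C * Real.exp (-a)) (Real.exp (-t))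
      fun n => Real.exp ((a + t) * n) :=
    isDichotomyWeight_exp ht0.le le_rfl (by linarith) hC0.le h1 h2
  have hwb : IsDichotomyWeight G Q C (C * Real.exp (-a)) (Real.exp (-t))
      fun n => Real.exp ((b - t) * n) :=
    isDichotomyWeight_exp ht0.le (by linarith) (by linarith) hC0.le h1 h2
  obtain ⟨X, hX, hfix⟩ := exists_perron_solution hwa hr0 hr1 hD hC0.le hsmall hB hG (by simp)
  have horb := perron_solution_orbit hwa hr0 hr1 hB hF (by positivity) hX hfix
  have hQn : ‖Q‖ ≤ C := by simpa [hG] using h1 0 0 le_rfl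
  have hX0 : X 0 - Q = -∑' j, (1 - Q) * (↑(G (j + 1))⁻¹ * (defect G F j * X j)) := by
    have := hfix 0
    simp only [greenSum, hG, Units.val_one, one_mul, Finset.range_zero, Finset.sum_empty, zero_sub,
      zero_add, mul_assoc] at this
    rw [← sub_eq_iff_eq_add'.2 this]
  have hsum : Summable fun j => (1 - Q) * (↑(G (j + 1))⁻¹ * (defect G F j * X j)) := by
    have := summable_bwd hwa hr0 hr1 hB (by positivity) hX 0
    simpa only [hG, Units.val_one, one_mul, zero_add, mul_assoc] using this
  have hQX : Q * X 0 = Q := by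
    have e : Q * (X 0 - Q) = 0 := by
      rw [hX0, mul_neg, ← hsum.tsum_mul_left, neg_eq_zero]
      have : ∀ j, Q * ((1 - Q) * (↑(G (j + 1))⁻¹ * (defect G F j * X j))) = 0 := fun j => by
        rw [← mul_assoc, mul_sub, mul_one, hQQ, sub_self, zero_mul]
      simp only [this, tsum_zero]
    rw [mul_sub, hQQ, sub_eq_zero] at e
    exact e
  have hdist : ‖X 0 - Q‖ ≤ ε * (2 * C) * (C * Real.exp (-a)) * s := by
    rw [hX0, norm_neg]
    refine tsum_of_norm_bounded ((hasSum_geometric_of_lt_one (Real.exp_pos _).le hlt).mul_left _)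
      fun j => ?_
    rw [← mul_assoc]
    have hw' : IsDichotomyWeight G Q C (C * Real.exp (-a)) (Real.exp (-((b - a) / 2)))
        fun n => Real.exp (((a + b) / 2) * n) :=
      isDichotomyWeight_exp (by linarith) (by linarith) (by linarith) hC0.le h1 h2
    have hj := hw'.bwd_succ 0 j
    simp only [hG, Units.val_one, one_mul, zero_add, Nat.cast_zero, mul_zero, Real.exp_zero,
      mul_one] at hj
    have hXj : ‖X j‖ ≤ 2 * C * Real.exp (((a + b) / 2) * j) := (hX j).trans (by gcongr; linarith)
    refine (norm_mul_mul_le_of_weight (hB j) (by positivity) hXj hj).trans_eq (by ring)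
  have hPQ : ∀ n, (F n : 𝔸) * (X 0 * Q) = X n * Q := fun n => by rw [horb n, mul_assoc]
  set P : 𝔸 := X 0 * Q with hP
  have hQP : Q * P = Q := by rw [hP, ← mul_assoc, hQX, hQQ]
  have hFP : ∀ n, ‖(F n : 𝔸) * P‖ ≤ 2 * C * C * Real.exp ((a + t) * n) := fun n => by
    rw [hPQ n]
    calc _ ≤ ‖X n‖ * ‖Q‖ := norm_mul_le _ _
      _ ≤ 2 * C * Real.exp ((a + t) * n) * C := by gcongr; exact hX n
      _ = _ := by ring
  -- the perturbed Green kernel with source `m`, an orbit with a unit impulse at time `m`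
  let u : ℕ → ℕ → 𝔸 := fun m n => F n * P * ↑(F m)⁻¹ - if n < m then (F n : 𝔸) * ↑(F m)⁻¹ else 0
  have hrec : ∀ m n, u m (n + 1) = F (n + 1) * ↑(F n)⁻¹ * u m n + if n + 1 = m then 1 else 0 := by
    intro m n
    simp only [u]
    rcases lt_trichotomy (n + 1) m with h | h | h
    · rw [if_pos h, if_pos (by omega), if_neg (by omega)]
      simp [mul_sub, mul_assoc]
    · rw [if_neg (by omega), if_pos (by omega), if_pos h, ← h]
      simp [mul_sub, mul_assoc]
    · rw [if_neg (by omega), if_neg (by omega), if_neg (by omega)]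
      simp [mul_assoc]
  have h0 : ∀ m, Q * u m 0 = if m = 0 then Q else 0 := by
    intro m
    simp only [u, hF, Units.val_one, one_mul]
    rcases Nat.eq_zero_or_pos m with h | h
    · simp [h, hF, hQP]
    · rw [if_pos h, if_neg (by omega), mul_sub, ← mul_assoc, hQP, sub_self]
  have hbdd : ∀ m, ∃ L : ℝ, 0 ≤ L ∧ ∀ n, ‖u m n‖ ≤ L * Real.exp ((a + t) * n) := by
    intro m
    -- only finitely many times precede the impulse
    refine ⟨2 * C * C * ‖(↑(F m)⁻¹ : 𝔸)‖ + ∑ k ∈ Finset.range m,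
      ‖(F k : 𝔸) * ↑(F m)⁻¹‖ * Real.exp (-((a + t) * k)), by positivity, fun n => ?_⟩
    have b1 : ‖(F n : 𝔸) * P * ↑(F m)⁻¹‖ ≤
        2 * C * C * ‖(↑(F m)⁻¹ : 𝔸)‖ * Real.exp ((a + t) * n) := by
      calc _ ≤ ‖(F n : 𝔸) * P‖ * ‖(↑(F m)⁻¹ : 𝔸)‖ := norm_mul_le _ _
        _ ≤ 2 * C * C * Real.exp ((a + t) * n) * ‖(↑(F m)⁻¹ : 𝔸)‖ := by gcongr; exact hFP n
        _ = _ := by ring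
    have b2 : ‖if n < m then (F n : 𝔸) * ↑(F m)⁻¹ else 0‖ ≤ (∑ k ∈ Finset.range m,
        ‖(F k : 𝔸) * ↑(F m)⁻¹‖ * Real.exp (-((a + t) * k))) * Real.exp ((a + t) * n) := by
      split_ifs with h
      · have := Finset.single_le_sum
          (f := fun k : ℕ => ‖(F k : 𝔸) * ↑(F m)⁻¹‖ * Real.exp (-((a + t) * k)))
          (fun _ _ => by positivity) (Finset.mem_range.2 h)
        refine le_trans (le_of_eq ?_) (mul_le_mul_of_nonneg_right this (Real.exp_pos _).le)
        rw [mul_assoc, ← Real.exp_add, neg_add_cancel, Real.exp_zero, mul_one]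
      · rw [norm_zero]; positivity
    rw [add_mul]
    exact norm_sub_le_of_le b1 b2
  refine ⟨P, by rw [hP, mul_assoc, hQQ], hQP, ?_, by linarith, fun n m h => ?_, fun n m h => ?_⟩
  · have : P - Q = (X 0 - Q) * Q := by rw [hP, sub_mul, hQQ]
    rw [this]
    calc _ ≤ ‖X 0 - Q‖ * ‖Q‖ := norm_mul_le _ _
      _ ≤ ε * (2 * C) * (C * Real.exp (-a)) * s * C := by gcongr
      _ = 2 * C ^ 3 * Real.exp (-a) * s * ε := by ring
      _ ≤ K * ε := by gcongr
  · obtain ⟨L, hL, hu⟩ := hbdd m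
    have := norm_impulse_orbit_le hwa hr0 hr1 hC0.le hD hsmall hB hG (hrec m) (h0 m) hu n
    simp only [u, if_neg (not_lt.2 h), sub_zero] at this
    rw [mul_sub, Real.exp_sub, ← mul_div_assoc, le_div_iff₀ (Real.exp_pos _)]
    exact this
  · rcases h.eq_or_lt with rfl | h
    -- at `n = m` the impulse orbit is already `P`, so `1 - P` is bounded through `‖1‖ ≤ 2 * C`
    · obtain ⟨L, hL, hu⟩ := hbdd n
      have := norm_impulse_orbit_le hwa hr0 hr1 hC0.le hD hsmall hB hG (hrec n) (h0 n) hu n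
      simp only [u, lt_irrefl, if_false, sub_zero] at this
      have h3 := le_of_mul_le_mul_right this (Real.exp_pos _)
      have h4 : ‖(1 : 𝔸) - Q‖ ≤ C := by simpa [hG] using h2 0 0 le_rfl
      have h5 : ‖(1 : 𝔸)‖ ≤ C + C := by
        simpa using norm_add_le_of_le h4 hQn
      have e : (F n : 𝔸) * (1 - P) * ↑(F n)⁻¹ = 1 - F n * P * ↑(F n)⁻¹ := by
        simp [mul_sub, sub_mul]
      rw [e, sub_self, mul_zero, Real.exp_zero, mul_one]
      refine (norm_sub_le_of_le h5 h3).trans_eq (by ring)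
    obtain ⟨L, hL, hu⟩ := hbdd m
    have hu' : ∀ n, ‖u m n‖ ≤ L * Real.exp ((b - t) * n) := fun n =>
      (hu n).trans (by gcongr; linarith)
    have := norm_impulse_orbit_le hwb hr0 hr1 hC0.le hD hsmall hB hG (hrec m) (h0 m) hu' n
    have e : u m n = -(F n * (1 - P) * ↑(F m)⁻¹) := by
      simp only [u, if_pos h]
      noncomm_ring
    rw [e, norm_neg] at this
    have h3 : ‖(F n : 𝔸) * (1 - P) * ↑(F m)⁻¹‖ ≤ 2 * C * Real.exp ((b - t) * ((n : ℝ) - m)) := by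
      rw [mul_sub (b - t), Real.exp_sub, ← mul_div_assoc, le_div_iff₀ (Real.exp_pos _)]
      exact this
    exact h3.trans (by gcongr; norm_num)

end BanachRing


/-! ### From dichotomies to the trichotomy -/

/-- **Abstract Perron-type exponential trichotomy perturbation theorem.**
Given a discrete flow `G` on a Banach space `X` with an exponential trichotomy
induced by projections `Qp, Qm`, any discrete flow `F` whose one-step increments are
`ε`-close to those of `G` (for `ε` small depending only on `C, γ, γ₀`) also admits an
exponential trichotomy, with projections `Pp, Pm` that are `O(ε)`-close to `Qp, Qm`
and with exponential rates deteriorated by at most `O(ε)`. -/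
theorem perron_exponential_trichotomy_perturbation
    (C γ γ₀ : ℝ) (hC : 1 ≤ C) (hγ₀ : 1 ≤ γ₀) (hγ : γ₀ < γ) :
    ∃ ε₀ K : ℝ, 0 < ε₀ ∧ 1 ≤ K ∧
      ∀ (X : Type) [NormedAddCommGroup X] [NormedSpace ℝ X] [CompleteSpace X]
        (G F : ℕ → X ≃L[ℝ] X) (Qp Qm : X →L[ℝ] X) (ε : ℝ),
        G 0 = ContinuousLinearEquiv.refl ℝ X →
        F 0 = ContinuousLinearEquiv.refl ℝ X →
        Qp ∘L Qp = Qp → Qm ∘L Qm = Qm →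
        Qp ∘L Qm = 0 → Qm ∘L Qp = 0 →
        (∀ n m : ℕ, m ≤ n →
          ‖(G n : X →L[ℝ] X) ∘L Qm ∘L ((G m).symm : X →L[ℝ] X)‖ ≤
            C * Real.exp (-γ * ((n : ℝ) - (m : ℝ)))) →
        (∀ n m : ℕ, m ≤ n →
          ‖(G m : X →L[ℝ] X) ∘L Qp ∘L ((G n).symm : X →L[ℝ] X)‖ ≤
            C * Real.exp (-γ * ((n : ℝ) - (m : ℝ)))) →
        (∀ n m : ℕ,
          ‖(G n : X →L[ℝ] X) ∘L (1 - Qm - Qp) ∘L ((G m).symm : X →L[ℝ] X)‖ ≤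
            C * Real.exp (γ₀ * |(n : ℝ) - (m : ℝ)|)) →
        (∀ n : ℕ, 1 ≤ n →
          ‖(F n : X →L[ℝ] X) ∘L ((F (n - 1)).symm : X →L[ℝ] X) -
              (G n : X →L[ℝ] X) ∘L ((G (n - 1)).symm : X →L[ℝ] X)‖ ≤ ε) →
        ε ≤ ε₀ →
        ∃ (Pp Pm : X →L[ℝ] X) (C' γ' γ₀' : ℝ),
          Pp ∘L Pp = Pp ∧ Pm ∘L Pm = Pm ∧
          Pp ∘L Pm = 0 ∧ Pm ∘L Pp = 0 ∧
          ‖Pp - Qp‖ ≤ K * ε ∧ ‖Pm - Qm‖ ≤ K * ε ∧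
          1 ≤ C' ∧ γ - K * ε ≤ γ' ∧ γ₀' ≤ γ₀ + K * ε ∧
          (∀ n m : ℕ, m ≤ n →
            ‖(F n : X →L[ℝ] X) ∘L Pm ∘L ((F m).symm : X →L[ℝ] X)‖ ≤
              C' * Real.exp (-γ' * ((n : ℝ) - (m : ℝ)))) ∧
          (∀ n m : ℕ, m ≤ n →
            ‖(F m : X →L[ℝ] X) ∘L Pp ∘L ((F n).symm : X →L[ℝ] X)‖ ≤
              C' * Real.exp (-γ' * ((n : ℝ) - (m : ℝ)))) ∧
          (∀ n m : ℕ,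
            ‖(F n : X →L[ℝ] X) ∘L (1 - Pm - Pp) ∘L ((F m).symm : X →L[ℝ] X)‖ ≤
              C' * Real.exp (γ₀' * |(n : ℝ) - (m : ℝ)|)) := by
  obtain ⟨ε₁, K₁, hε₁, hK₁, H₁⟩ := dichotomy_robust.{0} (2 * C) (-γ) (-γ₀)
    (by linarith) (by linarith)
  obtain ⟨ε₂, K₂, hε₂, hK₂, H₂⟩ := dichotomy_robust.{0} (2 * C) γ₀ γ (by linarith) hγ
  refine ⟨min ε₁ ε₂, max K₁ K₂, lt_min hε₁ hε₂, hK₁.trans (le_max_left _ _), ?_⟩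
  intro X _ _ _ G F Qp Qm ε hG hF hQp hQm hpm hmp hm hp hc hB hε
  have hε0 : 0 ≤ ε := (norm_nonneg _).trans (hB 1 le_rfl)
  have hC0 : 0 ≤ C := by linarith
  rcases hε0.eq_or_lt with rfl | hεpos
  · -- the increments of the two flows agree, hence so do the flows
    have hFG : ∀ n, F n = G n := by
      intro n
      induction n with
      | zero => rw [hF, hG]
      | succ n ih =>
        have h := norm_le_zero_iff.1 (hB (n + 1) (by omega))
        rw [sub_eq_zero, Nat.add_sub_cancel, ih] at h
        ext x
        simpa using DFunLike.congr_fun h (G n x)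
    refine ⟨Qp, Qm, C, γ, γ₀, hQp, hQm, hpm, hmp, by simp, by simp, hC, by simp, by simp, ?_⟩
    simp only [hFG]
    exact ⟨hm, hp, hc⟩
  have hK1ε : K₁ * ε ≤ max K₁ K₂ * ε := by gcongr; exact le_max_left _ _
  have hK2ε : K₂ * ε ≤ max K₁ K₂ * ε := by gcongr; exact le_max_right _ _
  let g : ℕ → (X →L[ℝ] X)ˣ := fun n => (G n).toUnit
  let f : ℕ → (X →L[ℝ] X)ˣ := fun n => (F n).toUnit
  have hg : g 0 = 1 := by ext x; simp [g, hG, ContinuousLinearEquiv.toUnit]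
  have hf : f 0 = 1 := by ext x; simp [f, hF, ContinuousLinearEquiv.toUnit]
  replace hQp : Qp * Qp = Qp := hQp
  replace hQm : Qm * Qm = Qm := hQm
  replace hpm : Qp * Qm = 0 := hpm
  replace hmp : Qm * Qp = 0 := hmp
  replace hm : ∀ n m : ℕ, m ≤ n →
      ‖(g n : X →L[ℝ] X) * Qm * ↑(g m)⁻¹‖ ≤ C * Real.exp (-γ * ((n : ℝ) - m)) := hm
  replace hp : ∀ n m : ℕ, m ≤ n →
      ‖(g m : X →L[ℝ] X) * Qp * ↑(g n)⁻¹‖ ≤ C * Real.exp (-γ * ((n : ℝ) - m)) := hp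
  replace hc : ∀ n m : ℕ,
      ‖(g n : X →L[ℝ] X) * (1 - Qm - Qp) * ↑(g m)⁻¹‖ ≤ C * Real.exp (γ₀ * |(n : ℝ) - m|) := hc
  have hdef : ∀ k, ‖defect g f k‖ ≤ ε := fun k => hB (k + 1) (by omega)
  obtain ⟨Pm, hPm1, hPm2, hPm3, hgap₁, hPm4, hPm5⟩ := H₁ (X →L[ℝ] X) g f Qm ε hg hf hQm
    (fun n m h => (hm n m h).trans (by
      have := Real.exp_pos (-γ * ((n : ℝ) - m))
      nlinarith))
    (fun n m h => by
      have h' : (n : ℝ) ≤ m := Nat.cast_le.2 h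
      have e : (g n : X →L[ℝ] X) * (1 - Qm) * ↑(g m)⁻¹ =
          (g n : X →L[ℝ] X) * (1 - Qm - Qp) * ↑(g m)⁻¹ +
            (g n : X →L[ℝ] X) * Qp * ↑(g m)⁻¹ := by noncomm_ring
      have h1 := hc n m
      rw [abs_of_nonpos (by linarith), show γ₀ * -((n : ℝ) - m) = -γ₀ * ((n : ℝ) - m) by ring] at h1
      have h2 : ‖(g n : X →L[ℝ] X) * Qp * ↑(g m)⁻¹‖ ≤ C * Real.exp (-γ₀ * ((n : ℝ) - m)) :=
        (hp m n h).trans (by gcongr C * Real.exp ?_; nlinarith)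
      rw [e]
      exact (norm_add_le_of_le h1 h2).trans_eq (by ring))
    hdef hεpos (hε.trans (min_le_left _ _))
  obtain ⟨R, hR1, hR2, hR3, hgap₂, hR4, hR5⟩ := H₂ (X →L[ℝ] X) g f (1 - Qp) ε hg hf
    (by rw [mul_sub, mul_one, sub_mul, one_mul, hQp]; abel)
    (fun n m h => by
      have h' : (m : ℝ) ≤ n := Nat.cast_le.2 h
      have e : (g n : X →L[ℝ] X) * (1 - Qp) * ↑(g m)⁻¹ =
          (g n : X →L[ℝ] X) * (1 - Qm - Qp) * ↑(g m)⁻¹ +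
            (g n : X →L[ℝ] X) * Qm * ↑(g m)⁻¹ := by noncomm_ring
      have h1 := hc n m
      rw [abs_of_nonneg (by linarith)] at h1
      have h2 : ‖(g n : X →L[ℝ] X) * Qm * ↑(g m)⁻¹‖ ≤ C * Real.exp (γ₀ * ((n : ℝ) - m)) :=
        (hm n m h).trans (by gcongr C * Real.exp ?_; nlinarith)
      rw [e]
      exact (norm_add_le_of_le h1 h2).trans_eq (by ring))
    (fun n m h => by
      rw [sub_sub_cancel]
      refine (hp m n h).trans ?_
      rw [show -γ * ((m : ℝ) - n) = γ * ((n : ℝ) - m) by ring]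
      have := Real.exp_pos (γ * ((n : ℝ) - m))
      nlinarith)
    hdef hεpos (hε.trans (min_le_right _ _))
  have hRQp : R * Qp = 0 := by
    rw [mul_sub, mul_one] at hR1
    simpa using hR1
  have hQpR : Qp * (1 - R) = 1 - R := by
    rw [sub_mul, one_mul] at hR2
    rw [mul_sub, mul_one, ← sub_eq_zero]
    rw [← sub_eq_zero] at hR2
    rw [← hR2]
    abel
  have hPmPp : Pm * (1 - R) = 0 := by
    rw [← hPm1, ← hQpR, mul_assoc, ← mul_assoc Qm, hmp, zero_mul, mul_zero]
  have hPmR : Pm * R = Pm := by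
    rw [mul_sub, mul_one, sub_eq_zero] at hPmPp
    exact hPmPp.symm
  -- orbits starting in the range of `Pm` decay, so they have no unstable component
  have hPpPm : (1 - R) * Pm = 0 := by
    have hb : ∀ n : ℕ, ‖(1 - R) * Pm‖ ≤
        (4 * (2 * C)) * (2 * (2 * C)) * Real.exp (-(γ - K₂ * ε) + (-γ + K₁ * ε)) ^ n := by
      intro n
      have h1 := hR5 0 n (Nat.zero_le n)
      have h2 := hPm4 n 0 (Nat.zero_le n)
      have e : (1 - R) * Pm =
          ((f 0 : X →L[ℝ] X) * (1 - R) * ↑(f n)⁻¹) * ((f n : X →L[ℝ] X) * Pm * ↑(f 0)⁻¹) := by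
        simp [hf, mul_assoc]
      rw [e]
      refine (norm_mul_le _ _).trans
        ((mul_le_mul h1 h2 (norm_nonneg _) (by positivity)).trans_eq ?_)
      rw [← Real.exp_nat_mul, mul_mul_mul_comm, ← Real.exp_add]
      congr 2
      push_cast
      ring
    have hlim := (tendsto_pow_atTop_nhds_zero_of_lt_one (Real.exp_pos _).le
      (Real.exp_zero ▸ Real.exp_lt_exp.2
        (show -(γ - K₂ * ε) + (-γ + K₁ * ε) < 0 by nlinarith))).const_mul
        ((4 * (2 * C)) * (2 * (2 * C)))
    rw [mul_zero] at hlim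
    exact norm_le_zero_iff.1 (ge_of_tendsto' hlim hb)
  have hRPm : R * Pm = Pm := by
    rw [sub_mul, one_mul, sub_eq_zero] at hPpPm
    exact hPpPm.symm
  have hRR : R * R = R := by
    calc R * R = R * (1 - Qp) * R := by rw [hR1]
      _ = R * ((1 - Qp) * R) := mul_assoc _ _ _
      _ = R := by rw [hR2, hR1]
  refine ⟨1 - R, Pm, 64 * C ^ 2, γ - max K₁ K₂ * ε, γ₀ + max K₁ K₂ * ε, ?_, ?_, hPpPm, hPmPp,
    ?_, hPm3.trans hK1ε, by nlinarith, le_rfl, le_rfl, fun n m h => ?_, fun n m h => ?_,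
    fun n m => ?_⟩
  · change (1 - R) * (1 - R) = 1 - R
    rw [mul_sub, mul_one, sub_mul, one_mul, hRR]
    abel
  · change Pm * Pm = Pm
    calc Pm * Pm = Pm * Qm * Pm := by rw [hPm1]
      _ = Pm * (Qm * Pm) := mul_assoc _ _ _
      _ = Pm := by rw [hPm2, hPm1]
  · rw [show 1 - R - Qp = -(R - (1 - Qp)) by abel, norm_neg]
    exact hR3.trans hK2ε
  · have h' : (0 : ℝ) ≤ n - m := sub_nonneg.2 (Nat.cast_le.2 h)
    refine (hPm4 n m h).trans (mul_le_mul (by nlinarith) (Real.exp_le_exp.2 ?_)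
      (Real.exp_pos _).le (by positivity))
    exact mul_le_mul_of_nonneg_right (by linarith) h'
  · have h' : (0 : ℝ) ≤ n - m := sub_nonneg.2 (Nat.cast_le.2 h)
    refine (hR5 m n h).trans (mul_le_mul (by nlinarith) (Real.exp_le_exp.2 ?_)
      (Real.exp_pos _).le (by positivity))
    nlinarith
  · rcases le_total m n with h | h
    · have h' : (0 : ℝ) ≤ n - m := sub_nonneg.2 (Nat.cast_le.2 h)
      have h1 := hR4 n m h
      have h2 := hPm5 m m le_rfl
      rw [sub_self, mul_zero, Real.exp_zero, mul_one] at h2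
      have e : (f n : X →L[ℝ] X) * (1 - Pm - (1 - R)) * ↑(f m)⁻¹ =
          ((f n : X →L[ℝ] X) * R * ↑(f m)⁻¹) * ((f m : X →L[ℝ] X) * (1 - Pm) * ↑(f m)⁻¹) := by
        simp only [mul_assoc, Units.inv_mul_cancel_left]
        rw [← mul_assoc R, mul_sub R, mul_one, hRPm]
        congr 2
        abel
      change ‖(f n : X →L[ℝ] X) * (1 - Pm - (1 - R)) * ↑(f m)⁻¹‖ ≤ _
      rw [e, abs_of_nonneg h']
      refine (norm_mul_le _ _).trans ((mul_le_mul h1 h2 (norm_nonneg _) (by positivity)).trans ?_)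
      have h3 : Real.exp ((γ₀ + K₂ * ε) * ((n : ℝ) - m)) ≤
          Real.exp ((γ₀ + max K₁ K₂ * ε) * ((n : ℝ) - m)) :=
        Real.exp_le_exp.2 (mul_le_mul_of_nonneg_right (by linarith) h')
      have h4 := mul_le_mul_of_nonneg_left h3 (sq_nonneg C)
      nlinarith [Real.exp_pos ((γ₀ + max K₁ K₂ * ε) * ((n : ℝ) - m)), sq_nonneg C]
    · have h' : (0 : ℝ) ≤ m - n := sub_nonneg.2 (Nat.cast_le.2 h)
      have h1 := hPm5 n m h
      have h2 := hR4 m m le_rfl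
      rw [sub_self, mul_zero, Real.exp_zero, mul_one] at h2
      have e : (f n : X →L[ℝ] X) * (1 - Pm - (1 - R)) * ↑(f m)⁻¹ =
          ((f n : X →L[ℝ] X) * (1 - Pm) * ↑(f m)⁻¹) * ((f m : X →L[ℝ] X) * R * ↑(f m)⁻¹) := by
        simp only [mul_assoc, Units.inv_mul_cancel_left]
        rw [← mul_assoc (1 - Pm), sub_mul 1 Pm, one_mul, hPmR]
        congr 2
        abel
      change ‖(f n : X →L[ℝ] X) * (1 - Pm - (1 - R)) * ↑(f m)⁻¹‖ ≤ _
      rw [e, abs_of_nonpos (by linarith)]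
      refine (norm_mul_le _ _).trans ((mul_le_mul h1 h2 (norm_nonneg _) (by positivity)).trans ?_)
      have h3 : Real.exp ((-γ₀ - K₁ * ε) * ((n : ℝ) - m)) ≤
          Real.exp ((γ₀ + max K₁ K₂ * ε) * -((n : ℝ) - m)) :=
        Real.exp_le_exp.2 (by nlinarith)
      have h4 := mul_le_mul_of_nonneg_left h3 (sq_nonneg C)
      nlinarith [Real.exp_pos ((γ₀ + max K₁ K₂ * ε) * -((n : ℝ) - m)), sq_nonneg C]
end

section
/- Let X be a Banach space, C ≥ 1 and γ > 0. Let (𝒢ₙ)_{n≥0} be bounded invertible operators on X with 𝒢₀ = I, and let Q be a bounded projection on X satisfying ‖𝒢ₙ Q 𝒢ₘ⁻¹‖ ≤ C e^{−γ(n−m)} and ‖𝒢ₘ (I − Q) 𝒢ₙ⁻¹‖ ≤ C e^{−γ(n−m)} for all n ≥ m ≥ 0 (exponential dichotomy). Let (ℱₙ)_{n≥0} be bounded invertible operators with ℱ₀ = I and ‖ℱₙ ℱ_{n−1}⁻¹ − 𝒢ₙ 𝒢_{n−1}⁻¹‖ ≤ ε for all n ≥ 1. Then there exist ε₀ > 0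 and K ≥ 1 depending only on C and γ such that if ε ≤ ε₀, there exists a bounded projection P on X with ‖P − Q‖ ≤ K ε, satisfying P(I − Q) = Q(I − P) = 0 (so that the range of I − P equals the range of I − Q), and a constant C′ depending only on C, γ such that ‖ℱₙ P ℱₘ⁻¹‖ ≤ C′ e^{−(γ − Kε)(n−m)} and ‖ℱₘ (I − P) ℱₙ⁻¹‖ ≤ C′ e^{−(γ − Kε)(n−m)} for all n ≥ m ≥ 0. -/
/-!
Write `A n = G (n+1) (G n)⁻¹`, `B n = F (n+1) (F n)⁻¹` and `E n = B n - A n`, so `‖E n‖ ≤ ε`. The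
dichotomy of `G` says that its Green function `green n m` (equal to `G n Q (G m)⁻¹` for `m ≤ n` and
to `-G n (1 - Q) (G m)⁻¹` for `n < m`) is bounded by `C exp (-γ |n - m|)`. All arguments take place
in the Banach algebra of bounded operators, so they are stated in a complete normed ring `R`.

*Construction of `P`.* For small `ε` the equation `u n = G n Q + ∑ k, green n (k+1) E k (u k)` is a
contraction on bounded sequences (`exists_fixed`). Its solution satisfies `u (n+1) = B n (u n)`,
hence `u n = F n (u 0)`, and `Q (u 0) = Q` (`exists_bounded_orbit`). Put `P = u 0 Q`. Then
`P Q = P` and `Q P = Q`, which yields `P² = P` and the two kernel identities, and `F n P` is bounded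
in `n`.

*Decay.* For fixed `m`, the sequence `V n = F n P (F m)⁻¹ - [n < m] F n (F m)⁻¹` is bounded and
satisfies `V (n+1) = B n (V n) + [n + 1 = m]` and `Q (V 0) = [m = 0] Q`. A telescoping sum
(`green_identity`) rewrites this as `V n = green n m + ∑ k < N, green n (k+1) E k (V k)` up to a
remainder that vanishes as `N → ∞`. With `δ = γ - K ε`, the kernel `exp (-γ |n - (k+1)|)` maps
`exp (-δ |k - m|)` to at most a multiple of order `1 / (K ε)` of `exp (-δ |n - m|)`
(`kernel_bound`), and the factor `ε` of `E k` compensates, so a suitable `K` makes the sum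
contribute a factor `1/2`. Bootstrapping from the mere boundedness of `V` gives
`‖V n‖ ≤ 2 C exp (-δ |n - m|)` (`decay_bound`), which contains both dichotomy estimates (the second one on
the diagonal up to `‖1‖ ≤ 2 C`). The case
`m = n = 0` of the identity bounds `P - Q`.
-/

open Filter Topology Finset

namespace PerronDichotomy

/-! ### Exponential weights -/

/-- A two-sided geometric sum; the bound `(1 + γ) / η` for `1 / (1 - exp (-η))` comes from
`exp (-η) ≤ 1 / (1 + η)`. -/
lemma sum_exp_abs_le {γ η : ℝ} (hη : 0 < η) (hηγ : η ≤ γ) (n N : ℕ) :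
    ∑ k ∈ range N, Real.exp (-η * |(n : ℝ) - k|) ≤ 2 * (1 + γ) / η := by
  set r := Real.exp (-η) with hr
  have hr0 : 0 < r := Real.exp_pos _
  have hr1 : r < 1 := by rw [hr, Real.exp_lt_one_iff]; linarith
  have hpow : ∀ j : ℕ, Real.exp (-η * j) = r ^ j := fun j => by
    rw [hr, ← Real.exp_nat_mul, mul_comm]
  have hinv : (1 - r)⁻¹ ≤ (1 + γ) / η := by
    have h1 : r * (1 + η) ≤ 1 := by
      have := Real.add_one_le_exp η
      have h2 : r * Real.exp η = 1 := by rw [hr, ← Real.exp_add]; simp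
      nlinarith
    rw [inv_eq_one_div, div_le_div_iff₀ (by linarith) hη]
    nlinarith
  have hgeom : ∀ M : ℕ, ∑ j ∈ range M, r ^ j ≤ (1 - r)⁻¹ := fun M => by
    rw [← tsum_geometric_of_lt_one hr0.le hr1]
    exact (summable_geometric_of_lt_one hr0.le hr1).sum_le_tsum _ (fun i _ => by positivity)
  have h1 : ∑ k ∈ range N, Real.exp (-η * |(n : ℝ) - k|) ≤
      ∑ k ∈ range (n + N), Real.exp (-η * |(n : ℝ) - k|) :=
    sum_le_sum_of_subset_of_nonneg (range_mono (by omega)) (fun _ _ _ => (Real.exp_pos _).le)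
  have h2 : ∑ k ∈ range n, Real.exp (-η * |(n : ℝ) - k|) ≤ (1 - r)⁻¹ := by
    refine le_trans ?_ (hgeom n)
    rw [← sum_range_reflect (fun j => r ^ j) n]
    refine sum_le_sum fun k hk => ?_
    have hk' : k < n := mem_range.1 hk
    rw [← hpow]
    apply Real.exp_le_exp.2
    have : ((n - 1 - k : ℕ) : ℝ) ≤ |(n : ℝ) - k| := by
      refine le_trans ?_ (le_abs_self _)
      rw [Nat.sub_sub, Nat.cast_sub (by omega)]
      push_cast; linarith
    nlinarith
  have h3 : ∑ j ∈ range N, Real.exp (-η * |(n : ℝ) - ((n + j : ℕ) : ℝ)|) ≤ (1 - r)⁻¹ := by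
    refine le_trans (le_of_eq (sum_congr rfl fun j _ => ?_)) (hgeom N)
    rw [← hpow]; push_cast
    rw [show (n : ℝ) - (n + j) = -j by ring, abs_neg, abs_of_nonneg (Nat.cast_nonneg j)]
  rw [sum_range_add] at h1
  have : 2 * (1 + γ) / η = (1 + γ) / η + (1 + γ) / η := by ring
  linarith

lemma exp_shift_le {γ : ℝ} (hγ : 0 < γ) (n k : ℕ) :
    Real.exp (-γ * |(n : ℝ) - (k + 1 : ℕ)|) ≤ Real.exp γ * Real.exp (-γ * |(n : ℝ) - k|) := by
  rw [← Real.exp_add]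
  apply Real.exp_le_exp.2
  have : |(n : ℝ) - k| ≤ |(n : ℝ) - (k + 1 : ℕ)| + 1 := by
    have := abs_add_le ((n : ℝ) - (k + 1 : ℕ)) 1
    rw [abs_one] at this
    rwa [show (n : ℝ) - (k + 1 : ℕ) + 1 = n - k by push_cast; ring] at this
  nlinarith

/-- The kernel `C ε exp (-γ |n - (k+1)|)` acts as a contraction with factor `1/2` on sequences
bounded by the weight `exp (-δ |k - m|)`, as soon as `γ - δ` dominates a multiple of `ε`. -/
lemma kernel_bound {C γ δ ε : ℝ} (hC : 1 ≤ C) (hγ : 0 < γ) (hδ : 0 ≤ δ) (hε : 0 ≤ ε)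
    (h : 4 * C * Real.exp γ * (1 + γ) * ε ≤ γ - δ) (n m N : ℕ) :
    ∑ k ∈ range N, C * ε * Real.exp (-γ * |(n : ℝ) - (k + 1 : ℕ)|) *
        Real.exp (-δ * |(k : ℝ) - m|) ≤ 1 / 2 * Real.exp (-δ * |(n : ℝ) - m|) := by
  rcases hε.eq_or_lt with rfl | hε
  · simp; positivity
  have hη : 0 < γ - δ := lt_of_lt_of_le (by positivity) h
  have key : ∀ k ∈ range N, C * ε * Real.exp (-γ * |(n : ℝ) - (k + 1 : ℕ)|) *
      Real.exp (-δ * |(k : ℝ) - m|) ≤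
      C * ε * Real.exp γ * Real.exp (-δ * |(n : ℝ) - m|) *
        Real.exp (-(γ - δ) * |(n : ℝ) - k|) := fun k _ => by
    have h1 := exp_shift_le hγ n k
    have h2 : Real.exp (-γ * |(n : ℝ) - k|) * Real.exp (-δ * |(k : ℝ) - m|) ≤
        Real.exp (-δ * |(n : ℝ) - m|) * Real.exp (-(γ - δ) * |(n : ℝ) - k|) := by
      rw [← Real.exp_add, ← Real.exp_add]
      apply Real.exp_le_exp.2
      have := abs_sub_le (n : ℝ) k m
      nlinarith
    calc _ ≤ C * ε * (Real.exp γ * Real.exp (-γ * |(n : ℝ) - k|)) *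
          Real.exp (-δ * |(k : ℝ) - m|) := by gcongr
      _ = C * ε * Real.exp γ *
          (Real.exp (-γ * |(n : ℝ) - k|) * Real.exp (-δ * |(k : ℝ) - m|)) := by ring
      _ ≤ C * ε * Real.exp γ *
          (Real.exp (-δ * |(n : ℝ) - m|) * Real.exp (-(γ - δ) * |(n : ℝ) - k|)) := by gcongr
      _ = _ := by ring
  refine (sum_le_sum key).trans ?_
  rw [← mul_sum]
  have hs := sum_exp_abs_le hη (sub_le_self γ hδ) n N
  have h4 : C * ε * Real.exp γ * (2 * (1 + γ) / (γ - δ)) ≤ 1 / 2 := by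
    rw [← mul_div_assoc, div_le_iff₀ hη]
    nlinarith
  calc _ ≤ C * ε * Real.exp γ * Real.exp (-δ * |(n : ℝ) - m|) * (2 * (1 + γ) / (γ - δ)) := by
        gcongr
    _ = C * ε * Real.exp γ * (2 * (1 + γ) / (γ - δ)) * Real.exp (-δ * |(n : ℝ) - m|) := by ring
    _ ≤ _ := by gcongr

/-! ### Variation of constants and decay -/

variable {R : Type*} [NormedRing R]

/-- The Green function of a flow `g` (with inverses `g'`) and a projection `Q`. -/
def green (g g' : ℕ → R) (Q : R) (n m : ℕ) : R :=
  if m ≤ n then g n * Q * g' m else -(g n * (1 - Q) * g' m)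

/-- The difference between the one-step increments of the flows `f` and `g`; `f'` and `g'` are the
pointwise inverses. -/
def incr (g g' f f' : ℕ → R) (k : ℕ) : R := f (k + 1) * f' k - g (k + 1) * g' k

lemma norm_green_le {g g' : ℕ → R} {Q : R} {C γ : ℝ}
    (h1 : ∀ n m : ℕ, m ≤ n → ‖g n * Q * g' m‖ ≤ C * Real.exp (-γ * ((n : ℝ) - m)))
    (h2 : ∀ n m : ℕ, m ≤ n → ‖g m * (1 - Q) * g' n‖ ≤ C * Real.exp (-γ * ((n : ℝ) - m)))
    (n m : ℕ) : ‖green g g' Q n m‖ ≤ C * Real.exp (-γ * |(n : ℝ) - m|) := by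
  unfold green
  split_ifs with h
  · rw [abs_of_nonneg (by simpa using h)]
    exact h1 n m h
  · push Not at h
    rw [norm_neg, abs_sub_comm, abs_of_nonneg (by simpa using h.le)]
    exact h2 m n h.le

lemma green_succ {g g' : ℕ → R} {Q : R} (hg : ∀ n, g n * g' n = 1) (hg' : ∀ n, g' n * g n = 1)
    (n k : ℕ) : green g g' Q (n + 1) (k + 1) - g (n + 1) * g' n * green g g' Q n (k + 1) =
      if k = n then 1 else 0 := by
  have e : ∀ x y : R, g (n + 1) * g' n * (g n * x * y) = g (n + 1) * x * y := fun x y => by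
    have : g (n + 1) * g' n * (g n * x * y) = g (n + 1) * (g' n * g n) * x * y := by
      simp only [mul_assoc]
    rw [this, hg', mul_one]
  unfold green
  rcases lt_trichotomy k n with h | rfl | h
  · rw [if_pos (by omega), if_pos (by omega), if_neg (by omega), e, sub_self]
  · rw [if_pos le_rfl, if_neg (by omega), if_pos rfl, mul_neg, e, sub_neg_eq_add, ← add_mul, ← mul_add,
      add_sub_cancel, mul_one, hg]
  · rw [if_neg (by omega), if_neg (by omega), if_neg (by omega), mul_neg, e, sub_self]

/-- Variation of constants, truncated at time `N`: a telescoping sum of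
`g n (Q - [n < k]) (g k)⁻¹ (V k)`. -/
lemma green_identity {g g' f f' : ℕ → R} {Q : R} {V : ℕ → R} {m : ℕ}
    (hg : ∀ n, g n * g' n = 1) (hg' : ∀ n, g' n * g n = 1) (hg0 : g' 0 = 1)
    (hV : ∀ n, V (n + 1) = f (n + 1) * f' n * V n + if n + 1 = m then 1 else 0)
    (hV0 : Q * V 0 = if m = 0 then Q else 0) {n N : ℕ} (hn : n < N) (hm : m ≤ N) :
    V n = green g g' Q n m +
      ∑ k ∈ range N, green g g' Q n (k + 1) * incr g g' f f' k * V k +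
      g n * (1 - Q) * g' N * V N := by
  have key : ∀ N : ℕ, ∑ k ∈ range N, green g g' Q n (k + 1) * incr g g' f f' k * V k =
      g n * (Q - if n < N then 1 else 0) * g' N * V N - g n * Q * V 0 +
        (if n < N then V n else 0) - if 0 < m ∧ m ≤ N then green g g' Q n m else 0 := by
    intro N
    induction N with
    | zero =>
      rw [if_neg (show ¬ (0 < m ∧ m ≤ 0) by omega)]
      simp [hg0]
    | succ N ih =>
      rw [sum_range_succ, ih]
      have hE : incr g g' f f' N * V N =
          V (N + 1) - (if N + 1 = m then 1 else 0) - g (N + 1) * g' N * V N := by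
        rw [hV, incr]; noncomm_ring
      have hD : ∀ x : R, green g g' Q n (N + 1) * x =
          g n * (Q - if n < N + 1 then 1 else 0) * g' (N + 1) * x := fun x => by
        unfold green
        by_cases h : N + 1 ≤ n
        · rw [if_pos h, if_neg (by omega), sub_zero]
        · rw [if_neg h, if_pos (by omega)]; noncomm_ring
      have hA : ∀ x y : R, x * g' (N + 1) * (g (N + 1) * g' N * y) = x * g' N * y := fun x y => by
        have : x * g' (N + 1) * (g (N + 1) * g' N * y) =
            x * (g' (N + 1) * g (N + 1)) * g' N * y := by simp only [mul_assoc]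
        rw [this, hg', mul_one]
      have hJ : green g g' Q n (N + 1) * (if N + 1 = m then (1 : R) else 0) =
          (if 0 < m ∧ m ≤ N + 1 then green g g' Q n m else 0) -
            if 0 < m ∧ m ≤ N then green g g' Q n m else 0 := by
        by_cases h : N + 1 = m
        · subst h
          rw [if_pos rfl, if_pos (by omega), if_neg (by omega)]; simp
        · rw [if_neg h]
          by_cases h' : 0 < m ∧ m ≤ N
          · rw [if_pos h', if_pos (by omega)]; simp
          · rw [if_neg h', if_neg (by omega)]; simp
      have hI : g n * (Q - if n < N + 1 then 1 else 0) * g' N * V N =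
          g n * (Q - if n < N then 1 else 0) * g' N * V N +
            (if n < N then V n else 0) - if n < N + 1 then V n else 0 := by
        rcases lt_trichotomy n N with h | rfl | h
        · rw [if_pos (by omega), if_pos h, if_pos h, if_pos (by omega)]; abel
        · have : V n = g n * g' n * V n := by rw [hg, one_mul]
          rw [if_pos (by omega), if_neg (by omega), if_neg (by omega), if_pos (by omega)]
          nth_rewrite 3 [this]
          noncomm_ring
        · rw [if_neg (by omega), if_neg (by omega), if_neg (by omega), if_neg (by omega)]; abel
      rw [mul_assoc (green _ _ _ _ _), hE, mul_sub (green _ _ _ _ _), mul_sub (green _ _ _ _ _), hJ, hD, hD, hA, hI]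
      abel
  rw [key N, if_pos hn, if_pos hn, mul_assoc (g n) Q (V 0), hV0]
  rcases Nat.eq_zero_or_pos m with rfl | h
  · simp [green, hg0]
    noncomm_ring
  · rw [if_neg (by omega), if_pos ⟨h, hm⟩]
    noncomm_ring

/-- A bounded solution of the perturbed recursion with a unit impulse at time `m` decays
exponentially away from `m`. The bound `2 C exp (-δ |n - m|) + M / 2 ^ j` is improved in `j`. -/
lemma decay_bound {g g' f f' : ℕ → R} {Q : R} {V : ℕ → R} {m : ℕ} {C γ δ ε M : ℝ}
    (hC : 1 ≤ C) (hγ : 0 < γ) (hδ : 0 ≤ δ) (hδγ : δ ≤ γ) (hε : 0 ≤ ε)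
    (hker : 4 * C * Real.exp γ * (1 + γ) * ε ≤ γ - δ)
    (hg : ∀ n, g n * g' n = 1) (hg' : ∀ n, g' n * g n = 1) (hg0 : g' 0 = 1)
    (h1 : ∀ n m : ℕ, m ≤ n → ‖g n * Q * g' m‖ ≤ C * Real.exp (-γ * ((n : ℝ) - m)))
    (h2 : ∀ n m : ℕ, m ≤ n → ‖g m * (1 - Q) * g' n‖ ≤ C * Real.exp (-γ * ((n : ℝ) - m)))
    (hE : ∀ k, ‖incr g g' f f' k‖ ≤ ε)
    (hV : ∀ n, V (n + 1) = f (n + 1) * f' n * V n + if n + 1 = m then 1 else 0)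
    (hV0 : Q * V 0 = if m = 0 then Q else 0) (hM : ∀ n, ‖V n‖ ≤ M) (n : ℕ) :
    ‖V n‖ ≤ 2 * C * Real.exp (-δ * |(n : ℝ) - m|) := by
  have hM0 : 0 ≤ M := (norm_nonneg _).trans (hM 0)
  have hker0 : 4 * C * Real.exp γ * (1 + γ) * ε ≤ γ - 0 := by linarith
  have boot : ∀ j n : ℕ, ‖V n‖ ≤ 2 * C * Real.exp (-δ * |(n : ℝ) - m|) + M * (1 / 2) ^ j := by
    intro j
    induction j with
    | zero =>
      intro n
      have : 0 ≤ 2 * C * Real.exp (-δ * |(n : ℝ) - m|) := by positivity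
      have := hM n
      simp only [pow_zero, mul_one]; linarith
    | succ j ih =>
      intro n
      have lim : Tendsto (fun N : ℕ => 2 * C * Real.exp (-δ * |(n : ℝ) - m|) +
          M * (1 / 2) ^ (j + 1) + C * Real.exp (-γ * ((N : ℝ) - n)) * M) atTop
          (𝓝 (2 * C * Real.exp (-δ * |(n : ℝ) - m|) + M * (1 / 2) ^ (j + 1) + C * 0 * M)) := by
        refine tendsto_const_nhds.add ((Tendsto.const_mul C ?_).mul_const M)
        refine Real.tendsto_exp_atBot.comp ?_
        refine Tendsto.const_mul_atTop_of_neg (by linarith) ?_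
        exact tendsto_atTop_add_const_right _ _ tendsto_natCast_atTop_atTop
      rw [mul_zero, zero_mul, add_zero] at lim
      refine ge_of_tendsto lim ?_
      filter_upwards [eventually_ge_atTop (n + m + 1)] with N hN
      rw [green_identity hg hg' hg0 hV hV0 (show n < N by omega) (show m ≤ N by omega)]
      have a1 : ‖green g g' Q n m‖ ≤ C * Real.exp (-δ * |(n : ℝ) - m|) := by
        refine (norm_green_le h1 h2 n m).trans ?_
        gcongr
      have a3 : ‖g n * (1 - Q) * g' N * V N‖ ≤ C * Real.exp (-γ * ((N : ℝ) - n)) * M :=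
        (norm_mul_le _ _).trans (mul_le_mul (h2 N n (by omega)) (hM N) (norm_nonneg _)
          (by positivity))
      have a2 : ‖∑ k ∈ range N, green g g' Q n (k + 1) * incr g g' f f' k * V k‖ ≤
          C * Real.exp (-δ * |(n : ℝ) - m|) + M * (1 / 2) ^ (j + 1) := by
        calc _ ≤ ∑ k ∈ range N, ‖green g g' Q n (k + 1) * incr g g' f f' k * V k‖ :=
              norm_sum_le _ _
          _ ≤ ∑ k ∈ range N, (2 * C * (C * ε * Real.exp (-γ * |(n : ℝ) - (k + 1 : ℕ)|) *
                Real.exp (-δ * |(k : ℝ) - m|)) + M * (1 / 2) ^ j *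
                (C * ε * Real.exp (-γ * |(n : ℝ) - (k + 1 : ℕ)|) *
                  Real.exp (-0 * |(k : ℝ) - m|))) := by
              refine sum_le_sum fun k _ => ?_
              calc _ ≤ ‖green g g' Q n (k + 1)‖ * ‖incr g g' f f' k‖ * ‖V k‖ := norm_mul₃_le
                _ ≤ (C * Real.exp (-γ * |(n : ℝ) - (k + 1 : ℕ)|)) * ε *
                    (2 * C * Real.exp (-δ * |(k : ℝ) - m|) + M * (1 / 2) ^ j) := by
                    gcongr
                    · exact norm_green_le h1 h2 n (k + 1)
                    · exact hE k
                    · exact ih k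
                _ = _ := by simp only [neg_zero, zero_mul, Real.exp_zero]; ring
          _ ≤ 2 * C * (1 / 2 * Real.exp (-δ * |(n : ℝ) - m|)) +
                M * (1 / 2) ^ j * (1 / 2 * Real.exp (-0 * |(n : ℝ) - m|)) := by
              rw [sum_add_distrib, ← mul_sum, ← mul_sum]
              gcongr
              · exact kernel_bound hC hγ hδ hε hker n m N
              · exact kernel_bound hC hγ le_rfl hε hker0 n m N
          _ = _ := by simp only [neg_zero, zero_mul, Real.exp_zero]; ring
      have := norm_add₃_le (a := green g g' Q n m)
        (b := ∑ k ∈ range N, green g g' Q n (k + 1) * incr g g' f f' k * V k)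
        (c := g n * (1 - Q) * g' N * V N)
      linarith
  have lim : Tendsto (fun j : ℕ => 2 * C * Real.exp (-δ * |(n : ℝ) - m|) + M * (1 / 2) ^ j) atTop
      (𝓝 (2 * C * Real.exp (-δ * |(n : ℝ) - m|) + M * 0)) :=
    tendsto_const_nhds.add ((tendsto_pow_atTop_nhds_zero_of_lt_one (by norm_num)
      (by norm_num)).const_mul M)
  rw [mul_zero, add_zero] at lim
  exact ge_of_tendsto' lim fun j => boot j n

/-! ### Construction of the perturbed projection -/

open BoundedContinuousFunction in
/-- The contraction mapping step, on the Banach space of bounded sequences in `R`. -/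
lemma exists_fixed [CompleteSpace R] {W : ℕ → ℕ → R} {h : ℕ → R} {a : ℕ → ℕ → ℝ} {H : ℝ}
    (hW : ∀ n k, ‖W n k‖ ≤ a n k) (hs : ∀ n, Summable (a n)) (ha : ∀ n, ∑' k, a n k ≤ 1 / 2)
    (hh : ∀ n, ‖h n‖ ≤ H) :
    ∃ u : ℕ → R, (∃ M, ∀ n, ‖u n‖ ≤ M) ∧ ∀ n, HasSum (fun k => W n k * u k) (u n - h n) := by
  have hle : ∀ (v : ℕ → R) (M : ℝ), (∀ k, ‖v k‖ ≤ M) → ∀ n k, ‖W n k * v k‖ ≤ a n k * M :=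
    fun v M hv n k => (norm_mul_le _ _).trans
      (mul_le_mul (hW n k) (hv k) (norm_nonneg _) ((norm_nonneg _).trans (hW n k)))
  have hsum : ∀ (v : ℕ → R) (M : ℝ), (∀ k, ‖v k‖ ≤ M) → ∀ n, Summable fun k => W n k * v k :=
    fun v M hv n => Summable.of_norm_bounded ((hs n).mul_right M) (hle v M hv n)
  have hbd : ∀ (v : ℕ → R) (M : ℝ), (∀ k, ‖v k‖ ≤ M) → ∀ n, ‖∑' k, W n k * v k‖ ≤ 1 / 2 * M :=
    fun v M hv n => by
      refine (tsum_of_norm_bounded ((hs n).mul_right M).hasSum (hle v M hv n)).trans ?_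
      rw [tsum_mul_right]
      exact mul_le_mul_of_nonneg_right (ha n) ((norm_nonneg _).trans (hv 0))
  let Φ : (ℕ →ᵇ R) → (ℕ →ᵇ R) := fun u =>
    ofNormedAddCommGroupDiscrete (fun n => h n + ∑' k, W n k * u k) (H + 1 / 2 * ‖u‖)
      (fun n => (norm_add_le _ _).trans (add_le_add (hh n) (hbd u ‖u‖ u.norm_coe_le_norm n)))
  have hΦ : ∀ u n, Φ u n = h n + ∑' k, W n k * u k := fun u n => rfl
  have hc : ContractingWith (1 / 2) Φ := by
    refine ⟨by rw [← NNReal.coe_lt_coe]; norm_num, LipschitzWith.of_dist_le_mul fun u v => ?_⟩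
    rw [dist_eq_norm, dist_eq_norm, norm_le (by positivity)]
    intro n
    have := hbd (u - v) ‖u - v‖ (u - v).norm_coe_le_norm n
    rw [BoundedContinuousFunction.sub_apply, hΦ, hΦ, add_sub_add_left_eq_sub,
      ← (hsum u ‖u‖ u.norm_coe_le_norm n).tsum_sub (hsum v ‖v‖ v.norm_coe_le_norm n)]
    simpa [mul_sub] using this
  have : Nonempty (ℕ →ᵇ R) := ⟨0⟩
  let u := hc.fixedPoint Φ
  have hu : Φ u = u := hc.fixedPoint_isFixedPt
  refine ⟨u, ⟨‖u‖, u.norm_coe_le_norm⟩, fun n => ?_⟩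
  have e : u n - h n = ∑' k, W n k * u k := by
    have := hΦ u n
    rw [hu] at this
    rw [this]; abel
  rw [e]
  exact (hsum u ‖u‖ u.norm_coe_le_norm n).hasSum

/-- The stable subspace of the perturbed flow, given as the range of `u₀`: the solution of the
fixed point equation is the orbit `f n * u₀`. -/
lemma exists_bounded_orbit [CompleteSpace R] {g g' f f' : ℕ → R} {Q : R} {C γ ε : ℝ}
    (hC : 1 ≤ C) (hγ : 0 < γ) (hε : 0 ≤ ε)
    (hker : 4 * C * Real.exp γ * (1 + γ) * ε ≤ γ)
    (hg : ∀ n, g n * g' n = 1) (hg' : ∀ n, g' n * g n = 1) (hg0 : g 0 = 1) (hg0' : g' 0 = 1)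
    (hf' : ∀ n, f' n * f n = 1) (hf0 : f 0 = 1) (hQ : Q * Q = Q)
    (h1 : ∀ n m : ℕ, m ≤ n → ‖g n * Q * g' m‖ ≤ C * Real.exp (-γ * ((n : ℝ) - m)))
    (h2 : ∀ n m : ℕ, m ≤ n → ‖g m * (1 - Q) * g' n‖ ≤ C * Real.exp (-γ * ((n : ℝ) - m)))
    (hE : ∀ k, ‖incr g g' f f' k‖ ≤ ε) :
    ∃ u₀ : R, Q * u₀ = Q ∧ ∃ M, ∀ n, ‖f n * u₀‖ ≤ M := by
  have hpart : ∀ n N : ℕ, ∑ k ∈ range N, C * ε * Real.exp (-γ * |(n : ℝ) - (k + 1 : ℕ)|) ≤ 1 / 2 :=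
    fun n N => by
      simpa using kernel_bound hC hγ le_rfl hε (by linarith : _ ≤ γ - 0) n n N
  have hnn : ∀ n k : ℕ, 0 ≤ C * ε * Real.exp (-γ * |(n : ℝ) - (k + 1 : ℕ)|) :=
    fun n k => by positivity
  obtain ⟨u, ⟨M, hM⟩, hu⟩ := exists_fixed
    (W := fun n k => green g g' Q n (k + 1) * incr g g' f f' k) (h := fun n => g n * Q)
    (a := fun n k => C * ε * Real.exp (-γ * |(n : ℝ) - (k + 1 : ℕ)|)) (H := C)
    (fun n k => by
      refine (norm_mul_le _ _).trans ((mul_le_mul (norm_green_le h1 h2 n (k + 1)) (hE k)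
        (norm_nonneg _) (by positivity)).trans (le_of_eq (by ring))))
    (fun n => summable_of_sum_range_le (hnn n) (hpart n))
    (fun n => Real.tsum_le_of_sum_range_le (hnn n) (hpart n))
    (fun n => by
      have := h1 n 0 (Nat.zero_le n)
      rw [hg0', mul_one] at this
      refine this.trans (mul_le_of_le_one_right (by linarith) ?_)
      rw [Real.exp_le_one_iff]
      have : (0 : ℝ) ≤ n := Nat.cast_nonneg n
      simp only [Nat.cast_zero, sub_zero]
      nlinarith)
  have hrec : ∀ n, u (n + 1) = f (n + 1) * f' n * u n := fun n => by
    have hd := (hu (n + 1)).sub ((hu n).mul_left (g (n + 1) * g' n))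
    have e : (fun k => green g g' Q (n + 1) (k + 1) * incr g g' f f' k * u k -
        g (n + 1) * g' n * (green g g' Q n (k + 1) * incr g g' f f' k * u k)) =
        fun k => if k = n then incr g g' f f' n * u n else 0 := by
      funext k
      have : green g g' Q (n + 1) (k + 1) * incr g g' f f' k * u k -
          g (n + 1) * g' n * (green g g' Q n (k + 1) * incr g g' f f' k * u k) =
          (green g g' Q (n + 1) (k + 1) - g (n + 1) * g' n * green g g' Q n (k + 1)) *
            (incr g g' f f' k * u k) := by noncomm_ring
      rw [this, green_succ hg hg']
      split_ifs with h
      · rw [h, one_mul]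
      · rw [zero_mul]
    rw [e] at hd
    have := hd.unique (hasSum_ite_eq n (incr g g' f f' n * u n))
    have hgq : g (n + 1) * g' n * (g n * Q) = g (n + 1) * Q := by
      rw [mul_assoc, ← mul_assoc (g' n), hg', one_mul]
    rw [mul_sub, hgq, incr, sub_mul] at this
    have h3 : u (n + 1) = (u (n + 1) - g (n + 1) * Q - (g (n + 1) * g' n * u n - g (n + 1) * Q)) +
        g (n + 1) * g' n * u n := by abel
    rw [h3, this]; abel
  have horb : ∀ n, u n = f n * u 0 := fun n => by
    induction n with
    | zero => rw [hf0, one_mul]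
    | succ n ih => rw [hrec, ih, mul_assoc, ← mul_assoc (f' n), hf', one_mul]
  refine ⟨u 0, ?_, M, fun n => horb n ▸ hM n⟩
  have hQ0 := (hu 0).mul_left Q
  have e : (fun k => Q * (green g g' Q 0 (k + 1) * incr g g' f f' k * u k)) = fun _ => 0 := by
    funext k
    have : Q * (1 - Q) = 0 := by rw [mul_sub, mul_one, hQ, sub_self]
    rw [green, if_neg (by omega), hg0, one_mul, ← mul_assoc, ← mul_assoc, mul_neg, ← mul_assoc,
      this]
    simp
  rw [e] at hQ0
  have := hQ0.unique hasSum_zero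
  rw [hg0, one_mul, mul_sub, hQ, sub_eq_zero] at this
  exact this

/-- The perturbation theorem in a Banach algebra. The last two estimates come from applying
`decay_bound` to the Green function of `f` built from the candidate projection `P`. -/
lemma ring_version [CompleteSpace R] {g g' f f' : ℕ → R} {Q : R} {C γ ε K : ℝ}
    (hC : 1 ≤ C) (hγ : 0 < γ) (hε : 0 ≤ ε)
    (hK1 : 4 * C * Real.exp γ * (1 + γ) ≤ K) (hK2 : 4 * C ^ 2 * Real.exp γ * (1 + γ) / γ ≤ K)
    (hKε : K * ε ≤ γ)
    (hg : ∀ n, g n * g' n = 1) (hg' : ∀ n, g' n * g n = 1) (hg0 : g 0 = 1) (hg0' : g' 0 = 1)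
    (hf : ∀ n, f n * f' n = 1) (hf' : ∀ n, f' n * f n = 1) (hf0 : f 0 = 1) (hf0' : f' 0 = 1)
    (hQ : Q * Q = Q)
    (h1 : ∀ n m : ℕ, m ≤ n → ‖g n * Q * g' m‖ ≤ C * Real.exp (-γ * ((n : ℝ) - m)))
    (h2 : ∀ n m : ℕ, m ≤ n → ‖g m * (1 - Q) * g' n‖ ≤ C * Real.exp (-γ * ((n : ℝ) - m)))
    (hE : ∀ k, ‖incr g g' f f' k‖ ≤ ε) :
    ∃ P : R, P * P = P ∧ ‖P - Q‖ ≤ K * ε ∧ P * (1 - Q) = 0 ∧ Q * (1 - P) = 0 ∧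
      (∀ n m : ℕ, m ≤ n →
        ‖f n * P * f' m‖ ≤ 4 * C * Real.exp (-(γ - K * ε) * ((n : ℝ) - m))) ∧
      (∀ n m : ℕ, m ≤ n →
        ‖f m * (1 - P) * f' n‖ ≤ 4 * C * Real.exp (-(γ - K * ε) * ((n : ℝ) - m))) := by
  have hker : 4 * C * Real.exp γ * (1 + γ) * ε ≤ K * ε := mul_le_mul_of_nonneg_right hK1 hε
  have hC' : ∀ x : ℝ, 2 * C * Real.exp x ≤ 4 * C * Real.exp x := fun x => by
    gcongr
    norm_num
  have hKε0 : 0 ≤ K * ε := le_trans (by positivity) hker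
  obtain ⟨u₀, hu₀, M, hM⟩ := exists_bounded_orbit hC hγ hε (hker.trans hKε) hg hg' hg0 hg0' hf' hf0
    hQ h1 h2 hE
  obtain ⟨P, hPdef⟩ : ∃ P, P = u₀ * Q := ⟨_, rfl⟩
  have hPQ : P * Q = P := by rw [hPdef, mul_assoc, hQ]
  have hQP : Q * P = Q := by rw [hPdef, ← mul_assoc, hu₀, hQ]
  have hPb : ∀ n, ‖f n * P‖ ≤ M * ‖Q‖ := fun n => by
    rw [hPdef, ← mul_assoc]
    exact (norm_mul_le _ _).trans (mul_le_mul_of_nonneg_right (hM n) (norm_nonneg _))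
  -- `V m` is the prospective Green function of `f`, with pole at time `m`.
  let V : ℕ → ℕ → R := fun m n => f n * P * f' m - if n < m then f n * f' m else 0
  have hstep : ∀ m n, V m (n + 1) = f (n + 1) * f' n * V m n + if n + 1 = m then 1 else 0 := by
    intro m n
    have e : ∀ x : R, f (n + 1) * f' n * (f n * x) = f (n + 1) * x := fun x => by
      rw [mul_assoc, ← mul_assoc (f' n), hf', one_mul]
    simp only [V]
    rw [mul_sub, mul_assoc (f n), e, ← mul_assoc]
    rcases lt_trichotomy (n + 1) m with h | rfl | h
    · rw [if_pos h, if_pos (by omega), if_neg (by omega), e, add_zero]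
    · rw [if_neg (by omega), if_pos (by omega), if_pos rfl, e, hf]; abel
    · rw [if_neg (by omega), if_neg (by omega), if_neg (by omega)]; simp
  have hinit : ∀ m, Q * V m 0 = if m = 0 then Q else 0 := by
    intro m
    simp only [V]
    rcases Nat.eq_zero_or_pos m with rfl | h
    · simp [hf0, hf0', hQP]
    · rw [if_pos h, if_neg (by omega), hf0, one_mul, one_mul, mul_sub, ← mul_assoc, hQP, sub_self]
  have hbdd : ∀ m n, ‖V m n‖ ≤ M * ‖Q‖ * ‖f' m‖ + ∑ k ∈ range m, ‖f k * f' m‖ := by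
    intro m n
    refine (norm_sub_le _ _).trans (add_le_add ?_ ?_)
    · exact (norm_mul_le _ _).trans (mul_le_mul_of_nonneg_right (hPb n) (norm_nonneg _))
    · split_ifs with h
      · exact single_le_sum (f := fun k => ‖f k * f' m‖) (fun _ _ => norm_nonneg _)
          (mem_range.2 h)
      · rw [norm_zero]; exact sum_nonneg fun _ _ => norm_nonneg _
  have hdecay : ∀ m n : ℕ, ‖V m n‖ ≤ 2 * C * Real.exp (-(γ - K * ε) * |(n : ℝ) - m|) :=
    fun m n => decay_bound hC hγ (by linarith) (by linarith) hε (by linarith) hg hg' hg0' h1 h2 hE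
      (hstep m) (hinit m) (hbdd m) n
  refine ⟨P, ?_, ?_, ?_, ?_, ?_, ?_⟩
  · calc P * P = P * Q * P := by rw [hPQ]
      _ = P := by rw [mul_assoc, hQP, hPQ]
  · -- The identity for `m = n = 0` reads `P - Q = ∑ k < N, green 0 (k+1) E k (V 0 k)`, up to a
    -- remainder tending to `0`.
    have hV2 : ∀ k, ‖V 0 k‖ ≤ 2 * C := fun k => by
      refine (hdecay 0 k).trans (mul_le_of_le_one_right (by linarith) ?_)
      rw [Real.exp_le_one_iff]
      have := abs_nonneg ((k : ℝ) - (0 : ℕ))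
      nlinarith
    have lim : Tendsto (fun N : ℕ => K * ε + C * Real.exp (-γ * ((N : ℝ) - (0 : ℕ))) * (2 * C))
        atTop (𝓝 (K * ε + C * 0 * (2 * C))) := by
      refine tendsto_const_nhds.add ((Tendsto.const_mul C ?_).mul_const _)
      refine Real.tendsto_exp_atBot.comp ?_
      refine Tendsto.const_mul_atTop_of_neg (by linarith) ?_
      exact tendsto_atTop_add_const_right _ _ tendsto_natCast_atTop_atTop
    rw [mul_zero, zero_mul, add_zero] at lim
    refine ge_of_tendsto lim ?_
    filter_upwards [eventually_ge_atTop 1] with N hN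
    have id := green_identity hg hg' hg0' (hstep 0) (hinit 0) (show 0 < N by omega) (Nat.zero_le N)
    have eV : V 0 0 = P := by simp [V, hf0, hf0']
    have eG : green g g' Q 0 0 = Q := by simp [green, hg0, hg0']
    rw [eV, eG] at id
    have e : P - Q = ∑ k ∈ range N, green g g' Q 0 (k + 1) * incr g g' f f' k * V 0 k +
        g 0 * (1 - Q) * g' N * V 0 N := by
      rw [sub_eq_iff_eq_add']
      exact id.trans (add_assoc _ _ _)
    rw [e]
    refine (norm_add_le _ _).trans (add_le_add ?_ ?_)
    · calc _ ≤ ∑ k ∈ range N, ‖green g g' Q 0 (k + 1) * incr g g' f f' k * V 0 k‖ :=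
            norm_sum_le _ _
        _ ≤ ∑ k ∈ range N, 2 * C ^ 2 * ε * Real.exp γ *
              Real.exp (-γ * |((0 : ℕ) : ℝ) - k|) := by
            refine sum_le_sum fun k _ => ?_
            calc _ ≤ ‖green g g' Q 0 (k + 1)‖ * ‖incr g g' f f' k‖ * ‖V 0 k‖ := norm_mul₃_le
              _ ≤ (C * (Real.exp γ * Real.exp (-γ * |((0 : ℕ) : ℝ) - k|))) * ε * (2 * C) := by
                  gcongr
                  · refine (norm_green_le h1 h2 0 (k + 1)).trans ?_
                    have := exp_shift_le hγ 0 k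
                    gcongr
                  · exact hE k
                  · exact hV2 k
              _ = _ := by ring
        _ ≤ 2 * C ^ 2 * ε * Real.exp γ * (2 * (1 + γ) / γ) := by
            rw [← mul_sum]
            have := sum_exp_abs_le hγ le_rfl 0 N
            gcongr
        _ = 4 * C ^ 2 * Real.exp γ * (1 + γ) / γ * ε := by ring
        _ ≤ K * ε := by gcongr
    · exact (norm_mul_le _ _).trans (mul_le_mul (h2 N 0 (Nat.zero_le N)) (hV2 N) (norm_nonneg _)
        (by positivity))
  · rw [mul_sub, mul_one, hPQ, sub_self]
  · rw [mul_sub, mul_one, hQP, sub_self]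
  · intro n m hnm
    have := hdecay m n
    rw [abs_of_nonneg (by simpa using hnm)] at this
    exact le_trans (by simpa [V, not_lt.2 hnm] using this) (hC' _)
  · intro n m hnm
    rcases hnm.eq_or_lt with rfl | hlt
    · -- On the diagonal `V` only controls `P`, and `1 = Q + (1 - Q)` has norm at most `2 C`.
      have hd := hdecay m m
      have e : f m * (1 - P) * f' m = Q + (1 - Q) - V m m := by
        simp only [V]
        rw [if_neg (lt_irrefl m), mul_sub, mul_one, sub_mul, hf]
        abel
      have q1 := h1 0 0 le_rfl
      have q2 := h2 0 0 le_rfl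
      rw [hg0, hg0', one_mul, mul_one] at q1 q2
      rw [e]
      have n1 := norm_sub_le (Q + (1 - Q)) (V m m)
      have n2 := norm_add_le Q (1 - Q)
      simp only [sub_self, abs_zero, mul_zero, Real.exp_zero, mul_one] at hd q1 q2 ⊢
      linarith
    · have := hdecay n m
      rw [abs_sub_comm, abs_of_nonneg (by simpa using hnm)] at this
      have e : V n m = -(f m * (1 - P) * f' n) := by
        simp only [V]
        rw [if_pos hlt]; noncomm_ring
      rw [e, norm_neg] at this
      exact this.trans (hC' _)

end PerronDichotomy


/-- **Perron-type exponential dichotomy perturbation theorem (single projection form).**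
If the discrete flow `G` on a Banach space `X` admits an exponential dichotomy with
projection `Q` and rate `γ`, then any flow `F` whose one-step increments are `ε`-close
to those of `G` (for `ε` small depending only on `C, γ`) admits an exponential dichotomy
with a projection `P` satisfying `‖P − Q‖ ≤ Kε`, `P(I−Q) = Q(I−P) = 0`, and rate `γ − Kε`. -/
theorem perron_exponential_dichotomy_perturbation
    (C γ : ℝ) (hC : 1 ≤ C) (hγ : 0 < γ) :
    ∃ ε₀ K C' : ℝ, 0 < ε₀ ∧ 1 ≤ K ∧ 0 < C' ∧
      ∀ (X : Type) [NormedAddCommGroup X] [NormedSpace ℝ X] [CompleteSpace X]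
        (G F : ℕ → X ≃L[ℝ] X) (Q : X →L[ℝ] X) (ε : ℝ),
        G 0 = ContinuousLinearEquiv.refl ℝ X →
        F 0 = ContinuousLinearEquiv.refl ℝ X →
        Q ∘L Q = Q →
        (∀ n m : ℕ, m ≤ n →
          ‖(G n : X →L[ℝ] X) ∘L Q ∘L ((G m).symm : X →L[ℝ] X)‖ ≤
            C * Real.exp (-γ * ((n : ℝ) - (m : ℝ)))) →
        (∀ n m : ℕ, m ≤ n →
          ‖(G m : X →L[ℝ] X) ∘L (1 - Q) ∘L ((G n).symm : X →L[ℝ] X)‖ ≤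
            C * Real.exp (-γ * ((n : ℝ) - (m : ℝ)))) →
        (∀ n : ℕ, 1 ≤ n →
          ‖(F n : X →L[ℝ] X) ∘L ((F (n - 1)).symm : X →L[ℝ] X) -
              (G n : X →L[ℝ] X) ∘L ((G (n - 1)).symm : X →L[ℝ] X)‖ ≤ ε) →
        ε ≤ ε₀ →
        ∃ P : X →L[ℝ] X,
          P ∘L P = P ∧
          ‖P - Q‖ ≤ K * ε ∧
          P ∘L (1 - Q) = 0 ∧ Q ∘L (1 - P) = 0 ∧
          (∀ n m : ℕ, m ≤ n →
            ‖(F n : X →L[ℝ] X) ∘L P ∘L ((F m).symm : X →L[ℝ] X)‖ ≤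
              C' * Real.exp (-(γ - K * ε) * ((n : ℝ) - (m : ℝ)))) ∧
          (∀ n m : ℕ, m ≤ n →
            ‖(F m : X →L[ℝ] X) ∘L (1 - P) ∘L ((F n).symm : X →L[ℝ] X)‖ ≤
              C' * Real.exp (-(γ - K * ε) * ((n : ℝ) - (m : ℝ)))) := by
  obtain ⟨K, hK1, hK2⟩ : ∃ K, 4 * C * Real.exp γ * (1 + γ) ≤ K ∧
      4 * C ^ 2 * Real.exp γ * (1 + γ) / γ ≤ K :=
    ⟨_, le_max_left _ _, le_max_right _ _⟩
  have hexp : 1 ≤ Real.exp γ := Real.one_le_exp hγ.le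
  have hK : 1 ≤ K := by
    refine le_trans ?_ hK1
    have a1 : 1 ≤ C * Real.exp γ := one_le_mul_of_one_le_of_one_le hC hexp
    nlinarith
  have hK0 : 0 < K := by linarith
  refine ⟨γ / K, K, 4 * C, by positivity, hK, by linarith, ?_⟩
  intro X _ _ _ G F Q ε hG0 hF0 hQ h1 h2 hE hε
  have hε0 : 0 ≤ ε := (norm_nonneg _).trans (hE 1 le_rfl)
  have inv1 : ∀ T : X ≃L[ℝ] X, (T : X →L[ℝ] X) * (T.symm : X →L[ℝ] X) = 1 := fun T => by
    ext x; simp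
  have inv2 : ∀ T : X ≃L[ℝ] X, (T.symm : X →L[ℝ] X) * (T : X →L[ℝ] X) = 1 := fun T => by
    ext x; simp
  have := PerronDichotomy.ring_version (R := X →L[ℝ] X) (g := fun n => (G n : X →L[ℝ] X))
    (g' := fun n => ((G n).symm : X →L[ℝ] X)) (f := fun n => (F n : X →L[ℝ] X))
    (f' := fun n => ((F n).symm : X →L[ℝ] X)) (Q := Q) hC hγ hε0 hK1 hK2
    (by rwa [le_div_iff₀' hK0] at hε) (fun n => inv1 _) (fun n => inv2 _)
    (by simp only [hG0]; rfl) (by simp only [hG0]; rfl) (fun n => inv1 _) (fun n => inv2 _)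
    (by simp only [hF0]; rfl) (by simp only [hF0]; rfl) hQ
    (fun n m h => by rw [mul_assoc]; exact h1 n m h)
    (fun n m h => by rw [mul_assoc]; exact h2 n m h)
    (fun k => hE (k + 1) (by omega))
  obtain ⟨P, p1, p2, p3, p4, p5, p6⟩ := this
  exact ⟨P, p1, p2, p3, p4, fun n m h => by have := p5 n m h; rwa [mul_assoc] at this,
    fun n m h => by have := p6 n m h; rwa [mul_assoc] at this⟩
end

section
/- Let g^{jk} be smooth real symmetric and uniformly elliptic on ℝ³: λ|ξ|² ≤ g^{jk}(x)ξ_jξ_k ≤ Λ|ξ|² with 0 < λ ≤ Λ, let A₁, A₂, A₃ be smooth real-valued with |A_j(x)| ≤ M/|x|, and let W be a smooth real-valued function with W ≥ 0. Define, with D_j = (1/i)∂_j, the magnetic Schrödinger-type operator P₀u = (D_j + A_j) g^{jk} (D_k + A_k)u + W u. Then there is a constant K₀ depending only on λ, Λ, M such that for all u ∈ C_c^∞(ℝ³, ℂ): ‖∇u‖_{L²(ℝ³)} ≤ K₀ ‖P₀ u‖_{Ḣ⁻¹}. -/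
/-!
Pairing `P₀u` with `u` and integrating by parts gives
`Re ∫ P₀u conj u = ∫ g^{jk} (D_k + A_k)u conj ((D_j + A_j)u) + W |u|² ≥ λ ‖(D + A)u‖²`
(`coercive`), while the left side is at most `‖P₀u‖_{Ḣ⁻¹} ‖∇u‖` (`norm_integral_le_negSob`).
It remains to bound `‖∇u‖` by `‖(D + A)u‖`, that is, to absorb `A u`, without smallness of `M`.

This follows from Hardy's inequality for the covariant gradient (`hardy`). Since `A` is real,
`∂_j |u|² = 2 Re (conj u · i (D_j + A_j)u)`: the potential drops out. The field
`x / (|x|² + ε)` has divergence at least `1 / (|x|² + ε)`, so integration by parts and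
`2ab ≤ a² / 2 + 2b²` give `∫ |u|² / (|x|² + ε) ≤ 4 ‖(D + A)u‖²`. As `A` is bounded on the support of
`u`, a small `ε > 0` gives `|A|² ≤ (3M² + 1) / (|x|² + ε)` there, and no limit `ε → 0` is needed.

The case `A = 0`, `ε = 1` of the same inequality shows that the supremum defining `‖P₀u‖_{Ḣ⁻¹}` is
finite (`bddAbove_negSob`), which is needed because an unbounded real supremum has the value `0`.
-/

open MeasureTheory

noncomputable section

/-- Euclidean space `ℝ³`. -/
abbrev E3 := EuclideanSpace ℝ (Fin 3)

/-- The partial derivative `∂ⱼ u` of a complex-valued function on `ℝ³`. -/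
def pd (j : Fin 3) (u : E3 → ℂ) : E3 → ℂ :=
  fun x => fderiv ℝ u x (EuclideanSpace.single j 1)

/-- The covariant derivative `(D_j + A_j) u` where `D_j = (1/i) ∂_j`. -/
def DA (A : Fin 3 → E3 → ℝ) (j : Fin 3) (u : E3 → ℂ) : E3 → ℂ :=
  fun x => -Complex.I * pd j u x + (A j x : ℂ) * u x

/-- The homogeneous `Ḣ¹` (Dirichlet) norm `‖∇u‖_{L²(ℝ³)}`. -/
def gradL2 (u : E3 → ℂ) : ℝ :=
  Real.sqrt (∫ x : E3, ∑ j, ‖pd j u x‖ ^ 2)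

/-- The homogeneous negative Sobolev norm
`‖f‖_{Ḣ⁻¹} = sup { |∫ f conj v| : v ∈ C_c^∞, ‖∇v‖_{L²} ≤ 1 }`. -/
def negSob (f : E3 → ℂ) : ℝ :=
  sSup {r : ℝ | ∃ v : E3 → ℂ, ContDiff ℝ (⊤ : ℕ∞) v ∧ HasCompactSupport v ∧
    gradL2 v ≤ 1 ∧ r = ‖∫ x : E3, f x * (starRingEnd ℂ) (v x)‖}

/-- The magnetic Schrödinger-type operator `P₀u = (D_j + A_j) g^{jk} (D_k + A_k)u + W u`. -/
def P0mag (g : Fin 3 → Fin 3 → E3 → ℝ) (A : Fin 3 → E3 → ℝ) (W : E3 → ℝ)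
    (u : E3 → ℂ) : E3 → ℂ :=
  fun x =>
    (∑ j, DA A j (fun y => ∑ k, (g j k y : ℂ) * DA A k u y) x) + (W x : ℂ) * u x

/-! ### Smoothness, supports and integration by parts -/

/-- Partial derivatives of smooth functions are smooth. -/
lemma contDiff_pd {u : E3 → ℂ} (hu : ContDiff ℝ (⊤ : ℕ∞) u) (j : Fin 3) :
    ContDiff ℝ (⊤ : ℕ∞) (pd j u) := by
  have h : ContDiff ℝ (⊤ : ℕ∞) (fderiv ℝ u) := hu.fderiv_right (by norm_cast)
  exact h.clm_apply contDiff_const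

lemma hasCompactSupport_pd {u : E3 → ℂ} (hs : HasCompactSupport u) (j : Fin 3) :
    HasCompactSupport (pd j u) :=
  hs.fderiv_apply (𝕜 := ℝ) (EuclideanSpace.single j 1)

lemma contDiff_ofReal_comp {f : E3 → ℝ} (hf : ContDiff ℝ (⊤ : ℕ∞) f) :
    ContDiff ℝ (⊤ : ℕ∞) (fun x => (f x : ℂ)) :=
  Complex.ofRealCLM.contDiff.comp hf

lemma contDiff_DA {A : Fin 3 → E3 → ℝ} (hA : ∀ j, ContDiff ℝ (⊤ : ℕ∞) (A j)) {u : E3 → ℂ}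
    (hu : ContDiff ℝ (⊤ : ℕ∞) u) (j : Fin 3) : ContDiff ℝ (⊤ : ℕ∞) (DA A j u) :=
  (contDiff_const.mul (contDiff_pd hu j)).add ((contDiff_ofReal_comp (hA j)).mul hu)

lemma hasCompactSupport_DA (A : Fin 3 → E3 → ℝ) {u : E3 → ℂ}
    (hs : HasCompactSupport u) (j : Fin 3) : HasCompactSupport (DA A j u) :=
  ((hasCompactSupport_pd hs j).mul_left (f := fun _ => -Complex.I)).add
    (hs.mul_left (f := fun x => (A j x : ℂ)))

lemma hasCompactSupport_sum {ι E : Type*} [NormedAddCommGroup E] (s : Finset ι)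
    {f : ι → E3 → E} (h : ∀ i ∈ s, HasCompactSupport (f i)) :
    HasCompactSupport (fun x => ∑ i ∈ s, f i x) := by
  classical
  induction s using Finset.induction_on with
  | empty => exact HasCompactSupport.zero (α := E3) (β := E)
  | insert a s ha ih =>
    simp only [Finset.sum_insert ha]
    exact (h a (Finset.mem_insert_self a s)).add
      (ih fun i hi => h i (Finset.mem_insert_of_mem hi))

/-- The components `D_j + A_j` are formally self-adjoint. -/
lemma integral_DA_mul_conj {A : Fin 3 → E3 → ℝ} (hA : ∀ j, ContDiff ℝ (⊤ : ℕ∞) (A j))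
    {w u : E3 → ℂ} (hw : ContDiff ℝ (⊤ : ℕ∞) w) (hws : HasCompactSupport w)
    (hu : ContDiff ℝ (⊤ : ℕ∞) u) (j : Fin 3) :
    ∫ x, DA A j w x * (starRingEnd ℂ) (u x) = ∫ x, w x * (starRingEnd ℂ) (DA A j u x) := by
  have huc : ContDiff ℝ (⊤ : ℕ∞) (fun x => (starRingEnd ℂ) (u x)) :=
    Complex.conjCLE.contDiff.comp hu
  have hd : ∀ x, fderiv ℝ (fun x => (starRingEnd ℂ) (u x)) x (EuclideanSpace.single j 1)
      = (starRingEnd ℂ) (pd j u x) := by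
    intro x
    have h1 := (hu.differentiable (by simp) x).hasFDerivAt
    have h2 := (Complex.conjCLE.toContinuousLinearMap.hasFDerivAt (x := u x)).comp x h1
    have h3 : fderiv ℝ (fun x => (starRingEnd ℂ) (u x)) x = _ := h2.fderiv
    rw [h3]
    rfl
  have hI1 : Integrable (fun x => fderiv ℝ w x (EuclideanSpace.single j 1) *
      (starRingEnd ℂ) (u x)) :=
    ((contDiff_pd hw j).continuous.mul huc.continuous).integrable_of_hasCompactSupport
      ((hasCompactSupport_pd hws j).mul_right)
  have hI2 : Integrable (fun x => w x *
      fderiv ℝ (fun x => (starRingEnd ℂ) (u x)) x (EuclideanSpace.single j 1)) := by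
    simp only [hd]
    exact (hw.continuous.mul (Complex.continuous_conj.comp
      (contDiff_pd hu j).continuous)).integrable_of_hasCompactSupport hws.mul_right
  have hI3 : Integrable (fun x => w x * (starRingEnd ℂ) (u x)) :=
    (hw.continuous.mul huc.continuous).integrable_of_hasCompactSupport hws.mul_right
  have hI4 : Integrable (fun x => (A j x : ℂ) * (w x * (starRingEnd ℂ) (u x))) :=
    ((contDiff_ofReal_comp (hA j)).continuous.mul
      (hw.continuous.mul huc.continuous)).integrable_of_hasCompactSupport
      (hws.mul_right.mul_left)
  have key := integral_mul_fderiv_eq_neg_fderiv_mul_of_integrable hI1 hI2 hI3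
    (fun x _ => hw.differentiable (by simp) x) (fun x _ => huc.differentiable (by simp) x)
  have hL : ∀ x, DA A j w x * (starRingEnd ℂ) (u x) =
      -Complex.I * (fderiv ℝ w x (EuclideanSpace.single j 1) * (starRingEnd ℂ) (u x))
        + (A j x : ℂ) * (w x * (starRingEnd ℂ) (u x)) := by
    intro x; simp only [DA, pd]; ring
  have hR : ∀ x, w x * (starRingEnd ℂ) (DA A j u x) =
      Complex.I * (w x * fderiv ℝ (fun x => (starRingEnd ℂ) (u x)) x (EuclideanSpace.single j 1))
        + (A j x : ℂ) * (w x * (starRingEnd ℂ) (u x)) := by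
    intro x
    rw [hd]; simp only [DA, map_add, map_mul, map_neg, Complex.conj_I, Complex.conj_ofReal]; ring
  simp only [hL, hR]
  rw [integral_add (hI1.const_mul _) hI4, integral_add (hI2.const_mul _) hI4,
    integral_const_mul, integral_const_mul, key]
  ring

lemma hasCompactSupport_norm_sq {u : E3 → ℂ} (hs : HasCompactSupport u) :
    HasCompactSupport (fun x => ‖u x‖ ^ 2) :=
  hs.comp_left (g := fun z : ℂ => ‖z‖ ^ 2) (by simp)

lemma contDiff_zero_potential (j : Fin 3) :
    ContDiff ℝ (⊤ : ℕ∞) ((0 : Fin 3 → E3 → ℝ) j) :=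
  contDiff_const (c := (0 : ℝ))

/-! ### Hardy's inequality for the covariant gradient -/

/-- Squared `L²` density of the covariant gradient. -/
def covDens (A : Fin 3 → E3 → ℝ) (u : E3 → ℂ) (x : E3) : ℝ := ∑ j, ‖DA A j u x‖ ^ 2

lemma integrable_covDens {A : Fin 3 → E3 → ℝ} (hA : ∀ j, ContDiff ℝ (⊤ : ℕ∞) (A j)) {u : E3 → ℂ}
    (hu : ContDiff ℝ (⊤ : ℕ∞) u) (hs : HasCompactSupport u) : Integrable (covDens A u) := by
  refine integrable_finsetSum _ fun j _ => ?_
  refine Continuous.integrable_of_hasCompactSupport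
    ((contDiff_DA hA hu j).continuous.norm.pow 2) ?_
  exact hasCompactSupport_norm_sq (hasCompactSupport_DA A hs j)

/-- The weight `1 / (|x|² + ε)`. -/
def wgt (ε : ℝ) (x : E3) : ℝ := (‖x‖ ^ 2 + ε)⁻¹

lemma contDiff_wgt {ε : ℝ} (hε : 0 < ε) : ContDiff ℝ (⊤ : ℕ∞) (wgt ε) :=
  ((contDiff_norm_sq ℝ).add contDiff_const).inv fun x => by positivity

lemma fderiv_coord_mul_wgt {ε : ℝ} (hε : 0 < ε) (j : Fin 3) (x : E3) :
    fderiv ℝ (fun y : E3 => y j * wgt ε y) x (EuclideanSpace.single j 1)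
      = wgt ε x - 2 * x j ^ 2 * wgt ε x ^ 2 := by
  have h0 : ‖x‖ ^ 2 + ε ≠ 0 := by positivity
  have h1 : HasFDerivAt (fun y : E3 => ‖y‖ ^ 2 + ε) _ x :=
    ((hasFDerivAt_id x).norm_sq).add_const ε
  have h2 := (hasDerivAt_inv h0).comp_hasFDerivAt x h1
  have h3 : HasFDerivAt (fun y : E3 => y j) (EuclideanSpace.proj j : E3 →L[ℝ] ℝ) x :=
    (EuclideanSpace.proj j : E3 →L[ℝ] ℝ).hasFDerivAt
  have h4 : HasFDerivAt (fun y : E3 => y j * wgt ε y) _ x := h3.mul h2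
  rw [h4.fderiv]
  simp [wgt, EuclideanSpace.inner_single_right]
  field_simp
  ring

/-- Hardy's inequality for the covariant gradient with a regularised weight; the constant does not
depend on `A` or `ε`. -/
lemma hardy {A : Fin 3 → E3 → ℝ} (hA : ∀ j, ContDiff ℝ (⊤ : ℕ∞) (A j)) {u : E3 → ℂ}
    (hu : ContDiff ℝ (⊤ : ℕ∞) u) (hs : HasCompactSupport u) {ε : ℝ} (hε : 0 < ε) :
    ∫ x, wgt ε x * ‖u x‖ ^ 2 ≤ 4 * ∫ x, covDens A u x := by
  have hN : ContDiff ℝ (⊤ : ℕ∞) (fun x => ‖u x‖ ^ 2) := hu.norm_sq ℝ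
  have hNs : HasCompactSupport (fun x => ‖u x‖ ^ 2) :=
    hasCompactSupport_norm_sq hs
  have hF : ∀ j : Fin 3, ContDiff ℝ (⊤ : ℕ∞) (fun y : E3 => y j * wgt ε y) := fun j =>
    (EuclideanSpace.proj j : E3 →L[ℝ] ℝ).contDiff.mul (contDiff_wgt hε)
  have hdN : ∀ (j : Fin 3) x, fderiv ℝ (fun x => ‖u x‖ ^ 2) x (EuclideanSpace.single j 1)
      = 2 * ((starRingEnd ℂ) (u x) * (Complex.I * DA A j u x)).re := by
    intro j x
    have h1 := ((hu.differentiable (by simp) x).hasFDerivAt).norm_sq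
    rw [h1.fderiv]
    simp [DA, pd, Complex.inner]
    ring
  have hcF : ∀ j : Fin 3, Continuous
      (fun x => fderiv ℝ (fun y : E3 => y j * wgt ε y) x (EuclideanSpace.single j 1)) := fun j =>
    ((hF j).continuous_fderiv (by simp)).clm_apply continuous_const
  have hcN : ∀ j : Fin 3, Continuous
      (fun x => fderiv ℝ (fun x => ‖u x‖ ^ 2) x (EuclideanSpace.single j 1)) := fun j =>
    (hN.continuous_fderiv (by simp)).clm_apply continuous_const
  have hI1 : ∀ j : Fin 3, Integrable (fun x => fderiv ℝ (fun y : E3 => y j * wgt ε y) x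
      (EuclideanSpace.single j 1) * ‖u x‖ ^ 2) := fun j =>
    ((hcF j).mul hN.continuous).integrable_of_hasCompactSupport hNs.mul_left
  have hI2 : ∀ j : Fin 3, Integrable (fun x => (x j * wgt ε x) *
      fderiv ℝ (fun x => ‖u x‖ ^ 2) x (EuclideanSpace.single j 1)) := fun j =>
    ((hF j).continuous.mul (hcN j)).integrable_of_hasCompactSupport
      (hNs.fderiv_apply (𝕜 := ℝ) (EuclideanSpace.single j 1)).mul_left
  have hI3 : ∀ j : Fin 3, Integrable (fun x => (x j * wgt ε x) * ‖u x‖ ^ 2) := fun j =>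
    ((hF j).continuous.mul hN.continuous).integrable_of_hasCompactSupport hNs.mul_left
  have hIW : Integrable (fun x => wgt ε x * ‖u x‖ ^ 2) :=
    ((contDiff_wgt hε).continuous.mul hN.continuous).integrable_of_hasCompactSupport hNs.mul_left
  have hIC := integrable_covDens hA hu hs
  have key : ∀ j : Fin 3, _ := fun j =>
    integral_mul_fderiv_eq_neg_fderiv_mul_of_integrable (hI1 j) (hI2 j) (hI3 j)
      (fun x _ => (hF j).differentiable (by simp) x) (fun x _ => hN.differentiable (by simp) x)
  have hdiv : ∀ x, wgt ε x * ‖u x‖ ^ 2 ≤ ∑ j : Fin 3, fderiv ℝ (fun y : E3 => y j * wgt ε y) x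
      (EuclideanSpace.single j 1) * ‖u x‖ ^ 2 := by
    intro x
    simp only [fderiv_coord_mul_wgt hε]
    rw [← Finset.sum_mul]
    refine mul_le_mul_of_nonneg_right ?_ (by positivity)
    have hx : ‖x‖ ^ 2 = x 0 ^ 2 + x 1 ^ 2 + x 2 ^ 2 := by
      rw [EuclideanSpace.real_norm_sq_eq, Fin.sum_univ_three]
    have hp : 0 < wgt ε x := by unfold wgt; positivity
    have hw : wgt ε x * (‖x‖ ^ 2 + ε) = 1 := inv_mul_cancel₀ (by positivity)
    rw [Fin.sum_univ_three]
    rw [hx] at hw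
    nlinarith [mul_pos hε (mul_pos hp hp), congrArg (fun t => wgt ε x * t) hw]
  have hpt : ∀ x, -∑ j : Fin 3, (x j * wgt ε x) *
      fderiv ℝ (fun x => ‖u x‖ ^ 2) x (EuclideanSpace.single j 1)
      ≤ 1 / 2 * (wgt ε x * ‖u x‖ ^ 2) + 2 * covDens A u x := by
    intro x
    have hp : 0 < wgt ε x := by unfold wgt; positivity
    have hx : ‖x‖ ^ 2 = x 0 ^ 2 + x 1 ^ 2 + x 2 ^ 2 := by
      rw [EuclideanSpace.real_norm_sq_eq, Fin.sum_univ_three]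
    have hw : wgt ε x * (‖x‖ ^ 2 + ε) = 1 := inv_mul_cancel₀ (by positivity)
    have h1 : ∀ j : Fin 3, -((x j * wgt ε x) *
        fderiv ℝ (fun x => ‖u x‖ ^ 2) x (EuclideanSpace.single j 1))
        ≤ 1 / 2 * (x j ^ 2 * wgt ε x ^ 2 * ‖u x‖ ^ 2) + 2 * ‖DA A j u x‖ ^ 2 := by
      intro j
      rw [hdN]
      set r := ((starRingEnd ℂ) (u x) * (Complex.I * DA A j u x)).re
      have hr : |r| ≤ ‖u x‖ * ‖DA A j u x‖ := by
        refine (Complex.abs_re_le_norm _).trans_eq ?_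
        simp
      have h2 : -(x j * wgt ε x * r) ≤ |x j * wgt ε x| * (‖u x‖ * ‖DA A j u x‖) := by
        refine (neg_le_abs _).trans ?_
        rw [abs_mul]
        gcongr
      have h3 := sq_abs (x j * wgt ε x)
      nlinarith [sq_nonneg (|x j * wgt ε x| * ‖u x‖ - 2 * ‖DA A j u x‖),
        congrArg (fun t => t * ‖u x‖ ^ 2) h3]
    have h2 := Finset.sum_le_sum fun j (_ : j ∈ Finset.univ) => h1 j
    rw [Finset.sum_neg_distrib] at h2
    refine h2.trans ?_
    rw [Finset.sum_add_distrib, ← Finset.mul_sum, ← Finset.mul_sum, ← Finset.sum_mul,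
      ← Finset.sum_mul]
    unfold covDens
    gcongr
    rw [Fin.sum_univ_three, ← hx]
    nlinarith [mul_pos hε (mul_pos hp hp), congrArg (fun t => wgt ε x * t) hw]
  have hA1 := integral_mono hIW (integrable_finsetSum _ fun j _ => hI1 j) hdiv
  rw [integral_finsetSum _ fun j _ => hI1 j] at hA1
  have hA2 := integral_mono (integrable_finsetSum Finset.univ fun j _ => hI2 j).neg
    ((hIW.const_mul (1 / 2)).add (hIC.const_mul 2)) hpt
  simp only [Pi.neg_apply, Pi.add_apply] at hA2
  rw [integral_neg, integral_finsetSum _ fun j _ => hI2 j,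
    integral_add (hIW.const_mul _) (hIC.const_mul _), integral_const_mul,
    integral_const_mul] at hA2
  simp only [key, Finset.sum_neg_distrib, neg_neg] at hA2
  linarith

/-! ### Finiteness of the dual norm and duality -/

lemma gradL2_sq (u : E3 → ℂ) : gradL2 u ^ 2 = ∫ x : E3, ∑ j, ‖pd j u x‖ ^ 2 :=
  Real.sq_sqrt (integral_nonneg fun x => by positivity)

lemma covDens_zero (u : E3 → ℂ) (x : E3) : covDens 0 u x = ∑ j, ‖pd j u x‖ ^ 2 := by
  simp [covDens, DA]

/-- The set whose supremum is the `Ḣ⁻¹` norm is bounded for continuous compactly supported `f`,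
by Hardy's inequality without a magnetic potential. -/
lemma bddAbove_negSob {f : E3 → ℂ} (hf : Continuous f) (hfs : HasCompactSupport f) :
    BddAbove {r : ℝ | ∃ v : E3 → ℂ, ContDiff ℝ (⊤ : ℕ∞) v ∧ HasCompactSupport v ∧
      gradL2 v ≤ 1 ∧ r = ‖∫ x : E3, f x * (starRingEnd ℂ) (v x)‖} := by
  refine ⟨1 / 2 * (∫ x, (‖x‖ ^ 2 + 1) * ‖f x‖ ^ 2) + 2, ?_⟩
  rintro r ⟨v, hv, hvs, hv1, rfl⟩
  have hH := hardy contDiff_zero_potential hv hvs one_pos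
  simp only [covDens_zero] at hH
  rw [← gradL2_sq] at hH
  have h0 : 0 ≤ gradL2 v := Real.sqrt_nonneg _
  have hI1 : Integrable (fun x => (‖x‖ ^ 2 + 1) * ‖f x‖ ^ 2) :=
    Continuous.integrable_of_hasCompactSupport (by fun_prop)
      (hasCompactSupport_norm_sq hfs).mul_left
  have hI2 : Integrable (fun x => wgt 1 x * ‖v x‖ ^ 2) :=
    ((contDiff_wgt one_pos).continuous.mul (hv.continuous.norm.pow 2)
      ).integrable_of_hasCompactSupport
      (hasCompactSupport_norm_sq hvs).mul_left
  have hpt : ∀ x, ‖f x * (starRingEnd ℂ) (v x)‖ ≤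
      1 / 2 * ((‖x‖ ^ 2 + 1) * ‖f x‖ ^ 2) + 1 / 2 * (wgt 1 x * ‖v x‖ ^ 2) := by
    intro x
    have hp : 0 < wgt 1 x := by unfold wgt; positivity
    have hw : (‖x‖ ^ 2 + 1) = (wgt 1 x)⁻¹ := by simp [wgt]
    rw [norm_mul, RCLike.norm_conj, hw]
    have h := mul_nonneg (inv_pos.2 hp).le (sq_nonneg (‖f x‖ - wgt 1 x * ‖v x‖))
    have e : (wgt 1 x)⁻¹ * (‖f x‖ - wgt 1 x * ‖v x‖) ^ 2 =
        (wgt 1 x)⁻¹ * ‖f x‖ ^ 2 - 2 * (‖f x‖ * ‖v x‖) + wgt 1 x * ‖v x‖ ^ 2 := by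
      field_simp
      ring
    rw [e] at h
    linarith
  have h1 := norm_integral_le_of_norm_le ((hI1.const_mul (1 / 2)).add (hI2.const_mul (1 / 2)))
    (Filter.Eventually.of_forall hpt)
  simp only [Pi.add_apply] at h1
  rw [integral_add (hI1.const_mul _) (hI2.const_mul _), integral_const_mul,
    integral_const_mul] at h1
  nlinarith

lemma negSob_nonneg (f : E3 → ℂ) : 0 ≤ negSob f := by
  refine Real.sSup_nonneg ?_
  rintro r ⟨v, -, -, -, rfl⟩
  exact norm_nonneg _

/-- The duality bound `|∫ f conj u| ≤ ‖f‖_{Ḣ⁻¹} ‖∇u‖`. -/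
lemma norm_integral_le_negSob {f : E3 → ℂ} (hf : Continuous f) (hfs : HasCompactSupport f)
    {u : E3 → ℂ} (hu : ContDiff ℝ (⊤ : ℕ∞) u) (hs : HasCompactSupport u) (hpos : 0 < gradL2 u) :
    ‖∫ x : E3, f x * (starRingEnd ℂ) (u x)‖ ≤ negSob f * gradL2 u := by
  set s := gradL2 u with hsdef
  have hpd : ∀ j x, pd j (fun x => ((s⁻¹ : ℝ) : ℂ) * u x) x = ((s⁻¹ : ℝ) : ℂ) * pd j u x := by
    intro j x
    simp only [pd]
    rw [fderiv_const_mul (hu.differentiable (by simp) x)]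
    simp
  have hg : gradL2 (fun x => ((s⁻¹ : ℝ) : ℂ) * u x) ≤ 1 := by
    have h2 : gradL2 (fun x => ((s⁻¹ : ℝ) : ℂ) * u x) ^ 2 = 1 := by
      rw [gradL2_sq]
      simp only [hpd, norm_mul, mul_pow, ← Finset.mul_sum]
      rw [integral_const_mul, ← gradL2_sq, ← hsdef, Complex.norm_real, Real.norm_eq_abs, sq_abs]
      field_simp
    exact (abs_le_one_iff_mul_self_le_one.2 (by nlinarith)).trans' (le_abs_self _)
  have hle : ‖∫ x : E3, f x * (starRingEnd ℂ) (((s⁻¹ : ℝ) : ℂ) * u x)‖ ≤ negSob f :=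
    le_csSup (bddAbove_negSob hf hfs)
      ⟨_, contDiff_const.mul hu, hs.mul_left, hg, rfl⟩
  have he : ∀ x, f x * (starRingEnd ℂ) (((s⁻¹ : ℝ) : ℂ) * u x) =
      ((s⁻¹ : ℝ) : ℂ) * (f x * (starRingEnd ℂ) (u x)) := by
    intro x
    rw [map_mul, Complex.conj_ofReal]; ring
  simp only [he] at hle
  rw [integral_const_mul, norm_mul, Complex.norm_real, Real.norm_eq_abs,
    abs_of_pos (inv_pos.2 hpos), inv_mul_le_iff₀ hpos] at hle
  linarith

/-! ### Coercivity and absorption of the potential -/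

/-- Coercivity of the quadratic form of `P₀`. -/
lemma coercive {lam : ℝ} {g : Fin 3 → Fin 3 → E3 → ℝ} {A : Fin 3 → E3 → ℝ} {W : E3 → ℝ}
    (hg : ∀ j k, ContDiff ℝ (⊤ : ℕ∞) (g j k)) (hA : ∀ j, ContDiff ℝ (⊤ : ℕ∞) (A j))
    (hW : ContDiff ℝ (⊤ : ℕ∞) W)
    (hell : ∀ (x ξ : E3), lam * ‖ξ‖ ^ 2 ≤ ∑ j, ∑ k, g j k x * ξ j * ξ k)
    (hW0 : ∀ x, 0 ≤ W x) {u : E3 → ℂ} (hu : ContDiff ℝ (⊤ : ℕ∞) u) (hs : HasCompactSupport u) :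
    Continuous (P0mag g A W u) ∧ HasCompactSupport (P0mag g A W u) ∧
    lam * ∫ x, covDens A u x ≤ ‖∫ x, P0mag g A W u x * (starRingEnd ℂ) (u x)‖ := by
  set w : Fin 3 → E3 → ℂ := fun j y => ∑ k, (g j k y : ℂ) * DA A k u y with hwdef
  have hw : ∀ j, ContDiff ℝ (⊤ : ℕ∞) (w j) := fun j =>
    ContDiff.sum fun k _ => (contDiff_ofReal_comp (hg j k)).mul (contDiff_DA hA hu k)
  have hws : ∀ j, HasCompactSupport (w j) := fun j =>
    hasCompactSupport_sum _ fun k _ => (hasCompactSupport_DA A hs k).mul_left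
  have hWu : Continuous (fun x => (W x : ℂ) * u x) :=
    (contDiff_ofReal_comp hW).continuous.mul hu.continuous
  have hDc : ∀ j, Continuous (DA A j (w j)) := fun j => (contDiff_DA hA (hw j) j).continuous
  have hDs : ∀ j, HasCompactSupport (DA A j (w j)) := fun j => hasCompactSupport_DA A (hws j) j
  have huc : Continuous (fun x => (starRingEnd ℂ) (u x)) :=
    Complex.continuous_conj.comp hu.continuous
  have hDAc : ∀ j, Continuous (fun x => (starRingEnd ℂ) (DA A j u x)) := fun j =>
    Complex.continuous_conj.comp (contDiff_DA hA hu j).continuous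
  refine ⟨(continuous_finsetSum _ fun j _ => hDc j).add hWu,
    (hasCompactSupport_sum _ fun j _ => hDs j).add hs.mul_left, ?_⟩
  have hI1 : ∀ j, Integrable (fun x => DA A j (w j) x * (starRingEnd ℂ) (u x)) := fun j =>
    ((hDc j).mul huc).integrable_of_hasCompactSupport (hDs j).mul_right
  have hI2 : Integrable (fun x => (W x : ℂ) * u x * (starRingEnd ℂ) (u x)) :=
    (hWu.mul huc).integrable_of_hasCompactSupport (hs.mul_left.mul_right)
  have hI3 : ∀ j, Integrable (fun x => w j x * (starRingEnd ℂ) (DA A j u x)) := fun j =>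
    ((hw j).continuous.mul (hDAc j)).integrable_of_hasCompactSupport (hws j).mul_right
  have hI4 : Integrable (fun x => ∑ j, w j x * (starRingEnd ℂ) (DA A j u x)) :=
    integrable_finsetSum _ fun j _ => hI3 j
  have hform : ∫ x, P0mag g A W u x * (starRingEnd ℂ) (u x) =
      ∫ x, ((∑ j, w j x * (starRingEnd ℂ) (DA A j u x))
        + (W x : ℂ) * u x * (starRingEnd ℂ) (u x)) := by
    have e : ∀ x, P0mag g A W u x * (starRingEnd ℂ) (u x) =
        (∑ j, DA A j (w j) x * (starRingEnd ℂ) (u x))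
          + (W x : ℂ) * u x * (starRingEnd ℂ) (u x) := by
      intro x
      simp only [P0mag, hwdef, add_mul, Finset.sum_mul]
    simp only [e]
    rw [integral_add (integrable_finsetSum _ fun j _ => hI1 j) hI2, integral_add hI4 hI2,
      integral_finsetSum _ fun j _ => hI1 j, integral_finsetSum _ fun j _ => hI3 j]
    congr 1
    exact Finset.sum_congr rfl fun j _ => integral_DA_mul_conj hA (hw j) (hws j) hu j
  rw [hform]
  refine le_trans ?_ (Complex.re_le_norm _)
  have hre := integral_re (hI4.add hI2)
  simp only [RCLike.re_to_complex, Pi.add_apply] at hre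
  rw [← hre, ← integral_const_mul]
  refine integral_mono ((integrable_covDens hA hu hs).const_mul _) (hI4.add hI2).re fun x => ?_
  -- The form is tested separately on the real and on the imaginary part of the covariant gradient.
  have h1 := hell x (WithLp.toLp 2 fun j => (DA A j u x).re)
  have h2 := hell x (WithLp.toLp 2 fun j => (DA A j u x).im)
  rw [EuclideanSpace.real_norm_sq_eq] at h1 h2
  have hWx : 0 ≤ W x * ‖u x‖ ^ 2 := mul_nonneg (hW0 x) (by positivity)
  rw [Complex.sq_norm, Complex.normSq_apply] at hWx
  simp only [covDens, hwdef, Complex.sq_norm, Complex.normSq_apply, Fin.sum_univ_three,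
    Complex.add_re, Complex.mul_re, Complex.mul_im, Complex.conj_re,
    Complex.conj_im, Complex.ofReal_re, Complex.ofReal_im, Complex.add_im] at h1 h2 ⊢
  linarith

/-- The potential term `A u` is controlled by the covariant gradient. -/
lemma integral_potential_le {M : ℝ} {A : Fin 3 → E3 → ℝ}
    (hA : ∀ j, ContDiff ℝ (⊤ : ℕ∞) (A j)) (hAM : ∀ x : E3, x ≠ 0 → ∀ j, |A j x| ≤ M / ‖x‖)
    {u : E3 → ℂ} (hu : ContDiff ℝ (⊤ : ℕ∞) u) (hs : HasCompactSupport u) :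
    ∫ x, (∑ j, A j x ^ 2) * ‖u x‖ ^ 2 ≤ (3 * M ^ 2 + 1) * (4 * ∫ x, covDens A u x) := by
  have hcA : Continuous (fun x => ∑ j, A j x ^ 2) :=
    continuous_finsetSum _ fun j _ => (hA j).continuous.pow 2
  have hNs : HasCompactSupport (fun x => ‖u x‖ ^ 2) :=
    hasCompactSupport_norm_sq hs
  obtain ⟨C, hC⟩ := hs.exists_bound_of_continuousOn hcA.continuousOn
  -- On the support of `u` one has `|A|² ≤ C`, so this `ε` makes `ε |A|² ≤ 1` there.
  set ε : ℝ := (|C| + 1)⁻¹ with hεdef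
  have hε : 0 < ε := by positivity
  refine le_trans ?_ (mul_le_mul_of_nonneg_left (hardy hA hu hs hε) (by positivity))
  rw [← integral_const_mul]
  refine integral_mono ?_ ?_ fun x => ?_
  · exact (hcA.mul (hu.continuous.norm.pow 2)).integrable_of_hasCompactSupport hNs.mul_left
  · exact (((contDiff_wgt hε).continuous.mul (hu.continuous.norm.pow 2)
      ).integrable_of_hasCompactSupport hNs.mul_left).const_mul _
  · by_cases hx : x ∈ tsupport u
    · have h1 : ∑ j, A j x ^ 2 ≤ |C| := (le_abs_self _).trans ((hC x hx).trans (le_abs_self C))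
      have h2 : ∀ j, A j x ^ 2 * ‖x‖ ^ 2 ≤ M ^ 2 := by
        intro j
        by_cases h0 : x = 0
        · simp [h0]; positivity
        · have h := hAM x h0 j
          rw [le_div_iff₀ (norm_pos_iff.2 h0)] at h
          rw [← mul_pow, ← sq_abs, abs_mul, abs_norm]
          exact pow_le_pow_left₀ (by positivity) h 2
      have h3 : (∑ j, A j x ^ 2) * ε ≤ 1 := by
        rw [hεdef, ← div_eq_mul_inv, div_le_one (by positivity)]
        linarith
      have h4 : (∑ j, A j x ^ 2) * (‖x‖ ^ 2 + ε) ≤ 3 * M ^ 2 + 1 := by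
        rw [mul_add, Finset.sum_mul]
        have := Finset.sum_le_sum fun j (_ : j ∈ Finset.univ) => h2 j
        simp only [Finset.sum_const, Finset.card_univ, Fintype.card_fin, nsmul_eq_mul] at this
        push_cast at this
        linarith
      have h5 : ∑ j, A j x ^ 2 ≤ (3 * M ^ 2 + 1) * wgt ε x := by
        rw [wgt, ← div_eq_mul_inv, le_div_iff₀ (by positivity)]
        exact h4
      calc _ ≤ ((3 * M ^ 2 + 1) * wgt ε x) * ‖u x‖ ^ 2 :=
            mul_le_mul_of_nonneg_right h5 (by positivity)
        _ = _ := by ring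
    · simp [image_eq_zero_of_notMem_tsupport hx]

/-! ### The resolvent bound -/

/-- **Zero nonresonance bound for symmetric AF magnetic wave operators with `W ≥ 0`:**
`‖∇u‖_{L²(ℝ³)} ≤ K₀ ‖P₀ u‖_{Ḣ⁻¹}` with `K₀ = K₀(λ, Λ, M)`. -/
theorem zero_resolvent_bound_magnetic
    (lam Lam M : ℝ) (hlam : 0 < lam) (hlamLam : lam ≤ Lam) :
    ∃ K₀ : ℝ, 0 < K₀ ∧
      ∀ (g : Fin 3 → Fin 3 → E3 → ℝ) (A : Fin 3 → E3 → ℝ) (W : E3 → ℝ),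
        (∀ j k, ContDiff ℝ (⊤ : ℕ∞) (g j k)) →
        (∀ j, ContDiff ℝ (⊤ : ℕ∞) (A j)) →
        ContDiff ℝ (⊤ : ℕ∞) W →
        (∀ j k x, g j k x = g k j x) →
        (∀ (x ξ : E3),
          lam * ‖ξ‖ ^ 2 ≤ ∑ j, ∑ k, g j k x * ξ j * ξ k ∧
          ∑ j, ∑ k, g j k x * ξ j * ξ k ≤ Lam * ‖ξ‖ ^ 2) →
        (∀ x : E3, x ≠ 0 → ∀ j, |A j x| ≤ M / ‖x‖) →
        (∀ x, 0 ≤ W x) →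
        ∀ u : E3 → ℂ, ContDiff ℝ (⊤ : ℕ∞) u → HasCompactSupport u →
          gradL2 u ≤ K₀ * negSob (P0mag g A W u) := by
  refine ⟨(2 + 8 * (3 * M ^ 2 + 1)) / lam, by positivity, ?_⟩
  intro g A W hg hA hW _ hell hAM hW0 u hu hs
  obtain ⟨hPc, hPs, hco⟩ := coercive hg hA hW (fun x ξ => (hell x ξ).1) hW0 hu hs
  have hn : 0 ≤ gradL2 u := Real.sqrt_nonneg _
  rcases hn.eq_or_lt with h0 | hpos
  · rw [← h0]
    exact mul_nonneg (by positivity) (negSob_nonneg _)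
  have hdual := norm_integral_le_negSob hPc hPs hu hs hpos
  have hpot := integral_potential_le hA hAM hu hs
  have hIC := integrable_covDens hA hu hs
  have hIA : Integrable (fun x => (∑ j, A j x ^ 2) * ‖u x‖ ^ 2) :=
    ((continuous_finsetSum _ fun j _ => (hA j).continuous.pow 2).mul
      (hu.continuous.norm.pow 2)).integrable_of_hasCompactSupport
      (hasCompactSupport_norm_sq hs).mul_left
  have hIG : Integrable (fun x => ∑ j, ‖pd j u x‖ ^ 2) := by
    have h := integrable_covDens contDiff_zero_potential hu hs
    exact h.congr (Filter.Eventually.of_forall fun x => covDens_zero u x)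
  have hgrad : gradL2 u ^ 2 ≤
      2 * (∫ x, covDens A u x) + 2 * ∫ x, (∑ j, A j x ^ 2) * ‖u x‖ ^ 2 := by
    rw [gradL2_sq, ← integral_const_mul, ← integral_const_mul,
      ← integral_add (hIC.const_mul _) (hIA.const_mul _)]
    refine integral_mono hIG ((hIC.const_mul _).add (hIA.const_mul _)) fun x => ?_
    simp only [covDens]
    rw [Finset.sum_mul, Finset.mul_sum, Finset.mul_sum, ← Finset.sum_add_distrib]
    refine Finset.sum_le_sum fun j _ => ?_
    have e : -Complex.I * pd j u x = DA A j u x - (A j x : ℂ) * u x := by simp [DA]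
    have h1 : ‖pd j u x‖ ≤ ‖DA A j u x‖ + |A j x| * ‖u x‖ := by
      have h := norm_sub_le (DA A j u x) ((A j x : ℂ) * u x)
      rw [← e] at h
      simpa using h
    have h2 := pow_le_pow_left₀ (norm_nonneg _) h1 2
    have h3 : (|A j x| * ‖u x‖) ^ 2 = A j x ^ 2 * ‖u x‖ ^ 2 := by rw [mul_pow, sq_abs]
    nlinarith [sq_nonneg (‖DA A j u x‖ - |A j x| * ‖u x‖)]
  have hfin : gradL2 u ^ 2 * lam ≤
      (2 + 8 * (3 * M ^ 2 + 1)) * (negSob (P0mag g A W u) * gradL2 u) := by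
    calc gradL2 u ^ 2 * lam
        ≤ ((2 + 8 * (3 * M ^ 2 + 1)) * ∫ x, covDens A u x) * lam :=
          mul_le_mul_of_nonneg_right (by linarith) hlam.le
      _ = (2 + 8 * (3 * M ^ 2 + 1)) * (lam * ∫ x, covDens A u x) := by ring
      _ ≤ _ := mul_le_mul_of_nonneg_left (hco.trans hdual) (by positivity)
  rw [div_mul_eq_mul_div, le_div_iff₀ hlam]
  refine le_of_mul_le_mul_right ?_ hpos
  linarith
end
end

section
/- Let c, C, D > 0 and let m : [0,∞) → ℝ be differentiable with m′(T) ≥ c·m(T) − C·T·D for all T ≥ 0. Suppose there exists T₁ ≥ 2/c with m(T₁) ≥ (2C/c)·T₁·D. Then m(T) ≥ (2C/c)·T·D for all T ≥ T₁, and moreover m(T) ≥ m(T₁) e^{(c/2)(T − T₁)} for all T ≥ T₁. -/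
/-!
Let `f T = m T - (2C/c) T D` be the height of `m` above the barrier. Substituting into the
differential inequality gives `f' ≥ c f + C D (T - 2/c)`, so `f' ≥ c f` once `T ≥ 2/c`, and the
linear Grönwall bound `mul_exp_le_of_deriv_ge` propagates `f ≥ 0` forward from `T₁`; no
first-exit-time argument is needed. Above the barrier, `C T D ≤ (c/2) m`, hence `m' ≥ (c/2) m`,
and the same bound gives the exponential growth.
-/

/-- Lower linear Grönwall inequality, by monotonicity of `g t * exp (-k (t - a))`. There is no
sign condition on `g` or `k`. -/
theorem mul_exp_le_of_deriv_ge {g g' : ℝ → ℝ} {k a : ℝ}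
    (hg : ∀ t, a ≤ t → HasDerivAt g (g' t) t) (hk : ∀ t, a ≤ t → k * g t ≤ g' t)
    {T : ℝ} (hT : a ≤ T) : g a * Real.exp (k * (T - a)) ≤ g T := by
  have hd : ∀ t, a ≤ t → HasDerivAt (fun s => g s * Real.exp (-(k * (s - a))))
      ((g' t - k * g t) * Real.exp (-(k * (t - a)))) t := by
    intro t ht
    have he : HasDerivAt (fun s => -(k * (s - a))) (-(k * 1)) t :=
      (((hasDerivAt_id' t).sub_const a).const_mul k).neg
    refine ((hg t ht).mul he.exp).congr_deriv ?_
    ring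
  have hmono : MonotoneOn (fun s => g s * Real.exp (-(k * (s - a)))) (Set.Ici a) := by
    refine monotoneOn_of_hasDerivWithinAt_nonneg (convex_Ici a)
      (fun t ht => (hd t ht).continuousAt.continuousWithinAt)
      (fun t ht => (hd t (interior_subset ht)).hasDerivWithinAt) (fun t ht => ?_)
    exact mul_nonneg (sub_nonneg.2 (hk t (interior_subset ht))) (Real.exp_pos _).le
  have h : g a ≤ g T * Real.exp (-(k * (T - a))) := by
    simpa using hmono (Set.mem_Ici.2 le_rfl) (Set.mem_Ici.2 hT) hT
  calc g a * Real.exp (k * (T - a))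
      ≤ g T * Real.exp (-(k * (T - a))) * Real.exp (k * (T - a)) := by gcongr
    _ = g T := by rw [mul_assoc, ← Real.exp_add]; simp

/-- **Barrier/Gronwall dichotomy lemma.**
If `m′(T) ≥ c m(T) − C T D` for `T ≥ 0`, and `m` crosses the threshold `(2C/c) T₁ D`
at some time `T₁ ≥ 2/c`, then `m` stays above the threshold `(2C/c) T D` for all
`T ≥ T₁` and grows at least at the exponential rate `e^{(c/2)(T − T₁)}`. -/
theorem barrier_gronwall_dichotomy
    (c C D : ℝ) (hc : 0 < c) (hC : 0 < C) (hD : 0 < D)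
    (m m' : ℝ → ℝ)
    (hderiv : ∀ T : ℝ, 0 ≤ T → HasDerivAt m (m' T) T)
    (hineq : ∀ T : ℝ, 0 ≤ T → c * m T - C * T * D ≤ m' T)
    (T₁ : ℝ) (hT₁ : 2 / c ≤ T₁)
    (hcross : (2 * C / c) * T₁ * D ≤ m T₁) :
    ∀ T : ℝ, T₁ ≤ T →
      (2 * C / c) * T * D ≤ m T ∧
      m T₁ * Real.exp ((c / 2) * (T - T₁)) ≤ m T := by
  have h₁ : 0 < T₁ := lt_of_lt_of_le (by positivity) hT₁
  have hbar : ∀ T, T₁ ≤ T → (2 * C / c) * T * D ≤ m T := by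
    intro T hT
    have h := mul_exp_le_of_deriv_ge (g := fun t => m t - (2 * C / c) * t * D)
      (g' := fun t => m' t - (2 * C / c) * 1 * D) (k := c) (a := T₁)
      (fun t ht => (hderiv t (h₁.le.trans ht)).sub
        (((hasDerivAt_id' t).const_mul (2 * C / c)).mul_const D))
      (fun t ht => by
        have h2 := hineq t (h₁.le.trans ht)
        have h3 : 0 ≤ C * D * (t - 2 / c) :=
          mul_nonneg (by positivity) (sub_nonneg.2 (hT₁.trans ht))
        have h4 : c * (m t - 2 * C / c * t * D) = c * m t - 2 * C * t * D := by
          field_simp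
        have h5 : C * D * (t - 2 / c) = C * t * D - 2 * C / c * 1 * D := by ring
        linarith) hT
    have h0 : 0 ≤ (m T₁ - (2 * C / c) * T₁ * D) * Real.exp (c * (T - T₁)) :=
      mul_nonneg (sub_nonneg.2 hcross) (Real.exp_pos _).le
    exact sub_nonneg.1 (h0.trans h)
  intro T hT
  refine ⟨hbar T hT, mul_exp_le_of_deriv_ge (fun t ht => hderiv t (h₁.le.trans ht))
    (fun t ht => ?_) hT⟩
  have h2 := hineq t (h₁.le.trans ht)
  have h3 := mul_le_mul_of_nonneg_left (hbar t ht) (half_pos hc).le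
  have h4 : c / 2 * (2 * C / c * t * D) = C * t * D := by field_simp
  linarith
end

section
/- Let a > 0 and define f(r) = r/(r+a) for r > 0, and h(x) = 2 f(|x|)/|x| + f′(|x|) for x ∈ ℝ³ \ {0}. Then f(r) > 0 and f′(r) = a/(r+a)² > 0 for all r > 0, and Δh(x) = −(2a|x| + 8a²) / ( |x| (|x| + a)⁴ ) for all x ≠ 0; in particular −Δh > 0 everywhere on ℝ³ \ {0}. -/
/-! The weight is radial: for `r = ‖x‖ > 0` one has `f(r) = r/(r+a)` and `f'(r) = a/(r+a)²`, so
`h(x) = φ(r)` with `φ(r) = 2/(r+a) + a/(r+a)²`. On `ℝ³ \ {0}` the Laplacian of a radial function is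
`φ''(r) + 2φ'(r)/r` (`lapR_radial`), which comes from `∂ⱼ‖x‖ = xⱼ/‖x‖`, the product rule and
`∑ⱼ xⱼ² = ‖x‖²`. Here `φ' = -2/(r+a)² - 2a/(r+a)³` and `φ'' = 4/(r+a)³ + 6a/(r+a)⁴`, and over the
common denominator `r(r+a)⁴` the `r²` terms of the numerator cancel, leaving `-(2ar + 8a²)`. -/

noncomputable section

/-- The Euclidean Laplacian of a real-valued function on `ℝ³`. -/
def lapR (u : E3 → ℝ) : E3 → ℝ :=
  fun x => ∑ j, fderiv ℝ (fun y => fderiv ℝ u y (EuclideanSpace.single j 1)) x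
    (EuclideanSpace.single j 1)

theorem hasFDerivAt_norm_E3 {x : E3} (hx : x ≠ 0) :
    HasFDerivAt (fun y : E3 => ‖y‖) (‖x‖⁻¹ • innerSL ℝ x) x := by
  have h1 : HasFDerivAt (fun y : E3 => ‖y‖ ^ 2) (2 • innerSL ℝ x) x :=
    (hasStrictFDerivAt_norm_sq x).hasFDerivAt
  have hr : ‖x‖ ≠ 0 := norm_ne_zero_iff.mpr hx
  have h2 := h1.sqrt (pow_ne_zero 2 hr)
  simp only [Real.sqrt_sq (norm_nonneg _)] at h2
  refine h2.congr_fderiv ?_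
  ext v
  simp
  ring

theorem fderiv_radial_single {φ : ℝ → ℝ} {c : ℝ} {x : E3} (hx : x ≠ 0)
    (hφ : HasDerivAt φ c ‖x‖) (j : Fin 3) :
    fderiv ℝ (fun y : E3 => φ ‖y‖) x (EuclideanSpace.single j 1) = c * (x j / ‖x‖) := by
  have h : HasFDerivAt (fun y : E3 => φ ‖y‖) _ x := hφ.comp_hasFDerivAt x (hasFDerivAt_norm_E3 hx)
  rw [h.fderiv]
  simp [EuclideanSpace.inner_single_right]
  left
  ring

/-- The Laplacian on `ℝ³ \ {0}` of a radial function `u(x) = φ(‖x‖)` is `φ'' + 2φ'/r`. Only the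
values of `u` away from the origin are prescribed. -/
theorem lapR_radial {u : E3 → ℝ} {φ φ₁ φ₂ : ℝ → ℝ} (hu : ∀ x : E3, x ≠ 0 → u x = φ ‖x‖)
    (h₁ : ∀ r, 0 < r → HasDerivAt φ (φ₁ r) r) (h₂ : ∀ r, 0 < r → HasDerivAt φ₁ (φ₂ r) r)
    {x : E3} (hx : x ≠ 0) :
    lapR u x = φ₂ ‖x‖ + 2 * φ₁ ‖x‖ / ‖x‖ := by
  have hr : 0 < ‖x‖ := norm_pos_iff.mpr hx
  have first : ∀ (j : Fin 3) (y : E3), y ≠ 0 →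
      fderiv ℝ u y (EuclideanSpace.single j 1) = φ₁ ‖y‖ / ‖y‖ * y j := by
    intro j y hy
    have e : u =ᶠ[nhds y] fun z => φ ‖z‖ := by
      filter_upwards [isOpen_ne.mem_nhds hy] with z hz using hu z hz
    rw [e.fderiv_eq, fderiv_radial_single hy (h₁ _ (norm_pos_iff.mpr hy))]
    ring
  have second : ∀ j : Fin 3,
      fderiv ℝ (fun y => fderiv ℝ u y (EuclideanSpace.single j 1)) x
        (EuclideanSpace.single j 1) =
      (φ₂ ‖x‖ * ‖x‖ - φ₁ ‖x‖) / ‖x‖ ^ 3 * x j ^ 2 + φ₁ ‖x‖ / ‖x‖ := by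
    intro j
    have e : (fun y => fderiv ℝ u y (EuclideanSpace.single j 1)) =ᶠ[nhds x]
        fun y => φ₁ ‖y‖ / ‖y‖ * y j := by
      filter_upwards [isOpen_ne.mem_nhds hx] with z hz using first j z hz
    have hψ : HasDerivAt (fun r => φ₁ r / r) ((φ₂ ‖x‖ * ‖x‖ - φ₁ ‖x‖ * 1) / ‖x‖ ^ 2) ‖x‖ :=
      (h₂ _ hr).div (hasDerivAt_id _) hr.ne'
    have hN : HasFDerivAt (fun y : E3 => φ₁ ‖y‖ / ‖y‖) _ x :=
      hψ.comp_hasFDerivAt x (hasFDerivAt_norm_E3 hx)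
    have hc : HasFDerivAt (fun y : E3 => y j) (EuclideanSpace.proj j : E3 →L[ℝ] ℝ) x :=
      (EuclideanSpace.proj j : E3 →L[ℝ] ℝ).hasFDerivAt
    rw [e.fderiv_eq, (hN.fun_mul hc).fderiv]
    simp [EuclideanSpace.inner_single_right]
    field_simp
    ring
  have hsum : ∑ j, x j ^ 2 = ‖x‖ ^ 2 := (EuclideanSpace.real_norm_sq_eq x).symm
  simp only [lapR, second]
  rw [Finset.sum_add_distrib, ← Finset.mul_sum, hsum]
  simp
  field_simp
  ring

/-- **Structural positivity facts for the Morawetz multiplier weight `f(r) = r/(r+a)`:**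
`f > 0`, `f′(r) = a/(r+a)² > 0`, and for `h = 2f(|x|)/|x| + f′(|x|)` one has
`Δh(x) = −(2a|x| + 8a²)/(|x|(|x|+a)⁴)`, so in particular `−Δh > 0` on `ℝ³ \ {0}`. -/
theorem morawetz_weight_positivity
    (a : ℝ) (ha : 0 < a) (f : ℝ → ℝ) (hf : f = fun r => r / (r + a))
    (h : E3 → ℝ) (hh : h = fun x => 2 * f ‖x‖ / ‖x‖ + deriv f ‖x‖) :
    (∀ r : ℝ, 0 < r → 0 < f r ∧ deriv f r = a / (r + a) ^ 2 ∧ 0 < deriv f r) ∧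
    (∀ x : E3, x ≠ 0 →
      lapR h x = -(2 * a * ‖x‖ + 8 * a ^ 2) / (‖x‖ * (‖x‖ + a) ^ 4) ∧
      0 < -lapR h x) := by
  have hd : ∀ r : ℝ, 0 < r → deriv f r = a / (r + a) ^ 2 := by
    intro r hr
    have hra : r + a ≠ 0 := by positivity
    have h1 : HasDerivAt f ((1 * (r + a) - r * 1) / (r + a) ^ 2) r := by
      rw [hf]
      exact (hasDerivAt_id r).div ((hasDerivAt_id r).add_const a) hra
    rw [h1.deriv]
    ring
  refine ⟨fun r hr => ⟨by rw [hf]; positivity, hd r hr, by rw [hd r hr]; positivity⟩, ?_⟩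
  intro x hx
  have hr : 0 < ‖x‖ := norm_pos_iff.mpr hx
  have key : lapR h x = -(2 * a * ‖x‖ + 8 * a ^ 2) / (‖x‖ * (‖x‖ + a) ^ 4) := by
    -- `(c (r+a)⁻ⁿ)' = -n c (r+a)⁻⁽ⁿ⁺¹⁾`, used for both derivatives of the profile
    have hinv : ∀ (c : ℝ) (n : ℕ) (r : ℝ), 0 < r →
        HasDerivAt (fun r => c / (r + a) ^ n) (-(n * c) / (r + a) ^ (n + 1)) r := by
      intro c n r hr
      have hra : r + a ≠ 0 := by positivity
      have h1 := (hasDerivAt_const r c).div (((hasDerivAt_id r).add_const a).pow n)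
        (pow_ne_zero n hra)
      refine h1.congr_deriv ?_
      rcases n with _ | n
      · simp
      · simp
        field_simp
        ring
    rw [lapR_radial (φ := fun r => 2 / (r + a) ^ 1 + a / (r + a) ^ 2)
      (φ₁ := fun r => -(1 * 2) / (r + a) ^ 2 + -(2 * a) / (r + a) ^ 3)
      (φ₂ := fun r => -(2 * -(1 * 2)) / (r + a) ^ 3 + -(3 * -(2 * a)) / (r + a) ^ 4) ?_ ?_ ?_ hx]
    · field_simp
      ring
    · intro y hy
      have hy' : 0 < ‖y‖ := norm_pos_iff.mpr hy
      simp only [hh]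
      rw [hd _ hy', hf]
      field_simp
    · intro r hr
      exact_mod_cast (hinv 2 1 r hr).fun_add (hinv a 2 r hr)
    · intro r hr
      exact_mod_cast (hinv (-(1 * 2)) 2 r hr).fun_add (hinv (-(2 * a)) 3 r hr)
  refine ⟨key, ?_⟩
  rw [key, neg_div, neg_neg]
  positivity
end
end

section
/- Let χ : ℝ × ℝ → [0,∞) be smooth, supported in [−1,1] × [1,2], with ∫_ℝ ∫_{ℝ³} χ(t, |x|) dx dt = 1. For R > 0 and φ ∈ C_c^∞(ℝ × ℝ³), define φ̄_R(t₀) = R^{−4} ∫_ℝ ∫_{ℝ³} φ(t, x) χ((t − t₀)/R, |x|/R) dx dt. Then for every integer j ≥ 1 there is a constant C_j depending only on χ and j such that ‖ (d/dt₀)^j φ̄_R ‖_{L²(ℝ)} ≤ C_j R^{−j−1/2} ( ∫_ℝ ∫_{R ≤ |x| ≤ 2R} ( |∂_t φ|² + |∇_x φ|² ) dx dt )^{1/2}. -/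
/-! Write `A_η u (t₀) = ∫∫ η((t - t₀)/R, |x|/R) u(t, x) dx dt`, so that `φ̄_R = R⁻⁴ A_χ φ`.
Differentiating in `t₀` under the integral gives `(A_η u)' = -R⁻¹ A_{∂₁η} u`
(`hasDerivAt_wavg`), and integrating by parts in `t` gives `A_{∂₁η} φ = -R A_η (∂_t φ)`
(`wavg_dt`). Hence, up to sign, for `j ≥ 1`,
`∂^j φ̄_R = R^{-4} R^{-j} R A_η (∂_t φ)` with `η = ∂₁^{j-1} χ`: all but one derivative fall on the
weight.

Since `η` is bounded by some `M` and supported in `[-1, 1] × [1, 2]`, the Schwarz inequality bounds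
`|A_η u (t₀)|²` by `M² · 2R |annulus R| ≲ R⁴` times the `L²` mass of `u` on
`[t₀ - R, t₀ + R] × annulus R` (`enorm_wavg_sq_le`); integrating in `t₀` with Tonelli costs another
factor `2R` (`lintegral_wavg_sq_le`). Thus `‖A_η u‖_{L²} ≲ R^{5/2} ‖u‖_{L²(ℝ × annulus R)}`, and the
powers of `R` add up to `-4 - j + 1 + 5/2 = -j - 1/2`.
-/

open MeasureTheory

noncomputable section

/-- The dyadic annulus `{ R ≤ |x| ≤ 2R }` in `ℝ³`. -/
def annulus (R : ℝ) : Set E3 := {x | R ≤ ‖x‖ ∧ ‖x‖ ≤ 2 * R}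

/-- The space-time local average
`φ̄_R(t₀) = R⁻⁴ ∫∫ φ(t,x) χ((t−t₀)/R, |x|/R) dx dt`. -/
def localAvg (χ : ℝ × ℝ → ℝ) (R : ℝ) (φ : ℝ × E3 → ℂ) (t₀ : ℝ) : ℂ :=
  ((R ^ 4)⁻¹ : ℝ) • ∫ t : ℝ, ∫ x : E3, ((χ ((t - t₀) / R, ‖x‖ / R) : ℝ) : ℂ) * φ (t, x)

/-! ### Weights and weighted averages -/

/-- The space-time average `A_η u (t₀) = ∫∫ η((t - t₀)/R, |x|/R) u(t, x)`, without the normalising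
factor `R⁻⁴` and as a single integral over `ℝ × ℝ³`. -/
def wavg (η : ℝ × ℝ → ℝ) (R : ℝ) (u : ℝ × E3 → ℂ) (t₀ : ℝ) : ℂ :=
  ∫ p : ℝ × E3, η ((p.1 - t₀) / R, ‖p.2‖ / R) • u p

/-- The time derivative `∂₁ η` of a weight. -/
def dt (η : ℝ × ℝ → ℝ) (p : ℝ × ℝ) : ℝ := fderiv ℝ η p (1, 0)

/-- Admissible weights: smooth and supported in `[-1, 1] × [1, 2]`. This class is stable under
`∂₁`. -/
structure Weight (η : ℝ × ℝ → ℝ) : Prop where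
  smooth : ContDiff ℝ (⊤ : ℕ∞) η
  supp : Function.support η ⊆ Set.Icc (-1 : ℝ) 1 ×ˢ Set.Icc (1 : ℝ) 2

lemma Weight.dt {η : ℝ × ℝ → ℝ} (h : Weight η) : Weight (dt η) := by
  refine ⟨(h.smooth.fderiv_right (m := (⊤ : ℕ∞)) (by simp)).clm_apply contDiff_const, ?_⟩
  have hc : tsupport η ⊆ Set.Icc (-1 : ℝ) 1 ×ˢ Set.Icc (1 : ℝ) 2 :=
    closure_minimal h.supp (isClosed_Icc.prod isClosed_Icc)
  refine fun p hp => hc (support_fderiv_subset ℝ ?_)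
  intro h0
  exact hp (by simp [_root_.dt, h0])

lemma Weight.iterate_dt {η : ℝ × ℝ → ℝ} (h : Weight η) (n : ℕ) : Weight (_root_.dt^[n] η) := by
  induction n generalizing η with
  | zero => exact h
  | succ n ih => exact ih h.dt

lemma Weight.bounded {η : ℝ × ℝ → ℝ} (h : Weight η) : ∃ M : ℝ, 0 < M ∧ ∀ p, ‖η p‖ ≤ M := by
  have hcs : HasCompactSupport η :=
    HasCompactSupport.of_support_subset_isCompact (isCompact_Icc.prod isCompact_Icc) h.supp
  obtain ⟨C, hC⟩ := hcs.exists_bound_of_continuous h.smooth.continuous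
  exact ⟨max C 1, by positivity, fun p => (hC p).trans (le_max_left _ _)⟩

/-- Continuous kernels against a test function give integrable integrands. -/
lemma integrable_ker {k : ℝ × E3 → ℝ} {u : ℝ × E3 → ℂ} (hk : Continuous k) (hu : Continuous u)
    (hcu : HasCompactSupport u) : Integrable (fun p => k p • u p) :=
  (hk.smul hu).integrable_of_hasCompactSupport hcu.smul_left

lemma integrable_norm_sq {u : ℝ × E3 → ℂ} (hu : Continuous u) (hcu : HasCompactSupport u) :
    Integrable (fun p => ‖u p‖ ^ 2) := by
  simp only [sq]
  exact (hu.norm.mul hu.norm).integrable_of_hasCompactSupport hcu.norm.mul_left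

lemma Weight.continuous_ker {η : ℝ × ℝ → ℝ} (h : Weight η) (R t₀ : ℝ) :
    Continuous fun p : ℝ × E3 => η ((p.1 - t₀) / R, ‖p.2‖ / R) :=
  h.smooth.continuous.comp (by fun_prop)

lemma localAvg_eq {χ : ℝ × ℝ → ℝ} (hχ : Weight χ) (R : ℝ) {φ : ℝ × E3 → ℂ}
    (hφ : Continuous φ) (hc : HasCompactSupport φ) (t₀ : ℝ) :
    localAvg χ R φ t₀ = ((R ^ 4)⁻¹ : ℝ) • wavg χ R φ t₀ := by
  have hi := integrable_ker (hχ.continuous_ker R t₀) hφ hc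
  rw [Measure.volume_eq_prod] at hi
  unfold localAvg wavg
  rw [Measure.volume_eq_prod, integral_prod _ hi]
  simp only [Complex.real_smul]

/-! ### Time derivatives of weighted averages -/

/-- Differentiation under the integral sign: the derivative falls on the weight. -/
lemma hasDerivAt_wavg {η : ℝ × ℝ → ℝ} (h : Weight η) (R : ℝ) {u : ℝ × E3 → ℂ}
    (hu : Continuous u) (hc : HasCompactSupport u) (t₀ : ℝ) :
    HasDerivAt (wavg η R u) ((-R⁻¹) • wavg (dt η) R u t₀) t₀ := by
  obtain ⟨M, hM, hb⟩ := h.dt.bounded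
  have key := (hasDerivAt_integral_of_dominated_loc_of_deriv_le (μ := (volume : Measure (ℝ × E3)))
    (F := fun s p => η ((p.1 - s) / R, ‖p.2‖ / R) • u p)
    (F' := fun s p => (-R⁻¹ * dt η ((p.1 - s) / R, ‖p.2‖ / R)) • u p)
    (bound := fun p => (‖R⁻¹‖ * M) * ‖u p‖) (x₀ := t₀) (s := Set.univ)
    Filter.univ_mem
    (Filter.Eventually.of_forall fun s =>
      (integrable_ker (h.continuous_ker R s) hu hc).aestronglyMeasurable)
    (integrable_ker (h.continuous_ker R t₀) hu hc)
    (integrable_ker (continuous_const.mul (h.dt.continuous_ker R t₀)) hu hc).aestronglyMeasurable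
    (Filter.Eventually.of_forall fun p s _ => ?_)
    ((hu.integrable_of_hasCompactSupport hc).norm.const_mul _)
    (Filter.Eventually.of_forall fun p s _ => ?_)).2
  · refine HasDerivAt.congr_deriv (f := wavg η R u) key ?_
    unfold wavg
    rw [← integral_smul]
    simp only [smul_smul]
  · rw [norm_smul, norm_mul, norm_neg]
    gcongr
    exact hb _
  · have h1 : HasDerivAt (fun s : ℝ => ((p.1 - s) / R, ‖p.2‖ / R)) ((-R⁻¹, 0) : ℝ × ℝ) s := by
      refine HasDerivAt.prodMk ?_ (hasDerivAt_const _ _)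
      have := ((hasDerivAt_id s).const_sub p.1).div_const R
      simpa [neg_div] using this
    have h2 := ((h.smooth.differentiable (by simp)
      ((p.1 - s) / R, ‖p.2‖ / R)).hasFDerivAt.comp_hasDerivAt s h1).smul_const (u p)
    refine h2.congr_deriv ?_
    have : ((-R⁻¹, 0) : ℝ × ℝ) = (-R⁻¹) • ((1, 0) : ℝ × ℝ) := by simp
    rw [this, map_smul]
    simp [dt]

lemma iterate_deriv_wavg {η : ℝ × ℝ → ℝ} (h : Weight η) (R c : ℝ) {u : ℝ × E3 → ℂ}
    (hu : Continuous u) (hc : HasCompactSupport u) (j : ℕ) :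
    deriv^[j] (fun t => c • wavg η R u t) = fun t => (c * (-R⁻¹) ^ j) • wavg (dt^[j] η) R u t := by
  induction j generalizing η c with
  | zero => simp
  | succ j ih =>
    have : deriv (fun t => c • wavg η R u t) = fun t => (c * -R⁻¹) • wavg (dt η) R u t := by
      funext t
      have h1 := ((hasDerivAt_wavg h R hu hc t).const_smul c).deriv
      rw [smul_smul] at h1
      exact h1
    rw [Function.iterate_succ_apply, this, ih h.dt, Function.iterate_succ_apply]
    simp only [pow_succ', mul_assoc]

/-- Integration by parts in time moves one derivative from the weight onto `φ`. -/
lemma wavg_dt {η : ℝ × ℝ → ℝ} (h : Weight η) {R : ℝ} (hR : 0 < R) {φ : ℝ × E3 → ℂ}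
    (hφ : ContDiff ℝ (⊤ : ℕ∞) φ) (hc : HasCompactSupport φ) (t₀ : ℝ) :
    wavg (dt η) R φ t₀ = (-R) • wavg η R (fun p => fderiv ℝ φ p (1, 0)) t₀ := by
  have hu : Continuous fun p => fderiv ℝ φ p (1, 0) :=
    (hφ.continuous_fderiv (by simp)).clm_apply continuous_const
  have hcu : HasCompactSupport fun p => fderiv ℝ φ p (1, 0) := hc.fderiv_apply ℝ _
  have : (volume : Measure (ℝ × E3)).IsAddHaarMeasure := by
    rw [Measure.volume_eq_prod]
    infer_instance
  -- Line derivatives in the direction `(1, 0)` avoid the non-smoothness of `‖x‖` at the origin.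
  have key := integral_bilinear_hasLineDerivAt_right_eq_neg_left_of_integrable
    (μ := (volume : Measure (ℝ × E3)))
    (B := (ContinuousLinearMap.lsmul ℝ ℝ : ℝ →L[ℝ] ℂ →L[ℝ] ℂ))
    (f := fun p => η ((p.1 - t₀) / R, ‖p.2‖ / R))
    (f' := fun p => R⁻¹ * dt η ((p.1 - t₀) / R, ‖p.2‖ / R))
    (g := φ) (g' := fun p => fderiv ℝ φ p (1, 0)) (v := (1, 0))
    (integrable_ker (continuous_const.mul (h.dt.continuous_ker R t₀)) hφ.continuous hc)
    (integrable_ker (h.continuous_ker R t₀) hu hcu)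
    (integrable_ker (h.continuous_ker R t₀) hφ.continuous hc)
    (fun p _ => ?_)
    (fun p _ => ((hφ.differentiable (by simp) p).hasFDerivAt).hasLineDerivAt _)
  · simp only [ContinuousLinearMap.lsmul_apply] at key
    unfold wavg
    rw [key]
    simp only [mul_smul]
    rw [integral_smul, smul_neg, neg_smul, neg_neg, smul_smul, mul_inv_cancel₀ hR.ne', one_smul]
  · have h1 : HasDerivAt (fun s : ℝ => ((p.1 + s - t₀) / R, ‖p.2‖ / R)) ((R⁻¹, 0) : ℝ × ℝ) 0 := by
      refine HasDerivAt.prodMk ?_ (hasDerivAt_const _ _)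
      have := (((hasDerivAt_id (0 : ℝ)).const_add p.1).sub_const t₀).div_const R
      simpa using this
    have h2 := (h.smooth.differentiable (by simp)
      ((p.1 + 0 - t₀) / R, ‖p.2‖ / R)).hasFDerivAt.comp_hasDerivAt (0 : ℝ) h1
    unfold HasLineDerivAt
    convert h2 using 1
    · funext s
      simp
    · have : ((R⁻¹, 0) : ℝ × ℝ) = R⁻¹ • ((1, 0) : ℝ × ℝ) := by simp
      rw [this, map_smul]
      simp [dt]

/-! ### The `L²` bound for weighted averages -/

lemma measurableSet_annulus (R : ℝ) : MeasurableSet (annulus R) :=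
  (measurableSet_le measurable_const measurable_norm).inter
    (measurableSet_le measurable_norm measurable_const)

lemma volume_annulus_le {R : ℝ} (hR : 0 < R) :
    volume (annulus R) ≤ ENNReal.ofReal ((2 * R) ^ 3) * volume (Metric.ball (0 : E3) 1) := by
  have h := Measure.addHaar_closedBall (volume : Measure E3) 0 (r := 2 * R) (by positivity)
  rw [finrank_euclideanSpace_fin] at h
  rw [← h]
  exact measure_mono fun x hx => by simpa using hx.2

/-- Schwarz: on the support of the kernel, `|A_η u(t₀)|²` is at most `M²` times the measure of the
support times the local `L²` mass of `u`. -/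
lemma enorm_wavg_sq_le {η : ℝ × ℝ → ℝ} (h : Weight η) {M : ℝ} (hM : ∀ p, ‖η p‖ ≤ M)
    {R : ℝ} (hR : 0 < R) {u : ℝ × E3 → ℂ} (hu : Continuous u) (t₀ : ℝ) :
    ‖wavg η R u t₀‖ₑ ^ 2 ≤ ENNReal.ofReal M ^ 2 *
      ((ENNReal.ofReal (2 * R) * volume (annulus R)) *
        ∫⁻ p in Set.Icc (t₀ - R) (t₀ + R) ×ˢ annulus R, ‖u p‖ₑ ^ 2) := by
  set S : Set (ℝ × E3) := Set.Icc (t₀ - R) (t₀ + R) ×ˢ annulus R with hS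
  have hSm : MeasurableSet S := measurableSet_Icc.prod (measurableSet_annulus R)
  have hvol : volume S = ENNReal.ofReal (2 * R) * volume (annulus R) := by
    rw [hS, Measure.volume_eq_prod, Measure.prod_prod, Real.volume_Icc]
    congr 2
    ring
  have h1 : ‖wavg η R u t₀‖ₑ ≤ ENNReal.ofReal M * ∫⁻ p in S, ‖u p‖ₑ := by
    rw [← lintegral_const_mul' _ _ ENNReal.ofReal_ne_top, ← lintegral_indicator hSm]
    refine (enorm_integral_le_lintegral_enorm _).trans (lintegral_mono fun p => ?_)
    by_cases hp : p ∈ S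
    · rw [Set.indicator_of_mem hp, enorm_smul]
      gcongr
      rw [← ofReal_norm]
      exact ENNReal.ofReal_le_ofReal (hM _)
    · have : η ((p.1 - t₀) / R, ‖p.2‖ / R) = 0 := by
        by_contra hne
        obtain ⟨⟨a, b⟩, c, d⟩ := h.supp hne
        simp only [le_div_iff₀ hR, div_le_iff₀ hR] at a b c d
        exact hp ⟨⟨by linarith, by linarith⟩, by linarith, d⟩
      simp [this]
  have h2 : (∫⁻ p in S, ‖u p‖ₑ) ^ 2 ≤ volume S * ∫⁻ p in S, ‖u p‖ₑ ^ 2 := by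
    have := ENNReal.lintegral_mul_le_Lp_mul_Lq (volume.restrict S) Real.HolderConjugate.two_two
      (f := fun _ => 1) (g := fun p => ‖u p‖ₑ) aemeasurable_const hu.enorm.measurable.aemeasurable
    simp only [Pi.mul_apply, lintegral_const,
      Measure.restrict_apply_univ, ENNReal.rpow_ofNat, one_pow, one_mul] at this
    calc _ ≤ (volume S ^ (1 / 2 : ℝ) * (∫⁻ p in S, ‖u p‖ₑ ^ 2) ^ (1 / 2 : ℝ)) ^ 2 := by
          gcongr
      _ = _ := by
          rw [← ENNReal.mul_rpow_of_nonneg _ _ (by norm_num), ← ENNReal.rpow_natCast,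
            ← ENNReal.rpow_mul]
          norm_num
  calc _ ≤ (ENNReal.ofReal M * ∫⁻ p in S, ‖u p‖ₑ) ^ 2 := by gcongr
    _ ≤ _ := by
      rw [mul_pow, ← hvol]
      gcongr

/-- The Young-type bound: integrating over `t₀` with Tonelli, each time `t` is seen by the window
`[t₀ - R, t₀ + R]` for a set of `t₀` of measure `2R`. -/
lemma lintegral_wavg_sq_le {η : ℝ × ℝ → ℝ} (h : Weight η) {M : ℝ} (hM : ∀ p, ‖η p‖ ≤ M)
    {R : ℝ} (hR : 0 < R) {u : ℝ × E3 → ℂ} (hu : Continuous u) :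
    ∫⁻ t₀, ‖wavg η R u t₀‖ₑ ^ 2 ≤ ENNReal.ofReal M ^ 2 *
      ((ENNReal.ofReal (2 * R) * volume (annulus R)) *
        (ENNReal.ofReal (2 * R) * ∫⁻ p in Set.univ ×ˢ annulus R, ‖u p‖ₑ ^ 2)) := by
  refine (lintegral_mono fun t₀ => enorm_wavg_sq_le h hM hR hu t₀).trans ?_
  have hfin : volume (annulus R) ≠ ⊤ := ((volume_annulus_le hR).trans_lt
    (ENNReal.mul_lt_top ENNReal.ofReal_lt_top measure_ball_lt_top)).ne
  rw [lintegral_const_mul' _ _ (by simp),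
    lintegral_const_mul' _ _ (ENNReal.mul_ne_top ENNReal.ofReal_ne_top hfin)]
  gcongr
  have hAm : MeasurableSet ((Set.univ : Set ℝ) ×ˢ annulus R) :=
    MeasurableSet.univ.prod (measurableSet_annulus R)
  have hW : MeasurableSet {q : ℝ × (ℝ × E3) | q.2.1 ∈ Set.Icc (q.1 - R) (q.1 + R)} :=
    ((isClosed_le (f := fun q : ℝ × (ℝ × E3) => q.1 - R) (g := fun q => q.2.1)
      (by fun_prop) (by fun_prop)).inter
      (isClosed_le (f := fun q : ℝ × (ℝ × E3) => q.2.1) (g := fun q => q.1 + R)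
        (by fun_prop) (by fun_prop))).measurableSet
  have hum : Measurable fun p => ‖u p‖ₑ ^ 2 := hu.enorm.measurable.pow_const 2
  set g : ℝ × E3 → ENNReal := (Set.univ ×ˢ annulus R).indicator fun p => ‖u p‖ₑ ^ 2 with hg
  have hgm : Measurable g := hum.indicator hAm
  set K : ℝ × (ℝ × E3) → ENNReal :=
    {q : ℝ × (ℝ × E3) | q.2.1 ∈ Set.Icc (q.1 - R) (q.1 + R)}.indicator fun q => g q.2 with hK
  have hKm : Measurable K := (hgm.comp measurable_snd).indicator hW
  have e1 : ∀ t₀, ∫⁻ p in Set.Icc (t₀ - R) (t₀ + R) ×ˢ annulus R, ‖u p‖ₑ ^ 2 =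
      ∫⁻ p, K (t₀, p) := by
    intro t₀
    rw [← lintegral_indicator (measurableSet_Icc.prod (measurableSet_annulus R))]
    congr 1
    funext p
    by_cases h1 : p.1 ∈ Set.Icc (t₀ - R) (t₀ + R) <;> by_cases h2 : p.2 ∈ annulus R <;>
      simp only [hK, hg, Set.indicator, Set.mem_prod, Set.mem_univ, true_and, Set.mem_ofPred_eq,
        h1, h2, and_true, and_false, if_true, if_false]
  have e2 : ∀ p, ∫⁻ t₀, K (t₀, p) = ENNReal.ofReal (2 * R) * g p := by
    intro p
    have : ∀ t₀, K (t₀, p) = (Set.Icc (p.1 - R) (p.1 + R)).indicator (fun _ => g p) t₀ := by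
      intro t₀
      simp only [hK, Set.indicator, Set.mem_ofPred_eq, Set.mem_Icc]
      congr 1
      apply propext
      constructor <;> rintro ⟨a, b⟩ <;> constructor <;> linarith
    simp only [this]
    rw [lintegral_indicator_const measurableSet_Icc, Real.volume_Icc, mul_comm]
    congr 2
    ring
  simp only [e1]
  rw [lintegral_lintegral_swap (f := fun t₀ p => K (t₀, p)) hKm.aemeasurable]
  simp only [e2]
  rw [lintegral_const_mul' _ _ ENNReal.ofReal_ne_top, hg, lintegral_indicator hAm]

/-- Real-valued form of the `L²` bound, with all powers of `R` collected. -/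
lemma integral_wavg_sq_le {η : ℝ × ℝ → ℝ} (h : Weight η) {M : ℝ} (hM0 : 0 < M)
    (hM : ∀ p, ‖η p‖ ≤ M) {R : ℝ} (hR : 0 < R) {u : ℝ × E3 → ℂ} (hu : Continuous u)
    (hc : HasCompactSupport u) :
    ∫ t₀, ‖wavg η R u t₀‖ ^ 2 ≤
      32 * M ^ 2 * volume.real (Metric.ball (0 : E3) 1) * R ^ 5 *
        ∫ p in Set.univ ×ˢ annulus R, ‖u p‖ ^ 2 := by
  have hcont : Continuous (wavg η R u) :=
    continuous_iff_continuousAt.2 fun t => (hasDerivAt_wavg h R hu hc t).continuousAt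
  have hsq : ∀ z : ℂ, ENNReal.ofReal (‖z‖ ^ 2) = ‖z‖ₑ ^ 2 := fun z => by
    rw [ENNReal.ofReal_pow (norm_nonneg _), ofReal_norm]
  have hint : Integrable (fun p => ‖u p‖ ^ 2) (volume.restrict (Set.univ ×ˢ annulus R)) :=
    (integrable_norm_sq hu hc).restrict
  have hI0 : 0 ≤ ∫ p in Set.univ ×ˢ annulus R, ‖u p‖ ^ 2 :=
    integral_nonneg fun p => by positivity
  rw [integral_eq_lintegral_of_nonneg_ae (f := fun t => ‖wavg η R u t‖ ^ 2)
    (Filter.Eventually.of_forall fun t => by positivity)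
    (hcont.norm.pow 2).aestronglyMeasurable]
  refine ENNReal.toReal_le_of_le_ofReal (by positivity) ?_
  simp only [hsq]
  refine (lintegral_wavg_sq_le h hM hR hu).trans ?_
  have hI : ∫⁻ p in Set.univ ×ˢ annulus R, ‖u p‖ₑ ^ 2 =
      ENNReal.ofReal (∫ p in Set.univ ×ˢ annulus R, ‖u p‖ ^ 2) := by
    rw [ofReal_integral_eq_lintegral_ofReal hint
      (Filter.Eventually.of_forall fun t => by positivity)]
    simp only [hsq]
  have hB : volume (Metric.ball (0 : E3) 1) =
      ENNReal.ofReal (volume.real (Metric.ball (0 : E3) 1)) :=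
    (ENNReal.ofReal_toReal measure_ball_lt_top.ne).symm
  have hA := volume_annulus_le hR
  rw [hB, ← ENNReal.ofReal_mul (by positivity)] at hA
  rw [hI]
  calc _ ≤ ENNReal.ofReal M ^ 2 * ((ENNReal.ofReal (2 * R) *
        ENNReal.ofReal ((2 * R) ^ 3 * volume.real (Metric.ball (0 : E3) 1))) *
        (ENNReal.ofReal (2 * R) *
          ENNReal.ofReal (∫ p in Set.univ ×ˢ annulus R, ‖u p‖ ^ 2))) := by
        gcongr
    _ = _ := by
        rw [← ENNReal.ofReal_pow hM0.le, ← ENNReal.ofReal_mul (by positivity),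
          ← ENNReal.ofReal_mul (by positivity), ← ENNReal.ofReal_mul (by positivity),
          ← ENNReal.ofReal_mul (by positivity)]
        congr 1
        ring

/-- The time-derivative part of the energy on `ℝ × annulus R` is at most the full energy. -/
lemma integral_dt_sq_le_energy (R : ℝ) {φ : ℝ × E3 → ℂ} (hφ : ContDiff ℝ (⊤ : ℕ∞) φ)
    (hc : HasCompactSupport φ) :
    ∫ p in Set.univ ×ˢ annulus R, ‖fderiv ℝ φ p ((1 : ℝ), (0 : E3))‖ ^ 2 ≤
      ∫ t : ℝ, ∫ x in annulus R,
        (‖fderiv ℝ φ (t, x) ((1 : ℝ), (0 : E3))‖ ^ 2 +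
          ∑ k, ‖fderiv ℝ φ (t, x) ((0 : ℝ), EuclideanSpace.single k 1)‖ ^ 2) := by
  have hi : ∀ v : ℝ × E3, Integrable (fun p => ‖fderiv ℝ φ p v‖ ^ 2)
      ((volume : Measure (ℝ × E3)).restrict (Set.univ ×ˢ annulus R)) := fun v =>
    (integrable_norm_sq ((hφ.continuous_fderiv (by simp)).clm_apply continuous_const)
      (hc.fderiv_apply ℝ v)).restrict
  have hs := (hi ((1 : ℝ), (0 : E3))).add
    (integrable_finsetSum Finset.univ fun k (_ : k ∈ Finset.univ) =>
      hi ((0 : ℝ), EuclideanSpace.single (k : Fin 3) 1))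
  have hm : (volume : Measure (ℝ × E3)).restrict (Set.univ ×ˢ annulus R) =
      (volume : Measure ℝ).prod ((volume : Measure E3).restrict (annulus R)) := by
    rw [Measure.volume_eq_prod, ← Measure.prod_restrict, Measure.restrict_univ]
  have hfub := hs
  rw [hm] at hfub
  have := integral_prod _ hfub
  simp only [Pi.add_apply] at this
  rw [← this, ← hm]
  refine integral_mono (hi _) hs fun p => ?_
  exact le_add_of_nonneg_right (Finset.sum_nonneg fun k _ => by positivity)

/-! ### Conclusion -/

/-- **Derivative bounds for local space-time averages:**
for `j ≥ 1`, `‖∂_{t₀}^j φ̄_R‖_{L²(ℝ)} ≤ C_j R^{−j−1/2} ‖∂φ‖_{L²(ℝ×{R≤|x|≤2R})}`. -/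
theorem local_average_derivative_bound
    (χ : ℝ × ℝ → ℝ) (hχ : ContDiff ℝ (⊤ : ℕ∞) χ) (hχnn : ∀ p, 0 ≤ χ p)
    (hχsupp : Function.support χ ⊆ Set.Icc (-1 : ℝ) 1 ×ˢ Set.Icc (1 : ℝ) 2)
    (hχint : (∫ t : ℝ, ∫ x : E3, χ (t, ‖x‖)) = 1) :
    ∀ j : ℕ, 1 ≤ j →
      ∃ Cj : ℝ, 0 < Cj ∧
        ∀ (R : ℝ), 0 < R →
        ∀ (φ : ℝ × E3 → ℂ), ContDiff ℝ (⊤ : ℕ∞) φ → HasCompactSupport φ →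
          Real.sqrt (∫ t : ℝ, ‖(deriv^[j] (localAvg χ R φ)) t‖ ^ 2) ≤
            Cj * R ^ (-(j : ℝ) - 1 / 2) *
              Real.sqrt (∫ t : ℝ, ∫ x in annulus R,
                (‖fderiv ℝ φ (t, x) ((1 : ℝ), (0 : E3))‖ ^ 2 +
                  ∑ k, ‖fderiv ℝ φ (t, x) ((0 : ℝ), EuclideanSpace.single k 1)‖ ^ 2)) := by
  intro j hj
  obtain ⟨n, rfl⟩ : ∃ n, j = n + 1 := ⟨j - 1, by omega⟩
  have hw : Weight χ := ⟨hχ, hχsupp⟩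
  have hwn := hw.iterate_dt n
  obtain ⟨M, hM0, hM⟩ := hwn.bounded
  set B := volume.real (Metric.ball (0 : E3) 1) with hB
  have hB0 : 0 < B := ENNReal.toReal_pos (Metric.measure_ball_pos _ _ one_pos).ne'
    measure_ball_lt_top.ne
  refine ⟨Real.sqrt (32 * M ^ 2 * B), by positivity, fun R hR φ hφ hc => ?_⟩
  set u : ℝ × E3 → ℂ := fun p => fderiv ℝ φ p (1, 0) with hu
  have hucont : Continuous u := (hφ.continuous_fderiv (by simp)).clm_apply continuous_const
  have hcu : HasCompactSupport u := hc.fderiv_apply ℝ _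
  set E := ∫ t : ℝ, ∫ x in annulus R,
    (‖fderiv ℝ φ (t, x) ((1 : ℝ), (0 : E3))‖ ^ 2 +
      ∑ k, ‖fderiv ℝ φ (t, x) ((0 : ℝ), EuclideanSpace.single k 1)‖ ^ 2) with hE
  have hder : deriv^[n + 1] (localAvg χ R φ) = fun t =>
      ((R ^ 4)⁻¹ * (-R⁻¹) ^ (n + 1) * (-R)) • wavg (dt^[n] χ) R u t := by
    have h0 : localAvg χ R φ = fun t => ((R ^ 4)⁻¹ : ℝ) • wavg χ R φ t :=
      funext fun t => localAvg_eq hw R hφ.continuous hc t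
    rw [h0, iterate_deriv_wavg hw R _ hφ.continuous hc]
    funext t
    rw [Function.iterate_succ_apply', wavg_dt hwn hR hφ hc, smul_smul]
  have hnorm : ∀ t, ‖(deriv^[n + 1] (localAvg χ R φ)) t‖ ^ 2 =
      ((R ^ (n + 4))⁻¹) ^ 2 * ‖wavg (dt^[n] χ) R u t‖ ^ 2 := by
    intro t
    rw [hder, norm_smul, mul_pow, norm_mul, norm_mul, norm_pow, norm_neg, norm_neg, norm_inv,
      norm_inv, norm_pow, Real.norm_of_nonneg hR.le]
    congr 2
    rw [inv_pow]
    field_simp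
    ring
  have hRp : (R ^ (-((n + 1 : ℕ) : ℝ) - 1 / 2)) ^ 2 = ((R ^ (n + 4))⁻¹) ^ 2 * R ^ 5 := by
    have h5 : ((R ^ (n + 4))⁻¹) ^ 2 * R ^ 5 = (R ^ (2 * n + 3))⁻¹ := by
      field_simp
      ring
    rw [h5, ← Real.rpow_natCast, ← Real.rpow_mul hR.le, ← Real.rpow_natCast, ← Real.rpow_neg hR.le]
    congr 1
    push_cast
    ring
  have hmain : ∫ t, ‖(deriv^[n + 1] (localAvg χ R φ)) t‖ ^ 2 ≤
      32 * M ^ 2 * B * (R ^ (-((n + 1 : ℕ) : ℝ) - 1 / 2)) ^ 2 * E := by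
    simp only [hnorm]
    rw [integral_const_mul, hRp]
    calc _ ≤ ((R ^ (n + 4))⁻¹) ^ 2 * (32 * M ^ 2 * B * R ^ 5 * E) := by
          gcongr
          refine (integral_wavg_sq_le hwn hM0 hM hR hucont hcu).trans ?_
          gcongr
          exact integral_dt_sq_le_energy R hφ hc
      _ = _ := by ring
  refine (Real.sqrt_le_sqrt hmain).trans_eq ?_
  rw [Real.sqrt_mul (by positivity), Real.sqrt_mul (by positivity),
    Real.sqrt_sq (by positivity)]
end
end
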